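/- Let c ≥ 1 be an integer. If there exist four pairwise distinct triples (n_i, x_i, y_i) ∈ ℤ_{≥0}^3 (i = 1, 2, 3, 4), each with n_i ≠ 1, such that T_{n_i} − 2^{x_i}·3^{y_i} = c for every i, then c = 1. Moreover, c = 1 does admit four such representations: 1 = T_3 − 2^0·3^0 = T_4 − 2^0·3^1 = T_5 − 2^1·3^1 = T_6 − 2^2·3^1. -/

import Mathlib

/-- The Tribonacci sequence: `T 0 = 0`, `T 1 = T 2 = 1`,
`T (n+3) = T (n+2) + T (n+1) + T n`. -/
def T : ℕ → ℤ
  | 0 => 0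
  | 1 => 1
  | 2 => 1
  | n + 3 => T (n + 2) + T (n + 1) + T n

/-!
Write the four representations as `T (n i) = c + 2 ^ x i * 3 ^ y i` with `n 0 < n 1 < n 2 < n 3`
(`Trib.Sys`); the representations have distinct indices, because the index determines
`2 ^ x * 3 ^ y`, hence `x` and `y`. Let `α` be the real root of `X ^ 3 - X ^ 2 - X - 1`. Then
`θ * T n = α ^ n + O(1)` for an explicit `θ ∈ ℤ[α]`. The proof bounds `n 3` in four steps.

*An absolute bound* (`Trib.initial`). Subtracting two representations gives
`T (n j) - T (n i) = 2 ^ x j * 3 ^ y j - 2 ^ x i * 3 ^ y i`, and eliminating `c` gives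
`θ * 2 ^ x 3 * 3 ^ y 3 = α ^ n 3 * (1 + O(α ^ (n 0 - n 3)))`. A lower bound for linear forms in
logarithms (`Trib.smooth_log_lower`) shows that the gap `n 3 - n 0` is much smaller than `n 3`.
With `K` a suitable multiple of the gap, the following then apply to the exponents:
no three of the representations have all exponents of 2 (or all exponents of 3) at least `K`
(`Trib.triple`), since two differences of Tribonacci numbers with a common first index are not both
divisible by a high power of `p = 2, 3` (`Trib.padic_separation`); and no two of the last
three representations have both exponents of 2 (or both of 3) at most `K`
(`Trib.small_exponents_contra`), since then the difference of the two three-smooth numbers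
is a three-smooth number times a small integer, against the linear form bound. These two facts
contradict each other as soon as `n 3` is large (`Trib.no_small_gap`).

Both the linear form bound and the `p`-adic separation are instances of Laurent's method of
interpolation determinants: a nonvanishing determinant with entries `z ^ a * w ^ j` in a ring with
a Liouville inequality is at the same time extremely small at one place
(`real_interpolation`, `padic_interpolation`). The multiplicative relation with three
numbers 2, 3, `α` is first reduced to one with two numbers by simultaneous Dirichlet approximation
of the exponents; this costs a factor in the final exponent, which is harmless here.

*Reduction* (`Trib.bounds`). Rational approximations to the logarithms of 2, 3, `α`, `θ` bound the
gap by the Baker–Davenport method, and the bound on the gap feeds back into the first step.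

*Valuations* (`Trib.val_2`, `Trib.val_3`). For every possible gap `d`, the sequence
`T (m + d) - T m` satisfies the Tribonacci recurrence, and its zeros in the `p`-adic integers are
followed digit by digit; none is approximated well by a small positive `m`. Hence the difference of
two of the four Tribonacci numbers is not divisible by `2 ^ 234` or `3 ^ 146`. So among the last
three representations, at most one has a large exponent of 2 and at most one a large exponent of
3; the third is small, which bounds the indices by 1100. Repeating the reduction and the search with
the new bound leaves `n 0 < 44` and a gap at most 37 (`Trib.small`).

*Search* (`Trib.eq_one`). The remaining cases are checked by evaluation.
-/

/-! ### The Tribonacci constant, its ring of integers and the size of `T n` -/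

section
open Polynomial

namespace Trib

theorem exists_root : ∃ x : ℝ, (1.839286 ≤ x ∧ x ≤ 1.839287) ∧ x ^ 3 = x ^ 2 + x + 1 := by
  have hc : ContinuousOn (fun x : ℝ => x ^ 3 - x ^ 2 - x - 1) (Set.Icc 1.839286 1.839287) := by
    fun_prop
  have := intermediate_value_Icc (by norm_num) hc
  have h0 : (0 : ℝ) ∈ Set.Icc (((1.839286 : ℝ)) ^ 3 - 1.839286 ^ 2 - 1.839286 - 1)
      (1.839287 ^ 3 - 1.839287 ^ 2 - 1.839287 - 1) := by
    constructor <;> norm_num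
  obtain ⟨x, hx, hx2⟩ := this h0
  exact ⟨x, hx, by simp only at hx2; linarith⟩

/-- The Tribonacci constant, the real root of `X ^ 3 - X ^ 2 - X - 1`. -/
noncomputable def α : ℝ := exists_root.choose

theorem α_bounds : 1.839286 ≤ α ∧ α ≤ 1.839287 := exists_root.choose_spec.1
theorem α_cube : α ^ 3 = α ^ 2 + α + 1 := exists_root.choose_spec.2
theorem α_pos : 0 < α := by linarith [α_bounds.1]

theorem α_mul_inv : α * (α ^ 2 - α - 1) = 1 := by linear_combination α_cube
theorem α_inv : 1 / α = α ^ 2 - α - 1 := by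
  rw [div_eq_iff α_pos.ne']; linear_combination - α_mul_inv

/-- The imaginary part of the complex root `β`. -/
noncomputable def βim : ℝ := √((α ^ 2 - α - 1) - ((1 - α) / 2) ^ 2)

theorem βim_arg_pos : 0 < (α ^ 2 - α - 1) - ((1 - α) / 2) ^ 2 := by
  have := α_bounds.1
  nlinarith [α_bounds.2]

theorem βim_sq : βim ^ 2 = (α ^ 2 - α - 1) - ((1 - α) / 2) ^ 2 :=
  Real.sq_sqrt βim_arg_pos.le

theorem βim_pos : 0 < βim := Real.sqrt_pos.2 βim_arg_pos

/-- The root of `X ^ 3 - X ^ 2 - X - 1` in the upper half plane. -/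
noncomputable def β : ℂ := ⟨(1 - α) / 2, βim⟩

theorem β_sq : β ^ 2 = (1 - α : ℂ) * β - (α ^ 2 - α - 1 : ℂ) := by
  have h := βim_sq
  rw [sq] at h
  apply Complex.ext
  · simp [β, sq]
    rw [h]; ring
  · simp [β, sq]
    ring

theorem β_cube : β ^ 3 = β ^ 2 + β + 1 := by
  have hα : (α : ℂ) ^ 3 = α ^ 2 + α + 1 := by exact_mod_cast α_cube
  have := β_sq
  linear_combination (β - α) * this + hα + (β ^2 - (1 - α : ℂ) * β + (α ^ 2 - α - 1 : ℂ)) * (α - 1)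

theorem norm_β_sq : ‖β‖ ^ 2 = α ^ 2 - α - 1 := by
  rw [Complex.sq_norm, Complex.normSq_apply]
  have h := βim_sq
  simp only [β]
  linear_combination h

/-- The ring `ℤ[X] / (X ^ 3 - X ^ 2 - X - 1)`. -/
abbrev TR := AdjoinRoot (X ^ 3 - X ^ 2 - X - 1 : ℤ[X])
/-- The class of `X` in `TR`. -/
noncomputable def a : TR := AdjoinRoot.root _

theorem a_cube : a ^ 3 = a ^ 2 + a + 1 := by
  have := AdjoinRoot.eval₂_root (X ^ 3 - X ^ 2 - X - 1 : ℤ[X])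
  simp only [eval₂_sub, eval₂_X_pow, eval₂_X, eval₂_one] at this
  unfold a
  linear_combination this

/-- The real embedding of `TR`, `a ↦ α`. -/
noncomputable def ea : TR →+* ℝ := AdjoinRoot.lift (Int.castRingHom ℝ) α (by
  simp only [eval₂_sub, eval₂_X_pow, eval₂_X, eval₂_one]
  linear_combination α_cube)
/-- The complex embedding of `TR`, `a ↦ β`. -/
noncomputable def eb : TR →+* ℂ := AdjoinRoot.lift (Int.castRingHom ℂ) β (by
  simp only [eval₂_sub, eval₂_X_pow, eval₂_X, eval₂_one]
  linear_combination β_cube)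

@[simp] theorem ea_a : ea a = α := AdjoinRoot.lift_root _
@[simp] theorem eb_a : eb a = β := AdjoinRoot.lift_root _

theorem coords (x : TR) : ∃ u v w : ℤ, x = u + v * a + w * a ^ 2 := by
  induction x using AdjoinRoot.induction_on with
  | ih p =>
    induction p using Polynomial.induction_on with
    | C n => exact ⟨n, 0, 0, by simp⟩
    | add p q hp hq =>
      obtain ⟨u, v, w, h⟩ := hp
      obtain ⟨u', v', w', h'⟩ := hq
      refine ⟨u + u', v + v', w + w', ?_⟩
      rw [map_add, h, h']; push_cast; ring
    | monomial n c h =>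
      obtain ⟨u, v, w, h⟩ := h
      refine ⟨w, u + w, v + w, ?_⟩
      rw [pow_succ X n, ← mul_assoc, map_mul, h, AdjoinRoot.mk_X]
      change _ * a = _
      push_cast
      linear_combination (w : TR) * a_cube

/-- The norm form of `TR`: the norm of `u + v * a + w * a ^ 2`. -/
def nf (u v w : ℤ) : ℤ := u ^ 3 + u ^ 2 * v + 3 * u ^ 2 * w - u * v ^ 2 - 4 * u * v * w - u * w ^ 2
  + v ^ 3 + v ^ 2 * w - v * w ^ 2 + w ^ 3

theorem eb_sq (u v w : ℤ) : ‖eb (u + v * a + w * a ^ 2)‖ ^ 2 =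
    (u + v * ((1 - α) / 2) + w * (((1 - α) / 2) ^ 2 - βim ^ 2)) ^ 2 +
      (v + w * (1 - α)) ^ 2 * βim ^ 2 := by
  simp only [map_add, map_mul, map_pow, eb_a, map_intCast]
  rw [Complex.sq_norm, Complex.normSq_apply]
  simp [β, sq]
  ring

theorem norm_eq (u v w : ℤ) :
    ea (u + v * a + w * a ^ 2) * ‖eb (u + v * a + w * a ^ 2)‖ ^ 2 = nf u v w := by
  rw [eb_sq, βim_sq]
  simp only [map_add, map_mul, map_pow, ea_a, map_intCast, nf]
  push_cast
  have h := α_cube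
  have h4 : α ^ 4 = 2 * α ^ 2 + 2 * α + 1 := by linear_combination (α + 1) * h
  have h5 : α ^ 5 = 4 * α ^ 2 + 3 * α + 2 := by linear_combination (α ^ 2 + α + 2) * h
  have h6 : α ^ 6 = 7 * α ^ 2 + 6 * α + 4 := by linear_combination (α ^ 3 + α ^ 2 + 2 * α + 4) * h
  ring_nf
  simp only [h6, h5, h4, h]
  ring

theorem no_rat_root (r : ℚ) : r ^ 3 ≠ r ^ 2 + r + 1 := by
  intro h
  have hi : IsIntegral ℤ r := by
    refine ⟨X ^ 3 - X ^ 2 - X - 1, ?_, ?_⟩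
    · monicity!
    · simp only [eval₂_sub, eval₂_X_pow, eval₂_X, eval₂_one]
      linear_combination h
  obtain ⟨k, rfl⟩ := IsIntegrallyClosed.isIntegral_iff.1 hi
  simp only [algebraMap_int_eq, eq_intCast] at h
  have h' : k ^ 3 = k ^ 2 + k + 1 := by exact_mod_cast h
  have hk : k * (k ^ 2 - k - 1) = 1 := by linear_combination h'
  have := Int.eq_one_or_neg_one_of_mul_eq_one hk
  rcases this with rfl | rfl <;> norm_num at h'

theorem α_irr (r : ℚ) : (r : ℝ) ≠ α := by
  intro h
  have := α_cube
  rw [← h] at this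
  exact no_rat_root r (by exact_mod_cast this)

theorem lin_irr (v w : ℤ) (h : (v : ℝ) + w * α = 0) : v = 0 ∧ w = 0 := by
  have hw : w = 0 := by
    by_contra hw
    have hw' : (w : ℝ) ≠ 0 := by exact_mod_cast hw
    apply α_irr (-(v : ℚ) / w)
    push_cast
    field_simp
    linarith
  subst hw
  simp at h
  exact ⟨by exact_mod_cast h, rfl⟩

theorem coords_zero (u v w : ℤ) (h : (u : ℝ) + v * α + w * α ^ 2 = 0) : u = 0 ∧ v = 0 ∧ w = 0 := by
  by_cases hw : w = 0
  · subst hw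
    simp only [Int.cast_zero, zero_mul, add_zero] at h
    have := lin_irr u v h
    exact ⟨this.1, this.2, rfl⟩
  · exfalso
    have h1 : ((u * v + u * w - w ^ 2 : ℤ) : ℝ) + (v ^ 2 - u * w + w * v - w ^ 2 : ℤ) * α = 0 := by
      push_cast
      linear_combination (v + w - w * α) * h + w ^ 2 * α_cube
    obtain ⟨h2, h3⟩ := lin_irr _ _ h1
    have hwq : (w : ℚ) ≠ 0 := by exact_mod_cast hw
    apply no_rat_root (1 + v / w)
    have h2' : (u * v + u * w - w ^ 2 : ℚ) = 0 := by exact_mod_cast h2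
    have h3' : (v ^ 2 - u * w + w * v - w ^ 2 : ℚ) = 0 := by exact_mod_cast h3
    field_simp
    linear_combination (v + w) * h3' + w * h2'

theorem ea_inj (x : TR) (h : ea x = 0) : x = 0 := by
  obtain ⟨u, v, w, rfl⟩ := coords x
  simp only [map_add, map_mul, map_pow, ea_a, map_intCast] at h
  obtain ⟨rfl, rfl, rfl⟩ := coords_zero u v w h
  simp

theorem eb_ne (x : TR) (h : ea x ≠ 0) : eb x ≠ 0 := by
  obtain ⟨u, v, w, rfl⟩ := coords x
  intro h0
  have h1 := eb_sq u v w
  rw [h0] at h1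
  simp only [norm_zero] at h1
  have hy := βim_pos
  have h2 : 0 ≤ ((v : ℝ) + w * (1 - α)) ^ 2 * βim ^ 2 := by positivity
  have h3 := sq_nonneg ((u : ℝ) + v * ((1 - α) / 2) + w * (((1 - α) / 2) ^ 2 - βim ^ 2))
  have h4 : ((v : ℝ) + w * (1 - α)) ^ 2 * βim ^ 2 = 0 := by linarith
  have h5 : (v : ℝ) + w * (1 - α) = 0 := by
    rcases mul_eq_zero.1 h4 with h | h
    · exact pow_eq_zero_iff (two_ne_zero) |>.1 h
    · exact absurd h (by positivity)
  obtain ⟨h6, h7⟩ := lin_irr (v + w) (-w) (by push_cast; linarith)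
  have hw : w = 0 := by omega
  have hv : v = 0 := by omega
  subst hw hv
  simp at h1
  have : u = 0 := by
    by_contra hu
    exact absurd h1.symm (by positivity)
  subst this
  simp at h

/-- The Liouville inequality: the norm of a nonzero element of `TR` is a nonzero integer. -/
theorem liouville (x : TR) (h : ea x ≠ 0) : 1 ≤ |ea x| * ‖eb x‖ ^ 2 := by
  have hb := eb_ne x h
  obtain ⟨u, v, w, rfl⟩ := coords x
  have h1 := norm_eq u v w
  have h2 : nf u v w ≠ 0 := by
    intro h3
    rw [h3] at h1
    simp only [Int.cast_zero, mul_eq_zero, h, false_or] at h1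
    exact hb (by simpa using h1)
  have h3 : |ea (u + v * a + w * a ^ 2)| * ‖eb (u + v * a + w * a ^ 2)‖ ^ 2 = |(nf u v w : ℝ)| := by
    rw [← h1, abs_mul, abs_of_nonneg (sq_nonneg ‖_‖)]
  rw [h3]
  exact_mod_cast Int.one_le_abs h2

theorem norm_β_lt : ‖β‖ < 0.738 := by
  have := norm_β_sq
  have h1 := α_bounds
  have : ‖β‖ ^ 2 < 0.738 ^ 2 := by rw [this]; nlinarith
  exact lt_of_pow_lt_pow_left₀ 2 (by norm_num) this

theorem norm_β_gt : 0.737 < ‖β‖ := by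
  have := norm_β_sq
  have h1 := α_bounds
  have : 0.737 ^ 2 < ‖β‖ ^ 2 := by rw [this]; nlinarith
  exact lt_of_pow_lt_pow_left₀ 2 (by positivity) this

theorem α_pow_ne_nat (t M : ℕ) (ht : 1 ≤ t) : α ^ t ≠ M := by
  intro h
  have h1 : ea (a ^ t - M) = 0 := by simp [h]
  have h2 := ea_inj _ h1
  have h3 : eb (a ^ t - M) = 0 := by rw [h2]; simp
  have h4 : β ^ t = M := by
    have : eb (a ^ t - M) = β ^ t - M := by simp
    rw [this] at h3
    exact sub_eq_zero.1 h3
  have h5 : ‖β‖ ^ t = M := by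
    rw [← norm_pow, h4]; simp
  have h6 : ‖β‖ ^ t < 1 := pow_lt_one₀ (norm_nonneg _) (by linarith [norm_β_lt]) (by omega)
  have h7 : (M : ℝ) < 1 := by linarith
  have : M = 0 := by
    have : M < 1 := by exact_mod_cast h7
    omega
  subst this
  have := pow_pos α_pos t
  simp at h
  linarith [α_pos]

theorem T_rec (n : ℕ) : T (n + 3) = T (n + 2) + T (n + 1) + T n := by simp [T]

theorem T_nonneg_all (n : ℕ) : 0 ≤ T n ∧ 0 ≤ T (n + 1) ∧ 0 ≤ T (n + 2) := by
  induction n with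
  | zero => simp [T]
  | succ n ih =>
    obtain ⟨h1, h2, h3⟩ := ih
    refine ⟨h2, h3, ?_⟩
    rw [show n + 1 + 2 = n + 3 by ring, T_rec]; linarith

theorem T_nonneg (n : ℕ) : 0 ≤ T n := (T_nonneg_all n).1

theorem a_pow (n : ℕ) : a ^ (n + 1) = (T (n + 2) - T (n + 1) - T n : ℤ) + (T (n + 1) - T n : ℤ) * a
    + (T n : ℤ) * a ^ 2 := by
  induction n with
  | zero => simp [T]
  | succ n ih =>
    rw [pow_succ, ih, show n + 1 + 2 = n + 3 by ring, T_rec]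
    push_cast
    linear_combination (T n : TR) * a_cube

theorem α_pow_T (n : ℕ) : α ^ (n + 1) = (T (n + 2) - T (n + 1) - T n) + (T (n + 1) - T n) * α
    + T n * α ^ 2 := by
  have := congrArg ea (a_pow n)
  simpa using this

/-- The inverse of the coefficient of `α ^ n` in Binet's formula for `T n`: `θ * T n` is close to
`α ^ n`. -/
noncomputable def θ : ℝ := -α ^ 2 + 4 * α - 1

theorem θ_bounds : 2.974 ≤ θ ∧ θ ≤ 2.9743 := by
  have := α_bounds
  unfold θ
  constructor <;> nlinarith

/-- The contribution of the two complex roots to `θ * T n`. -/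
noncomputable def er (n : ℕ) : ℝ := θ * T n - α ^ n

theorem er_rec (n : ℕ) : er (n + 2) = (1 - α) * er (n + 1) - (α ^ 2 - α - 1) * er n := by
  induction n with
  | zero =>
    simp [er, T, θ]
    linear_combination -α_cube
  | succ n ih =>
    have h3 : er (n + 3) = er (n + 2) + er (n + 1) + er n := by
      unfold er; rw [T_rec]; push_cast
      linear_combination (-α ^ n) * α_cube
    rw [show n + 1 + 2 = n + 3 by ring, h3, show n + 1 + 1 = n + 2 by ring]
    linear_combination α * ih - (er n) * α_cube

/-- A positive definite quadratic form in two consecutive errors is multiplied by `‖β‖ ^ 2 < 1` at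
each step, so the errors stay bounded. -/
theorem er_quad (n : ℕ) :
    er (n + 1) ^ 2 - (1 - α) * er (n + 1) * er n + (α ^ 2 - α - 1) * er n ^ 2 ≤ 1.4 := by
  have hα := α_bounds
  have hpos : 0 ≤ α ^ 2 - α - 1 := by nlinarith
  have hle : α ^ 2 - α - 1 ≤ 1 := by nlinarith
  induction n with
  | zero =>
    have h0 : er 0 = -1 := by simp [er, T]
    have h1 : er 1 = θ - α := by simp [er, T]
    have := θ_bounds
    rw [h0, h1]
    nlinarith
  | succ n ih =>
    have h : er (n + 1 + 1) ^ 2 - (1 - α) * er (n + 1 + 1) * er (n + 1)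
        + (α ^ 2 - α - 1) * er (n + 1) ^ 2 = (α ^ 2 - α - 1) * (er (n + 1) ^ 2
        - (1 - α) * er (n + 1) * er n + (α ^ 2 - α - 1) * er n ^ 2) := by
      rw [show n + 1 + 1 = n + 2 by ring, er_rec]; ring
    rw [h]
    nlinarith

theorem er_le (n : ℕ) : |θ * T n - α ^ n| ≤ 2 := by
  have h := er_quad n
  have hα := α_bounds
  change |er n| ≤ 2
  apply abs_le_of_sq_le_sq _ (by norm_num)
  have h2 : 0 ≤ (er (n + 1) - (1 - α) / 2 * er n) ^ 2 := sq_nonneg _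
  have h3 : 0.36 * er n ^ 2 ≤ (α ^ 2 - α - 1 - ((1 - α) / 2) ^ 2) * er n ^ 2 := by
    apply mul_le_mul_of_nonneg_right _ (sq_nonneg _)
    nlinarith
  nlinarith

theorem T_le_α_all (n : ℕ) : (T n : ℝ) ≤ α ^ n ∧ (T (n + 1) : ℝ) ≤ α ^ (n + 1) ∧
    (T (n + 2) : ℝ) ≤ α ^ (n + 2) := by
  have hα := α_bounds
  induction n with
  | zero =>
    simp only [T, Int.cast_zero, Int.cast_one, zero_add, pow_zero, pow_one]
    refine ⟨by norm_num, ?_, ?_⟩ <;> nlinarith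
  | succ n ih =>
    obtain ⟨h1, h2, h3⟩ := ih
    refine ⟨h2, h3, ?_⟩
    rw [show n + 1 + 2 = n + 3 by ring, T_rec]; push_cast
    have : α ^ (n + 3) = α ^ (n + 2) + α ^ (n + 1) + α ^ n := by
      linear_combination (α ^ n) * α_cube
    linarith

theorem T_le_α (n : ℕ) : (T n : ℝ) ≤ α ^ n := (T_le_α_all n).1

end Trib

end

/-! ### Determinants of matrices with analytic or arithmetic structure -/

section
open Finset

/-- Multilinearity of the determinant in the rows, each row being a linear combination. -/
theorem det_expand {A : Type*} [CommRing A] {n κ : Type*} [Fintype n] [DecidableEq n]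
    [Fintype κ] [DecidableEq κ] (g : n → κ → A) (v : n → κ → n → A) :
    Matrix.det (fun i c => ∑ k, g i k * v i k c) =
      ∑ f : n → κ, (∏ i, g i (f i)) * Matrix.det (fun i => v i (f i)) := by
  have h := (Matrix.detRowAlternating (n := n) (R := A)).toMultilinearMap.map_sum
    (fun i k => g i k • v i k)
  have h2 : (fun i c => ∑ k, g i k * v i k c) = fun i => ∑ k, g i k • v i k := by
    funext i c
    simp
  rw [h2]
  refine h.trans (Finset.sum_congr rfl fun f _ => ?_)
  have := (Matrix.detRowAlternating (n := n) (R := A)).toMultilinearMap.map_smul_univ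
    (fun i => g i (f i)) (fun i => v i (f i))
  exact this

/-- Exponents below `N` are pairwise distinct, so their total weight is at least that of
`0, …, N - 1`. -/
theorem sum_weight_le {N : ℕ} (W : ℕ → ℕ) (hW : Monotone W) {ι : Type*} [Fintype ι]
    (hcard : Fintype.card ι = N) (h : ι → ℕ)
    (hinj : ∀ i j, h i = h j → h i < N → i = j) :
    ∑ k ∈ range N, W k ≤ ∑ i, W (h i) := by
  classical
  set I : Finset ι := univ.filter fun i => h i < N with hI
  have hinjI : Set.InjOn h I := by
    intro i hi j hj hij
    have hi' : h i < N := by simpa [hI] using hi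
    exact hinj i j hij hi'
  have hsub : I.image h ⊆ range N := by
    intro k hk
    obtain ⟨i, hi, rfl⟩ := Finset.mem_image.1 hk
    simpa [hI] using hi
  have h1 : ∑ i ∈ I, W (h i) = ∑ k ∈ I.image h, W k := (Finset.sum_image hinjI).symm
  have hc1 : (I.image h).card = I.card := Finset.card_image_of_injOn hinjI
  have h2 : ∑ k ∈ range N \ I.image h, W k ≤ (range N \ I.image h).card * W N := by
    rw [← smul_eq_mul]
    refine Finset.sum_le_card_nsmul _ _ _ fun k hk => hW ?_
    have := (Finset.mem_sdiff.1 hk).1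
    exact (Finset.mem_range.1 this).le
  have h3 : (univ \ I).card * W N ≤ ∑ i ∈ univ \ I, W (h i) := by
    rw [← smul_eq_mul]
    refine Finset.card_nsmul_le_sum _ _ _ fun i hi => hW ?_
    simpa [hI] using hi
  have hc2 : (range N \ I.image h).card = (univ \ I).card := by
    rw [Finset.card_sdiff_of_subset hsub, Finset.card_sdiff_of_subset (Finset.subset_univ _), hc1]
    simp [hcard]
  have e1 := Finset.sum_sdiff (f := W) hsub
  have e2 := Finset.sum_sdiff (f := fun i => W (h i)) (Finset.subset_univ I)
  rw [hc2] at h2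
  omega

theorem abs_det_le {n : Type*} [Fintype n] [DecidableEq n] (M : Matrix n n ℝ) (b : n → ℝ)
    (hM : ∀ i c, |M i c| ≤ b i) :
    |Matrix.det M| ≤ (Fintype.card n).factorial * ∏ i, b i := by
  rw [← Matrix.det_transpose, Matrix.det_apply]
  refine (Finset.abs_sum_le_sum_abs _ _).trans ?_
  have : ∀ σ ∈ (univ : Finset (Equiv.Perm n)),
      |Equiv.Perm.sign σ • ∏ i, Matrix.transpose M (σ i) i| ≤ ∏ i, b i := by
    intro σ _
    have h1 : |Equiv.Perm.sign σ • ∏ i, Matrix.transpose M (σ i) i| = ∏ i, |M i (σ i)| := by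
      rcases Int.units_eq_one_or (Equiv.Perm.sign σ) with h | h <;>
        simp [h, Finset.abs_prod, Matrix.transpose]
    rw [h1]
    exact Finset.prod_le_prod (fun _ _ => abs_nonneg _) fun i _ => hM i _
  refine (Finset.sum_le_card_nsmul _ _ _ this).trans ?_
  simp [Fintype.card_perm]

theorem norm_det_le {𝕜 : Type*} [RCLike 𝕜] {n : Type*} [Fintype n] [DecidableEq n] (M : Matrix n n 𝕜) (b : ℝ)
    (hM : ∀ i c, ‖M i c‖ ≤ b) :
    ‖Matrix.det M‖ ≤ (Fintype.card n).factorial * b ^ Fintype.card n := by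
  rw [Matrix.det_apply]
  refine (norm_sum_le _ _).trans ?_
  have : ∀ σ ∈ (univ : Finset (Equiv.Perm n)),
      ‖Equiv.Perm.sign σ • ∏ i, M (σ i) i‖ ≤ b ^ Fintype.card n := by
    intro σ _
    have h1 : ‖Equiv.Perm.sign σ • ∏ i, M (σ i) i‖ = ∏ i, ‖M (σ i) i‖ := by
      rcases Int.units_eq_one_or (Equiv.Perm.sign σ) with h | h <;>
        simp [h]
    rw [h1]
    refine (Finset.prod_le_prod (fun _ _ => norm_nonneg _) fun i _ => hM _ _).trans ?_
    simp [Finset.card_univ]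
  refine (Finset.sum_le_card_nsmul _ _ _ this).trans ?_
  simp [Fintype.card_perm]

/-- Schwarz lemma for determinants, in terms of power series coefficients: if row `i` is a combination
of the functions `φ e`, then by multilinearity only terms with distinct `e` survive, and these carry
a total degree of at least `0 + 1 + ⋯ + (N - 1)`. -/
theorem det_bound {ι : Type*} [Fintype ι] [DecidableEq ι] {N : ℕ}
    (hcard : Fintype.card ι = N) (ρ : ℝ) (hρ : 1 ≤ ρ) (E : ℕ) (a : ι → ℕ)
    (g : ι → Fin E → ℝ) (φ : ℕ → ι → ℝ) (hφ : ∀ e c, |φ e c| ≤ 1)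
    (δ : ι → ι → ℝ) (η : ι → ℝ) (hη : ∀ i c, |δ i c| ≤ η i) (G : ℝ)
    (hG : ∀ i, ∑ k, |g i k| * ρ ^ (a i + (k : ℕ)) + η i * ρ ^ N ≤ G)
    (M : Matrix ι ι ℝ) (hM : ∀ i c, M i c = ∑ k, g i k * φ (a i + k) c + δ i c) :
    |Matrix.det M| * ρ ^ (∑ k ∈ range N, k) ≤
      N.factorial * G ^ N := by
  classical
  let g' : ι → Option (Fin E) → ℝ := fun i k => k.elim 1 (g i)
  let v : ι → Option (Fin E) → ι → ℝ := fun i k => k.elim (δ i) fun k => φ (a i + k)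
  let B : ι → Option (Fin E) → ℝ := fun i k => k.elim (η i) fun k => |g i k|
  let w : ι → Option (Fin E) → ℕ := fun i k => k.elim N fun k => a i + k
  have hη0 : ∀ i, 0 ≤ η i := fun i => (abs_nonneg _).trans (hη i i)
  have hB0 : ∀ i k, 0 ≤ B i k := by
    rintro i (_ | k)
    · exact hη0 i
    · exact abs_nonneg _
  have h1 : M = fun i c => ∑ k, g' i k * v i k c := by
    funext i c
    rw [hM]
    simp [Fintype.sum_option, g', v, add_comm]
  rw [h1, det_expand]
  have hterm : ∀ f : ι → Option (Fin E),
      |(∏ i, g' i (f i)) * Matrix.det (fun i => v i (f i))| * ρ ^ (∑ k ∈ range N, k) ≤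
        N.factorial * ∏ i, (B i (f i) * ρ ^ w i (f i)) := by
    intro f
    have hR0 : 0 ≤ (N.factorial : ℝ) * ∏ i, (B i (f i) * ρ ^ w i (f i)) :=
      mul_nonneg (by positivity) (Finset.prod_nonneg fun i _ => mul_nonneg (hB0 _ _) (by positivity))
    by_cases hinj : ∀ i j, w i (f i) = w j (f j) → w i (f i) < N → i = j
    · have hw := sum_weight_le (fun k => k) monotone_id hcard (fun i => w i (f i)) hinj
      have h2 : |(∏ i, g' i (f i)) * Matrix.det (fun i => v i (f i))| ≤
          N.factorial * ∏ i, B i (f i) := by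
        have h3 := abs_det_le (fun i c => g' i (f i) * v i (f i) c) (fun i => B i (f i)) (by
          intro i c
          rcases hfi : f i with _ | k
          · simpa [g', v, B] using hη i c
          · simp only [g', v, B, Option.elim, abs_mul]
            exact mul_le_of_le_one_right (abs_nonneg _) (hφ _ _))
        rw [hcard] at h3
        have h4 := Matrix.det_mul_column (fun i => g' i (f i)) (fun i => v i (f i))
        have h5 : Matrix.det (fun i c => g' i (f i) * v i (f i) c) =
          (∏ i, g' i (f i)) * Matrix.det (fun i => v i (f i)) := h4
        rwa [h5] at h3
      calc _ ≤ (N.factorial * ∏ i, B i (f i)) * ρ ^ (∑ i, w i (f i)) := by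
            refine mul_le_mul h2 (pow_le_pow_right₀ hρ hw) (by positivity) ?_
            exact mul_nonneg (by positivity) (Finset.prod_nonneg fun i _ => hB0 _ _)
        _ = _ := by
            rw [Finset.prod_mul_distrib, Finset.prod_pow_eq_pow_sum, mul_assoc]
    · push Not at hinj
      obtain ⟨i, j, hij, hlt, hne⟩ := hinj
      have hz : Matrix.det (fun i => v i (f i)) = 0 := by
        refine Matrix.det_zero_of_row_eq hne ?_
        rcases hfi : f i with _ | k
        · simp [w, hfi] at hlt
        · rcases hfj : f j with _ | l
          · simp [w, hfi, hfj] at hij hlt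
            omega
          · simp only [w, hfi, hfj, Option.elim] at hij
            simp [v, hij]
      rw [hz]
      simpa using hR0
  calc _ ≤ (∑ f : ι → Option (Fin E), |(∏ i, g' i (f i)) * Matrix.det (fun i => v i (f i))|) *
        ρ ^ (∑ k ∈ range N, k) := by
        gcongr
        exact Finset.abs_sum_le_sum_abs _ _
    _ ≤ ∑ f : ι → Option (Fin E), N.factorial * ∏ i, (B i (f i) * ρ ^ w i (f i)) := by
        rw [Finset.sum_mul]
        exact Finset.sum_le_sum fun f _ => hterm f
    _ = N.factorial * ∏ i, ∑ k, B i k * ρ ^ w i k := by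
        rw [← Finset.mul_sum, Finset.prod_univ_sum, Fintype.piFinset_univ]
    _ ≤ N.factorial * ∏ i : ι, G := by
        refine mul_le_mul_of_nonneg_left ?_ (by positivity)
        refine Finset.prod_le_prod (fun i _ => Finset.sum_nonneg fun k _ =>
          mul_nonneg (hB0 _ _) (by positivity)) fun i _ => ?_
        rw [Fintype.sum_option]
        have := hG i
        simp only [B, w, Option.elim]
        linarith
    _ = _ := by simp [Finset.card_univ, hcard]

/-- The `p`-adic analogue of `det_bound`. -/
theorem det_dvd {A : Type*} [CommRing A] {ι : Type*} [Fintype ι] [DecidableEq ι] {N : ℕ}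
    (hcard : Fintype.card ι = N) (p : A) (E K X : ℕ) (hX : N ≤ X)
    (g : ι → Fin E → A) (φ : ℕ → ι → A) (δ : ι → ι → A)
    (M : Matrix ι ι A)
    (hM : ∀ i c, M i c = ∑ k : Fin E, p ^ ((k : ℕ) - K) * g i k * φ k c + p ^ X * δ i c) :
    p ^ (∑ k ∈ range N, (k - K)) ∣ Matrix.det M := by
  classical
  let g' : ι → Option (Fin E) → A :=
    fun i k => k.elim (p ^ X) fun k => p ^ ((k : ℕ) - K) * g i k
  let v : ι → Option (Fin E) → ι → A := fun i k => k.elim (δ i) fun k => φ k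
  let w : Option (Fin E) → ℕ := fun k => k.elim N fun k => k
  have h1 : M = fun i c => ∑ k, g' i k * v i k c := by
    funext i c
    rw [hM]
    simp [Fintype.sum_option, g', v, add_comm]
  rw [h1, det_expand]
  refine Finset.dvd_sum fun f _ => ?_
  by_cases hinj : ∀ i j, w (f i) = w (f j) → w (f i) < N → i = j
  · have hw := sum_weight_le (fun k => k - K) (fun a b h => Nat.sub_le_sub_right h K) hcard
      (fun i => w (f i)) hinj
    refine Dvd.dvd.mul_right ?_ _
    refine (pow_dvd_pow p hw).trans ?_
    rw [← Finset.prod_pow_eq_pow_sum]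
    refine Finset.prod_dvd_prod_of_dvd _ _ fun i _ => ?_
    rcases f i with _ | k
    · exact pow_dvd_pow p (by simp only [w, Option.elim]; omega)
    · exact dvd_mul_right _ _
  · push Not at hinj
    obtain ⟨i, j, hij, hlt, hne⟩ := hinj
    have hz : Matrix.det (fun i => v i (f i)) = 0 := by
      refine Matrix.det_zero_of_row_eq hne ?_
      rcases hfi : f i with _ | k
      · simp [w, hfi] at hlt
      · rcases hfj : f j with _ | l
        · simp [w, hfi, hfj] at hij hlt
          omega
        · simp only [w, hfi, hfj, Option.elim] at hij
          simp [v, hij]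
    rw [hz]
    simp

end

/-! ### The zero estimate -/

section
open Finset

/-- A matrix with linearly independent rows has a nonvanishing maximal minor. -/
theorem exists_cols {ι κ : Type*} [Fintype ι] [DecidableEq ι] [Fintype κ]
    (M : Matrix ι κ ℝ) (h : ∀ c : ι → ℝ, (∀ k, ∑ i, c i * M i k = 0) → c = 0) :
    ∃ f : ι → κ, (M.submatrix id f).det ≠ 0 := by
  classical
  have hli : LinearIndependent ℝ M.row := by
    rw [Fintype.linearIndependent_iff]
    intro c hc i
    refine congrFun (h c fun k => ?_) i
    simpa using congrFun hc k
  have hr : M.rank = Fintype.card ι := hli.rank_matrix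
  rw [Matrix.rank_eq_finrank_span_cols] at hr
  have htop : Submodule.span ℝ (Set.range M.col) = ⊤ := by
    apply Submodule.eq_top_of_finrank_eq
    rw [hr]; simp
  obtain ⟨b, hb, hspan, hlib⟩ := exists_linearIndependent ℝ (Set.range M.col)
  let bas : Module.Basis b ℝ (ι → ℝ) := Module.Basis.mk hlib (by
    rw [Subtype.range_coe, hspan, htop])
  let e : b ≃ ι := bas.indexEquiv (Pi.basisFun ℝ ι)
  have hf : ∀ i, ∃ k, M.col k = (e.symm i : ι → ℝ) := fun i => hb (e.symm i).2
  choose f hf using hf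
  refine ⟨f, ?_⟩
  have hu : IsUnit (M.submatrix id f) := by
    rw [← Matrix.linearIndependent_cols_iff_isUnit]
    have : (M.submatrix id f).col = (fun x : b => (x : ι → ℝ)) ∘ e.symm := by
      funext i
      exact hf i
    rw [this]
    exact hlib.comp _ e.symm.injective
  exact ((Matrix.isUnit_iff_isUnit_det _).1 hu).ne_zero

open Polynomial in
/-- Zero estimate: a polynomial `∑ c a j * X ^ a * Y ^ j` with `K * L` coefficients that vanishes at all
the points `(r + s * q, u ^ r * w ^ s)` of a large enough grid is zero. -/
theorem zero_estimate (K L R2 S q : ℕ) (hRq : R2 ≤ q) (hKL : K * L ≤ R2 * S) (u w : ℝ)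
    (hu : 0 < u) (hu1 : u ≠ 1) (hw : w ≠ 0) (c : Fin K → Fin L → ℝ)
    (hz : ∀ r < R2 + L, ∀ s < S, ∑ a : Fin K, ∑ j : Fin L,
      c a j * ((r + s * q : ℕ) : ℝ) ^ (a : ℕ) * (u ^ r * w ^ s) ^ (j : ℕ) = 0) : c = 0 := by
  classical
  by_contra hc
  let P : Fin L → ℝ[X] := fun j => ∑ a : Fin K, C (c a j) * X ^ (a : ℕ)
  have hPc : ∀ j (a : Fin K), (P j).coeff a = c a j := by
    intro j a
    simp only [P, finsetSum_coeff, coeff_C_mul, coeff_X_pow]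
    rw [Finset.sum_eq_single a]
    · simp
    · intro b _ hb
      rw [if_neg, mul_zero]
      exact fun h => hb (Fin.ext h.symm)
    · simp
  have hPd : ∀ j, (P j).natDegree ≤ K - 1 := by
    intro j
    refine natDegree_sum_le_of_forall_le _ _ fun a _ => ?_
    refine (natDegree_C_mul_X_pow_le _ _).trans ?_
    have := a.2
    omega
  have hPe : ∀ j x, (P j).eval x = ∑ a : Fin K, c a j * x ^ (a : ℕ) := by
    intro j x
    simp [P, eval_finsetSum]
  let J : Finset (Fin L) := univ.filter fun j => P j ≠ 0
  have hJ : J.Nonempty := by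
    by_contra hJ
    rw [Finset.not_nonempty_iff_eq_empty] at hJ
    apply hc
    funext a j
    have : P j = 0 := by
      by_contra h
      have : j ∈ J := by simp [J, h]
      simp [hJ] at this
    rw [← hPc, this]; simp
  obtain ⟨e, he⟩ : ∃ e, J.card = e := ⟨_, rfl⟩
  have he0 : 0 < e := he ▸ hJ.card_pos
  have heL : e ≤ L := by
    rw [← he]
    exact (Finset.card_le_univ J).trans (by simp)
  let emb : Fin e → Fin L := J.orderEmbOfFin he
  have hemb : ∀ k, P (emb k) ≠ 0 := fun k => by
    have := J.orderEmbOfFin_mem he k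
    exact (Finset.mem_filter.1 this).2
  have hembi : Function.Injective emb := (J.orderEmbOfFin he).injective
  have hK : 0 < K := by
    rcases Nat.eq_zero_or_pos K with rfl | h
    · exact absurd (by simp [P]) (hemb ⟨0, he0⟩)
    · exact h
  let d : Fin e → ℕ := fun k => (P (emb k)).natDegree
  let Q : Matrix (Fin e) (Fin e) ℝ[X] := fun i k =>
    X ^ (K - 1 - d k) * ((P (emb k)).comp (X + C ((i : ℕ) : ℝ)) * C (u ^ ((emb k : ℕ) * (i : ℕ))))
  have hcompd : ∀ i k, ((P (emb k)).comp (X + C (((i : Fin e) : ℕ) : ℝ))).natDegree = d k := by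
    intro i k
    rw [natDegree_comp, natDegree_X_add_C, mul_one]
  have hQd : ∀ i k, (Q i k).natDegree ≤ K - 1 := by
    intro i k
    have h1 := hcompd i k
    have h2 := hPd (emb k)
    refine natDegree_mul_le.trans ?_
    refine (add_le_add (natDegree_X_pow_le _) (natDegree_mul_C_le _ _)).trans ?_
    rw [h1]
    have : d k ≤ K - 1 := h2
    omega
  have hQc : ∀ i k, (Q i k).coeff (K - 1) =
      (P (emb k)).leadingCoeff * (u ^ (emb k : ℕ)) ^ (i : ℕ) := by
    intro i k
    have h2 : d k ≤ K - 1 := hPd (emb k)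
    have h3 : K - 1 = d k + (K - 1 - d k) := by omega
    simp only [Q]
    conv_lhs => rw [h3]
    rw [show d k + (K - 1 - d k) - d k = K - 1 - d k by omega, coeff_X_pow_mul, coeff_mul_C]
    congr 1
    · rw [← hcompd i k]
      change leadingCoeff _ = _
      rw [leadingCoeff_comp (by rw [natDegree_X_add_C]; exact one_ne_zero), leadingCoeff_X_add_C,
        one_pow, mul_one]
    · rw [pow_mul]
  have hcoef : Q.det.coeff (e * (K - 1)) =
      (∏ k, (P (emb k)).leadingCoeff) * (Matrix.vandermonde fun k => u ^ (emb k : ℕ)).det := by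
    rw [← Matrix.det_transpose (Matrix.vandermonde _), ← Matrix.det_mul_row, Matrix.det_apply,
      Matrix.det_apply, finsetSum_coeff]
    refine Finset.sum_congr rfl fun σ _ => ?_
    rw [Units.smul_def, Units.smul_def, coeff_smul]
    congr 1
    have := coeff_prod_of_natDegree_le (univ : Finset (Fin e)) (fun i => Q (σ i) i) (K - 1)
      (fun i _ => hQd _ _)
    simp only [Finset.card_univ, Fintype.card_fin] at this
    rw [this]
    refine Finset.prod_congr rfl fun i _ => ?_
    rw [hQc]
    simp [Matrix.vandermonde]
  have hvd : (Matrix.vandermonde fun k => u ^ (emb k : ℕ)).det ≠ 0 := by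
    rw [Matrix.det_vandermonde_ne_zero_iff]
    intro a b hab
    have := (pow_right_injective₀ hu hu1) hab
    exact hembi (Fin.ext this)
  have hdet0 : Q.det ≠ 0 := by
    intro h0
    rw [h0, coeff_zero] at hcoef
    refine (mul_ne_zero ?_ hvd) hcoef.symm
    exact Finset.prod_ne_zero_iff.2 fun k _ => leadingCoeff_ne_zero.2 (hemb k)
  have hdeg : Q.det.natDegree ≤ e * (K - 1) := by
    rw [Matrix.det_apply]
    refine natDegree_sum_le_of_forall_le _ _ fun σ _ => ?_
    rw [Units.smul_def]
    refine (natDegree_smul_le _ _).trans ?_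
    refine (natDegree_prod_le _ _).trans ?_
    refine (Finset.sum_le_card_nsmul _ _ _ fun i _ => hQd (σ i) i).trans ?_
    simp
  have hvan : ∀ r < R2, ∀ s < S, Q.det.eval ((r + s * q : ℕ) : ℝ) = 0 := by
    intro r hr s hs
    set z : ℝ := ((r + s * q : ℕ) : ℝ) with hzdef
    rw [← coe_evalRingHom, RingHom.map_det]
    let B : Matrix (Fin e) (Fin e) ℝ := fun i k =>
      (P (emb k)).eval (z + ((i : ℕ) : ℝ)) * u ^ ((emb k : ℕ) * (i : ℕ))
    have hmat : (evalRingHom z).mapMatrix Q = Matrix.of fun i k => z ^ (K - 1 - d k) * B i k := by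
      ext i k
      change eval z (Q i k) = _
      simp only [Q, B, eval_mul, eval_pow, eval_X, eval_comp, eval_add, eval_C, Matrix.of_apply]
    rw [hmat, Matrix.det_mul_row]
    apply mul_eq_zero_of_right
    rw [← Matrix.exists_mulVec_eq_zero_iff]
    refine ⟨fun k => (u ^ r * w ^ s) ^ (emb k : ℕ), ?_, ?_⟩
    · intro h0
      have := congrFun h0 ⟨0, he0⟩
      simp [hu.ne', hw] at this
    · funext i
      have h1 := hz (r + i) (by have := i.2; omega) s hs
      rw [Finset.sum_comm] at h1
      have h2 : ∀ j : Fin L, ∑ a : Fin K, c a j * ((r + i + s * q : ℕ) : ℝ) ^ (a : ℕ) *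
          (u ^ (r + (i : ℕ)) * w ^ s) ^ (j : ℕ) =
          (P j).eval (z + ((i : ℕ) : ℝ)) * u ^ ((j : ℕ) * (i : ℕ)) * (u ^ r * w ^ s) ^ (j : ℕ) := by
        intro j
        rw [hPe, ← Finset.sum_mul, mul_assoc]
        congr 1
        · refine Finset.sum_congr rfl fun a _ => ?_
          rw [hzdef]; push_cast; ring
        · rw [pow_add]; ring
      rw [Finset.sum_congr rfl fun j _ => h2 j] at h1
      rw [← Finset.sum_subset (Finset.subset_univ J) (by
        intro j _ hj
        have : P j = 0 := by
          by_contra h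
          exact hj (by simp [J, h])
        simp [this])] at h1
      have h3 : J = univ.image emb := by
        have := Finset.image_orderEmbOfFin_univ J he
        exact this.symm
      rw [h3, Finset.sum_image hembi.injOn] at h1
      simpa [Matrix.mulVec, dotProduct, B] using h1
  let pts : Finset ℝ := (range R2 ×ˢ range S).image fun x => ((x.1 + x.2 * q : ℕ) : ℝ)
  have hcardpts : pts.card = R2 * S := by
    rw [Finset.card_image_of_injOn]
    · simp
    · rintro ⟨r, s⟩ h1 ⟨r', s'⟩ h2 h
      simp only [coe_product, coe_range, Set.mem_prod, Set.mem_Iio] at h1 h2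
      have h : r + s * q = r' + s' * q := by
        simp only at h
        exact_mod_cast h
      have hq : 0 < q := by omega
      have e1 : r = r' := by
        have := congrArg (· % q) h
        simpa [Nat.add_mul_mod_self_right, Nat.mod_eq_of_lt (h1.1.trans_le hRq),
          Nat.mod_eq_of_lt (h2.1.trans_le hRq)] using this
      subst e1
      have : s * q = s' * q := by omega
      rw [Nat.eq_of_mul_eq_mul_right hq this]
  refine hdet0 (eq_zero_of_natDegree_lt_card_of_eval_eq_zero' _ pts ?_ ?_)
  · intro x hx
    obtain ⟨⟨r, s⟩, h1, rfl⟩ := Finset.mem_image.1 hx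
    simp only [mem_product, mem_range] at h1
    exact hvan r h1.1 s h1.2
  · rw [hcardpts]
    refine hdeg.trans_lt (lt_of_lt_of_le ?_ hKL)
    calc e * (K - 1) < e * K := by
          exact Nat.mul_lt_mul_of_pos_left (by omega) he0
      _ ≤ L * K := Nat.mul_le_mul_right _ heL
      _ = K * L := mul_comm _ _

end

/-! ### Interpolation determinants -/

section
open Finset

/-- The interpolation determinant is small if the second exponential is close to the `q`-th power of
the first, as its entries are then close to values of analytic functions of one variable `z`. -/
theorem analytic_det_bound (K L N : ℕ) (hN : N = K * L) (Z W S : ℝ) (hZ : 1 ≤ Z)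
    (z s : Fin K × Fin L → ℝ) (hz : ∀ c, 0 ≤ z c ∧ z c ≤ Z) (hs : ∀ c, 0 ≤ s c ∧ s c ≤ S)
    (l Λ : ℝ) (hW : L * |l| * Z ≤ W) (hΛ : 2 * L * S * |Λ| ≤ Real.exp (-N)) :
    |Matrix.det (Matrix.of fun i c : Fin K × Fin L =>
        z c ^ (i.1 : ℕ) * Real.exp ((i.2 : ℕ) * (l * z c + Λ * s c)))| *
      Real.exp 1 ^ (∑ k ∈ range N, k) ≤
      N.factorial * (3 * (Real.exp 1 * Z) ^ K * Real.exp (Real.exp 1 * W)) ^ N := by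
  have hS : ∀ c : Fin K × Fin L, 0 ≤ S := fun c => (hs c).1.trans (hs c).2
  have hW0 : 0 ≤ W := le_trans (by positivity) hW
  have hjW : ∀ i c : Fin K × Fin L, |((i.2 : ℕ) : ℝ) * (l * z c)| ≤ W := by
    intro i c
    refine le_trans ?_ hW
    rw [abs_mul, abs_mul, abs_of_nonneg (hz c).1, Nat.abs_cast, ← mul_assoc]
    have h1 : ((i.2 : ℕ) : ℝ) ≤ L := by exact_mod_cast i.2.2.le
    have := (hz c).2
    have := (hz c).1
    gcongr
  -- a common truncation order for all the exponentials
  have htail : ∃ E : ℕ, ∀ i c : Fin K × Fin L,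
      |Real.exp (((i.2 : ℕ) : ℝ) * (l * z c)) -
        ∑ k ∈ range E, (((i.2 : ℕ) : ℝ) * (l * z c)) ^ k / k.factorial| ≤ Real.exp (-N) := by
    have : ∀ᶠ E in Filter.atTop, ∀ i c : Fin K × Fin L,
      |Real.exp (((i.2 : ℕ) : ℝ) * (l * z c)) -
        ∑ k ∈ range E, (((i.2 : ℕ) : ℝ) * (l * z c)) ^ k / k.factorial| ≤ Real.exp (-N) := by
      rw [Filter.eventually_all]
      intro i
      rw [Filter.eventually_all]
      intro c
      have h := NormedSpace.expSeries_div_hasSum_exp (𝔸 := ℝ) (((i.2 : ℕ) : ℝ) * (l * z c))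
      rw [← Real.exp_eq_exp_ℝ] at h
      have h2 := h.tendsto_sum_nat
      have h3 := (Metric.tendsto_atTop.1 h2) (Real.exp (-N)) (Real.exp_pos _)
      obtain ⟨E0, hE0⟩ := h3
      refine Filter.eventually_atTop.2 ⟨E0, fun E hE => ?_⟩
      have := hE0 E hE
      rw [Real.dist_eq, abs_sub_comm] at this
      exact this.le
    exact this.exists
  obtain ⟨E, hE⟩ := htail
  let g : Fin K × Fin L → Fin E → ℝ := fun i k =>
    (((i.2 : ℕ) : ℝ) * l) ^ (k : ℕ) / (k : ℕ).factorial * Z ^ ((i.1 : ℕ) + k)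
  let φ : ℕ → Fin K × Fin L → ℝ := fun e c => (z c / Z) ^ e
  have hZ0 : 0 < Z := by linarith
  have hgφ : ∀ i c, ∑ k, g i k * φ ((i.1 : ℕ) + k) c = z c ^ (i.1 : ℕ) *
      ∑ k ∈ range E, (((i.2 : ℕ) : ℝ) * (l * z c)) ^ k / k.factorial := by
    intro i c
    rw [Finset.mul_sum, ← Fin.sum_univ_eq_sum_range
      (fun k => z c ^ (i.1 : ℕ) * ((((i.2 : ℕ) : ℝ) * (l * z c)) ^ k / k.factorial))]
    refine Finset.sum_congr rfl fun k _ => ?_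
    have hZk : Z ^ ((i.1 : ℕ) + k) ≠ 0 := by positivity
    simp only [g, φ, div_pow]
    rw [mul_assoc, mul_div_cancel₀ _ hZk, pow_add]
    ring
  refine det_bound (by simp [hN]) (Real.exp 1) (Real.one_le_exp (by norm_num)) E
    (fun i => (i.1 : ℕ)) g φ ?_
    (fun i c => z c ^ (i.1 : ℕ) * (Real.exp ((i.2 : ℕ) * (l * z c + Λ * s c)) -
      ∑ k ∈ range E, (((i.2 : ℕ) : ℝ) * (l * z c)) ^ k / k.factorial))
    (fun _ => 2 * Z ^ K * Real.exp W * Real.exp (-N)) ?_ _ ?_ _ ?_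
  · intro e c
    simp only [φ]
    rw [abs_of_nonneg (pow_nonneg (div_nonneg (hz c).1 hZ0.le) _)]
    exact pow_le_one₀ (div_nonneg (hz c).1 hZ0.le) ((div_le_one hZ0).2 (hz c).2)
  · intro i c
    have h0 : z c ^ (i.1 : ℕ) ≤ Z ^ K := by
      calc z c ^ (i.1 : ℕ) ≤ Z ^ (i.1 : ℕ) := pow_le_pow_left₀ (hz c).1 (hz c).2 _
        _ ≤ Z ^ K := pow_le_pow_right₀ hZ i.1.2.le
    have hy : |((i.2 : ℕ) : ℝ) * (Λ * s c)| ≤ L * S * |Λ| := by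
      rw [abs_mul, abs_mul, abs_of_nonneg (hs c).1, Nat.abs_cast]
      have h1 : ((i.2 : ℕ) : ℝ) ≤ L := by exact_mod_cast i.2.2.le
      calc ((i.2 : ℕ) : ℝ) * (|Λ| * s c) ≤ L * (|Λ| * S) := by
            have := (hs c).2
            have := (hs c).1
            gcongr
        _ = _ := by ring
    have hexp1 : Real.exp (-N) ≤ 1 := Real.exp_le_one_iff.2 (by simp)
    have h1 : |Real.exp ((i.2 : ℕ) * (l * z c + Λ * s c)) - Real.exp (((i.2 : ℕ) : ℝ) * (l * z c))|
        ≤ Real.exp W * Real.exp (-N) := by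
      rw [mul_add, Real.exp_add, ← mul_sub_one, abs_mul, Real.abs_exp]
      refine mul_le_mul (Real.exp_le_exp.2 ((le_abs_self _).trans (hjW i c))) ?_ (abs_nonneg _)
        (Real.exp_pos _).le
      refine (Real.abs_exp_sub_one_le (by linarith)).trans ?_
      linarith
    have h2 : |Real.exp ((i.2 : ℕ) * (l * z c + Λ * s c)) -
        ∑ k ∈ range E, (((i.2 : ℕ) : ℝ) * (l * z c)) ^ k / k.factorial| ≤
        2 * (Real.exp W * Real.exp (-N)) := by
      have h3 := abs_add_le (Real.exp ((i.2 : ℕ) * (l * z c + Λ * s c)) -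
        Real.exp (((i.2 : ℕ) : ℝ) * (l * z c))) (Real.exp (((i.2 : ℕ) : ℝ) * (l * z c)) -
        ∑ k ∈ range E, (((i.2 : ℕ) : ℝ) * (l * z c)) ^ k / k.factorial)
      rw [sub_add_sub_cancel] at h3
      have h4 := hE i c
      have h5 : Real.exp (-N) ≤ Real.exp W * Real.exp (-N) :=
        le_mul_of_one_le_left (Real.exp_pos _).le (Real.one_le_exp hW0)
      linarith
    rw [abs_mul, abs_of_nonneg (pow_nonneg (hz c).1 _)]
    calc _ ≤ Z ^ K * (2 * (Real.exp W * Real.exp (-N))) :=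
          mul_le_mul h0 h2 (abs_nonneg _) (by positivity)
      _ = _ := by ring
  · intro i
    have he1 : 1 ≤ Real.exp 1 := Real.one_le_exp (by norm_num)
    have h1 : ∑ k : Fin E, |g i k| * Real.exp 1 ^ ((i.1 : ℕ) + (k : ℕ)) ≤
        (Real.exp 1 * Z) ^ K * Real.exp (Real.exp 1 * W) := by
      have hx : 0 ≤ ((i.2 : ℕ) : ℝ) * |l| * Z * Real.exp 1 := by positivity
      have h2 : ∀ k : Fin E, |g i k| * Real.exp 1 ^ ((i.1 : ℕ) + (k : ℕ)) =
          (Real.exp 1 * Z) ^ (i.1 : ℕ) *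
          ((((i.2 : ℕ) : ℝ) * |l| * Z * Real.exp 1) ^ (k : ℕ) / (k : ℕ).factorial) := by
        intro k
        simp only [g]
        rw [abs_mul, abs_div, abs_pow, abs_mul, Nat.abs_cast, Nat.abs_cast, abs_of_pos (pow_pos hZ0 _)]
        rw [pow_add, pow_add]
        ring
      rw [Finset.sum_congr rfl fun k _ => h2 k, ← Finset.mul_sum]
      rw [Fin.sum_univ_eq_sum_range (fun k =>
        (((i.2 : ℕ) : ℝ) * |l| * Z * Real.exp 1) ^ k / k.factorial)]
      have h3 := Real.sum_le_exp_of_nonneg hx E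
      have h4 : ((i.2 : ℕ) : ℝ) * |l| * Z * Real.exp 1 ≤ Real.exp 1 * W := by
        rw [mul_comm]
        refine mul_le_mul_of_nonneg_left (le_trans ?_ hW) (Real.exp_pos _).le
        have h1 : ((i.2 : ℕ) : ℝ) ≤ L := by exact_mod_cast i.2.2.le
        gcongr
      refine mul_le_mul ?_ (h3.trans (Real.exp_le_exp.2 h4))
        (Finset.sum_nonneg fun k _ => by positivity) (by positivity)
      exact pow_le_pow_right₀ (one_le_mul_of_one_le_of_one_le he1 hZ) i.1.2.le
    have h5 : 2 * Z ^ K * Real.exp W * Real.exp (-N) * Real.exp 1 ^ N =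
        2 * (Z ^ K * Real.exp W) := by
      rw [← Real.exp_nat_mul, mul_one, mul_assoc, ← Real.exp_add]
      simp; ring
    rw [h5]
    have h6 : Z ^ K * Real.exp W ≤ (Real.exp 1 * Z) ^ K * Real.exp (Real.exp 1 * W) := by
      refine mul_le_mul ?_ ?_ (Real.exp_pos _).le (by positivity)
      · exact pow_le_pow_left₀ hZ0.le (le_mul_of_one_le_left hZ0.le he1) _
      · exact Real.exp_le_exp.2 (le_mul_of_one_le_left hW0 he1)
    linarith
  · intro i c
    rw [hgφ, Matrix.of_apply]
    ring

section Core
variable {R : Type*} [CommRing R]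

/-- The entry of the interpolation matrix: `z ^ a * w ^ j` at the point `z = r + s * q`,
`w = (A / B) ^ r * (A' / B') ^ s`, with the denominators cleared. -/
def entry (A B A' B' : R) (q L a j r s : ℕ) : R :=
  ((r + s * q : ℕ) : R) ^ a * (A ^ r * A' ^ s) ^ j * (B ^ r * B' ^ s) ^ (L - 1 - j)

theorem entry_norm_le {𝕜 : Type*} [RCLike 𝕜] (e : R →+* 𝕜) (A B A' B' : R)
    (q L K Rr S h1 h2 Z : ℕ)
    (hA : ‖e A‖ ≤ Real.exp h1) (hB : ‖e B‖ ≤ Real.exp h1)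
    (hA' : ‖e A'‖ ≤ Real.exp h2) (hB' : ‖e B'‖ ≤ Real.exp h2)
    (a j r s : ℕ) (ha : a < K) (hj : j < L) (hr : r < Rr) (hs : s < S) (hz : r + s * q ≤ Z)
    (hZ : 1 ≤ Z) :
    ‖e (entry A B A' B' q L a j r s)‖ ≤ (Z : ℝ) ^ K * Real.exp (L * (Rr * h1 + S * h2)) := by
  have key : ∀ x y : 𝕜, ‖x‖ ≤ Real.exp h1 → ‖y‖ ≤ Real.exp h2 →
      ‖x ^ r * y ^ s‖ ≤ Real.exp (Rr * h1 + S * h2) := by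
    intro x y hx hy
    rw [norm_mul, norm_pow, norm_pow]
    calc _ ≤ Real.exp h1 ^ r * Real.exp h2 ^ s := by gcongr
      _ = Real.exp (r * h1 + s * h2) := by
        rw [← Real.exp_nat_mul, ← Real.exp_nat_mul, ← Real.exp_add]
      _ ≤ _ := by gcongr
  rw [entry, map_mul, map_mul, map_pow, map_pow, map_pow, map_natCast, norm_mul, norm_mul,
    norm_pow, norm_pow, norm_pow, map_mul, map_mul, map_pow, map_pow, map_pow, map_pow,
    RCLike.norm_natCast]
  have k1 := key _ _ hA hA'
  have k2 := key _ _ hB hB'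
  have hZr : ((r + s * q : ℕ) : ℝ) ≤ Z := by exact_mod_cast hz
  have hZ1 : (1 : ℝ) ≤ Z := by exact_mod_cast hZ
  rw [mul_assoc]
  refine mul_le_mul ?_ ?_ (by positivity) (by positivity)
  · exact (pow_le_pow_left₀ (by positivity) hZr a).trans (pow_le_pow_right₀ hZ1 ha.le)
  · calc _ ≤ Real.exp (Rr * h1 + S * h2) ^ j * Real.exp (Rr * h1 + S * h2) ^ (L - 1 - j) := by
          gcongr
      _ = Real.exp (Rr * h1 + S * h2) ^ (L - 1) := by
          rw [← pow_add]; congr 1; omega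
      _ ≤ Real.exp (Rr * h1 + S * h2) ^ L :=
          pow_le_pow_right₀ (Real.one_le_exp (by positivity)) (by omega)
      _ = _ := by rw [← Real.exp_nat_mul]

theorem entry_eq (e : R →+* ℝ) (A B A' B' : R) (q L a j r s : ℕ) (hj : j < L)
    (hB : e B ≠ 0) (hB' : e B' ≠ 0) :
    e (entry A B A' B' q L a j r s) = (e B ^ r * e B' ^ s) ^ (L - 1) *
      (((r + s * q : ℕ) : ℝ) ^ a * ((e A / e B) ^ r * (e A' / e B') ^ s) ^ j) := by
  have h : (e B ^ r * e B' ^ s) ^ (L - 1) =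
      (e B ^ r * e B' ^ s) ^ j * (e B ^ r * e B' ^ s) ^ (L - 1 - j) := by
    rw [← pow_add]; congr 1; omega
  have h2 : (e A / e B) ^ r * (e A' / e B') ^ s = e A ^ r * e A' ^ s / (e B ^ r * e B' ^ s) := by
    rw [div_pow, div_pow, div_mul_div_comm]
  rw [h, h2, div_pow, entry]
  have h3 : (e B ^ r * e B' ^ s) ^ j ≠ 0 := by positivity
  simp only [map_mul, map_pow, map_natCast]
  field_simp

/-- The interpolation matrix attached to a choice `f` of the columns. -/
def imat (A B A' B' : R) (q K L : ℕ) (f : Fin K × Fin L → ℕ × ℕ) :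
    Matrix (Fin K × Fin L) (Fin K × Fin L) R :=
  Matrix.of fun i c => entry A B A' B' q L i.1 i.2 (f c).1 (f c).2

/-- The zero estimate provides points for which the interpolation determinant does not vanish. -/
theorem exists_det (e : R →+* ℝ) (A B A' B' : R) (q K L Rr S : ℕ) (hRq : Rr ≤ q) (hLR : L ≤ Rr)
    (hKL : K * L ≤ (Rr - L) * S) (hA : 0 < e A) (hB : 0 < e B) (hA' : 0 < e A') (hB' : 0 < e B')
    (hne : e A ≠ e B) :
    ∃ f : Fin K × Fin L → ℕ × ℕ, (∀ i, (f i).1 < Rr ∧ (f i).2 < S) ∧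
      e (imat A B A' B' q K L f).det ≠ 0 := by
  let M : Matrix (Fin K × Fin L) (Fin Rr × Fin S) ℝ :=
    Matrix.of fun i c => e (entry A B A' B' q L i.1 i.2 c.1 c.2)
  obtain ⟨f, hf⟩ := exists_cols M (by
    intro c hc
    have h0 := zero_estimate K L (Rr - L) S q (by omega) hKL (e A / e B) (e A' / e B')
      (div_pos hA hB) (by rw [Ne, div_eq_one_iff_eq hB.ne']; exact hne)
      (div_pos hA' hB').ne' (fun a j => c (a, j)) (by
        intro r hr s hs
        have h1 := hc (⟨r, by omega⟩, ⟨s, hs⟩)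
        simp only [M, Matrix.of_apply] at h1
        have h2 : ∀ i : Fin K × Fin L, c i * e (entry A B A' B' q L i.1 i.2 r s) =
            (e B ^ r * e B' ^ s) ^ (L - 1) * (c i * ((r + s * q : ℕ) : ℝ) ^ (i.1 : ℕ) *
            ((e A / e B) ^ r * (e A' / e B') ^ s) ^ (i.2 : ℕ)) := by
          intro i
          rw [entry_eq e A B A' B' q L _ _ r s i.2.2 hB.ne' hB'.ne']
          ring
        rw [Finset.sum_congr rfl fun i _ => h2 i, ← Finset.mul_sum, Fintype.sum_prod_type] at h1
        exact (mul_eq_zero.1 h1).resolve_left (by positivity))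
    funext i
    exact congrFun (congrFun h0 i.1) i.2)
  refine ⟨fun i => ((f i).1, (f i).2), fun i => ⟨(f i).1.2, (f i).2.2⟩, ?_⟩
  rw [RingHom.map_det]
  exact hf

end Core

end

/-! ### The archimedean and the non-archimedean interpolation estimates -/

section
open Finset

theorem cast_le_exp_div (N : ℕ) (hN : 160000 ≤ N) : (N : ℝ) ≤ Real.exp (N / 200) := by
  have h1 : (160000 : ℝ) ≤ N := by exact_mod_cast hN
  have h2 : (N : ℝ) / 400 ≤ Real.exp (N / 400) := by
    have := Real.add_one_le_exp ((N : ℝ) / 400)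
    linarith
  have h3 : Real.exp (N / 200) = Real.exp (N / 400) ^ 2 := by
    rw [← Real.exp_nat_mul]; congr 1; push_cast; ring
  rw [h3]
  calc (N : ℝ) ≤ (N / 400) ^ 2 := by nlinarith
    _ ≤ _ := by gcongr

theorem factorial_le_exp (N : ℕ) (hN : 160000 ≤ N) :
    (N.factorial : ℝ) ≤ Real.exp (N / 200) ^ N := by
  calc (N.factorial : ℝ) ≤ (N : ℝ) ^ N := by exact_mod_cast Nat.factorial_le_pow N
    _ ≤ _ := by
      have := cast_le_exp_div N hN
      gcongr

theorem exp_add_add_pow (a b c : ℝ) (N : ℕ) :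
    Real.exp (a + (b + c)) ^ N = Real.exp a ^ N * (Real.exp b ^ N * Real.exp c ^ N) := by
  rw [Real.exp_add, Real.exp_add, mul_pow, mul_pow]

section Core
variable {R : Type*} [CommRing R]

set_option maxHeartbeats 1000000 in
/-- `(A / B) ^ q` and `A' / B'` are not too close: otherwise the interpolation determinant, an element
of `R` which is nonzero by the zero estimate, would violate the Liouville inequality. The parameters
`h1`, `h2` bound logarithmic heights, and `L` is of the order of `log q`. -/
theorem real_interpolation (ea : R →+* ℝ) (eb : R →+* ℂ) (hLiou : ∀ x, ea x ≠ 0 → 1 ≤ |ea x| * ‖eb x‖ ^ 2)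
    (A B A' B' : R) (hA0 : 0 < ea A) (hB0 : 0 < ea B) (hA0' : 0 < ea A') (hB0' : 0 < ea B')
    (hne : ea A ≠ ea B) (h1 h2 L q : ℕ) (hh1 : 1 ≤ h1) (hh2 : 1 ≤ h2) (hL : 160 ≤ L)
    (hA : ea A ≤ Real.exp h1) (hB : ea B ≤ Real.exp h1)
    (hA' : ea A' ≤ Real.exp h2) (hB' : ea B' ≤ Real.exp h2)
    (kA : ‖eb A‖ ≤ Real.exp h1) (kB : ‖eb B‖ ≤ Real.exp h1)
    (kA' : ‖eb A'‖ ≤ Real.exp h2) (kB' : ‖eb B'‖ ≤ Real.exp h2)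
    (hRq : 208 * h2 * L ≤ q) (hZ : (26 * h1 * L * q : ℝ) ≤ Real.exp (L / 16))
    (Λ : ℝ) (hΛ : ea A' / ea B' = (ea A / ea B) ^ q * Real.exp Λ)
    (hε : |Λ| ≤ Real.exp (-(5300 * h1 * h2 * L ^ 2))) : False := by
  obtain ⟨S, hS⟩ : ∃ S, S = 26 * h1 * L := ⟨_, rfl⟩
  obtain ⟨K, hK⟩ : ∃ K, K = 5200 * h1 * h2 * L := ⟨_, rfl⟩
  obtain ⟨Rr, hRr⟩ : ∃ Rr, Rr = 208 * h2 * L := ⟨_, rfl⟩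
  rw [← hRr] at hRq
  obtain ⟨N, hN⟩ : ∃ N, N = K * L := ⟨_, rfl⟩
  obtain ⟨κ, hκ⟩ : ∃ κ : ℝ, κ = h1 * h2 * L ^ 2 := ⟨_, rfl⟩
  have r1 : (1 : ℝ) ≤ h1 := by exact_mod_cast hh1
  have r2 : (1 : ℝ) ≤ h2 := by exact_mod_cast hh2
  have rL : (160 : ℝ) ≤ L := by exact_mod_cast hL
  have rL2 : (25600 : ℝ) ≤ L ^ 2 := by nlinarith
  have r12 : (1 : ℝ) ≤ h1 * h2 := one_le_mul_of_one_le_of_one_le r1 r2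
  have hκ1 : (25600 : ℝ) ≤ κ := by
    rw [hκ]
    nlinarith
  have hNκ : (N : ℝ) = 5200 * κ := by
    rw [hN, hK, hκ]; push_cast; ring
  have hN1 : 160000 ≤ N := by
    have : (160000 : ℝ) ≤ N := by rw [hNκ]; linarith
    exact_mod_cast this
  have hKκ : (K : ℝ) ≤ 32.5 * κ := by
    have : (K : ℝ) * 160 ≤ K * L := by gcongr
    have h3 : (K : ℝ) * L = 5200 * κ := by rw [← hNκ, hN]; push_cast; ring
    linarith
  have hLRr : L ≤ Rr := by rw [hRr]; nlinarith
  have hKL : K * L ≤ (Rr - L) * S := by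
    have e1 : 200 * h2 * L ≤ Rr - L := by
      have : 200 * h2 * L + L ≤ 208 * h2 * L := by nlinarith
      omega
    calc K * L = 200 * h2 * L * (26 * h1 * L) := by rw [hK]; ring
      _ ≤ (Rr - L) * S := by rw [hS]; exact Nat.mul_le_mul_right _ e1
  obtain ⟨f, hf, hdet⟩ := exists_det ea A B A' B' q K L Rr S hRq hLRr hKL hA0 hB0 hA0' hB0' hne
  set F := (imat A B A' B' q K L f).det with hF
  obtain ⟨Z, hZdef⟩ : ∃ Z, Z = S * q := ⟨_, rfl⟩
  have hS1 : 0 < S := by rw [hS]; positivity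
  have hq1 : 0 < q := lt_of_lt_of_le (by omega) (hLRr.trans hRq)
  have hZ1 : 1 ≤ Z := by rw [hZdef]; exact Nat.mul_pos hS1 hq1
  have hZr : (Z : ℝ) ≤ Real.exp (L / 16) := by
    refine le_trans (le_of_eq ?_) hZ
    rw [hZdef, hS]; push_cast; ring
  have hzle : ∀ c, (f c).1 + (f c).2 * q ≤ Z := by
    intro c
    obtain ⟨u1, u2⟩ := hf c
    have : ((f c).2 + 1) * q ≤ S * q := Nat.mul_le_mul_right _ u2
    rw [add_mul, one_mul] at this
    omega
  have hcard : Fintype.card (Fin K × Fin L) = N := by simp [hN]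
  set H := Real.exp (L * (Rr * h1 + S * h2)) with hH
  -- the trivial bound at the complex place
  have hFb : ‖eb F‖ ≤ N.factorial * ((Z : ℝ) ^ K * H) ^ N := by
    rw [hF, RingHom.map_det, ← hcard]
    refine norm_det_le _ _ fun i c => ?_
    exact entry_norm_le eb A B A' B' q L K Rr S h1 h2 Z kA kB kA' kB' _ _ _ _ i.1.2 i.2.2
      (hf c).1 (hf c).2 (hzle c) hZ1
  -- at the real place, the entries are values of analytic functions of `z = r + s * q`
  set l := Real.log (ea A / ea B) with hl
  have hlu : Real.exp l = ea A / ea B := Real.exp_log (div_pos hA0 hB0)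
  have hlw : Real.exp (q * l + Λ) = ea A' / ea B' := by
    rw [Real.exp_add, Real.exp_nat_mul, hlu, hΛ]
  have lower : ∀ x : R, 0 < ea x → ‖eb x‖ ≤ Real.exp h2 → Real.exp (-(2 * h2)) ≤ ea x := by
    intro x hx hb
    have h := hLiou x hx.ne'
    rw [abs_of_pos hx] at h
    have h3 : ea x * ‖eb x‖ ^ 2 ≤ ea x * Real.exp (2 * h2) := by
      have : Real.exp (2 * h2) = Real.exp h2 ^ 2 := by
        rw [← Real.exp_nat_mul]; norm_cast
      rw [this]; gcongr
    rw [Real.exp_neg]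
    rw [inv_le_iff_one_le_mul₀ (Real.exp_pos _)]
    linarith
  have hql : |(q : ℝ) * l| ≤ 4 * h2 := by
    have l1 := lower A' hA0' kA'
    have l2 := lower B' hB0' kB'
    have hεle : |Λ| ≤ 1 := hε.trans (Real.exp_le_one_iff.2 (by
      have : (0 : ℝ) ≤ 5300 * h1 * h2 * L ^ 2 := by positivity
      linarith))
    have b1 : (q : ℝ) * l + Λ ≤ 3 * h2 := by
      rw [← Real.exp_le_exp, hlw, div_le_iff₀ hB0']
      calc ea A' ≤ Real.exp h2 := hA'
        _ = Real.exp (3 * h2) * Real.exp (-(2 * h2)) := by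
          rw [← Real.exp_add]; congr 1; ring
        _ ≤ _ := by gcongr
    have b2 : -(3 * h2 : ℝ) ≤ (q : ℝ) * l + Λ := by
      rw [← Real.exp_le_exp, hlw, le_div_iff₀ hB0']
      calc Real.exp (-(3 * h2)) * ea B' ≤ Real.exp (-(3 * h2)) * Real.exp h2 := by gcongr
        _ = Real.exp (-(2 * h2)) := by
          rw [← Real.exp_add]; congr 1; ring
        _ ≤ _ := l1
    have := abs_le.1 hεle
    rw [abs_le]
    constructor <;> linarith
  have hbd := analytic_det_bound K L N hN Z (4 * L * S * h2) S (by exact_mod_cast hZ1)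
    (fun c => (((f c).1 + (f c).2 * q : ℕ) : ℝ)) (fun c => ((f c).2 : ℝ))
    (fun c => ⟨by positivity, by exact_mod_cast hzle c⟩)
    (fun c => ⟨by positivity, by exact_mod_cast (hf c).2.le⟩) l Λ (by
      have : (L : ℝ) * |l| * (Z : ℝ) = L * S * |(q : ℝ) * l| := by
        rw [abs_mul, Nat.abs_cast, hZdef]; push_cast; ring
      rw [this]
      calc (L : ℝ) * S * |(q : ℝ) * l| ≤ L * S * (4 * h2) := by gcongr
        _ = _ := by ring) (by
      have e1 : (2 : ℝ) * L * S ≤ Real.exp (100 * κ) := by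
        have : (2 : ℝ) * L * S ≤ 52 * κ := by
          rw [hS, hκ]; push_cast
          have : (h1 : ℝ) * L ^ 2 * 1 ≤ h1 * L ^ 2 * h2 := by gcongr
          linarith
        have := Real.add_one_le_exp (100 * κ)
        linarith
      calc (2 : ℝ) * L * S * |Λ| ≤ Real.exp (100 * κ) * Real.exp (-(5300 * h1 * h2 * L ^ 2)) := by
            gcongr
        _ = Real.exp (-N) := by
            rw [← Real.exp_add, hNκ, hκ]; congr 1; ring)
  have hmat : ea.mapMatrix (imat A B A' B' q K L f) = Matrix.of fun i c =>
      (fun c => (ea B ^ (f c).1 * ea B' ^ (f c).2) ^ (L - 1)) c *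
      ((Matrix.of fun i c : Fin K × Fin L => ((((f c).1 + (f c).2 * q : ℕ) : ℝ)) ^ (i.1 : ℕ) *
        Real.exp ((i.2 : ℕ) * (l * (((f c).1 + (f c).2 * q : ℕ) : ℝ) + Λ * ((f c).2 : ℝ)))) i c) := by
    ext i c
    change ea (entry _ _ _ _ _ _ _ _ _ _) = _
    rw [entry_eq ea A B A' B' q L _ _ _ _ i.2.2 hB0.ne' hB0'.ne', ← hlu, ← hlw,
      ← Real.exp_nat_mul, ← Real.exp_nat_mul, ← Real.exp_add, ← Real.exp_nat_mul]
    simp only [Matrix.of_apply]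
    congr 3
    push_cast
    ring
  have hcol : |∏ c, (ea B ^ (f c).1 * ea B' ^ (f c).2) ^ (L - 1)| ≤ H ^ N := by
    rw [Finset.abs_prod]
    refine (Finset.prod_le_prod (fun _ _ => abs_nonneg _) (g := fun _ => H) fun c _ => ?_).trans ?_
    · rw [abs_of_pos (by positivity)]
      calc _ ≤ (Real.exp h1 ^ (f c).1 * Real.exp h2 ^ (f c).2) ^ (L - 1) := by gcongr
        _ = Real.exp (((f c).1 * h1 + (f c).2 * h2)) ^ (L - 1) := by
          rw [← Real.exp_nat_mul, ← Real.exp_nat_mul, ← Real.exp_add]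
        _ ≤ Real.exp (Rr * h1 + S * h2) ^ (L - 1) := by
          have := (hf c).1.le
          have := (hf c).2.le
          gcongr
        _ ≤ Real.exp (Rr * h1 + S * h2) ^ L :=
          pow_le_pow_right₀ (Real.one_le_exp (by positivity)) (by omega)
        _ = _ := by rw [← Real.exp_nat_mul]
    · simp only [Finset.prod_const, Finset.card_univ, hcard, le_refl]
  have hFa : |ea F| * Real.exp 1 ^ (∑ k ∈ range N, k) ≤ H ^ N * (N.factorial *
      (3 * (Real.exp 1 * Z) ^ K * Real.exp (Real.exp 1 * (4 * L * S * h2))) ^ N) := by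
    rw [hF, RingHom.map_det, hmat, Matrix.det_mul_row, abs_mul, mul_assoc]
    exact mul_le_mul hcol hbd (by positivity) (by positivity)
  have hfin := hLiou F hdet
  have hfac := factorial_le_exp N hN1
  have hZK : (Z : ℝ) ^ K ≤ Real.exp (N / 16) := by
    calc (Z : ℝ) ^ K ≤ Real.exp (L / 16) ^ K := by gcongr
      _ = _ := by
        rw [← Real.exp_nat_mul, hN]; congr 1; push_cast; ring
  have hHe : H = Real.exp (234 * κ) := by
    rw [hH, hRr, hS, hκ]; congr 1; push_cast; ring
  have h3 : 3 * (Real.exp 1 * Z) ^ K * Real.exp (Real.exp 1 * (4 * L * S * h2)) ≤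
      Real.exp (2 + K + N / 16 + 283 * κ) := by
    rw [mul_pow, Real.exp_add, Real.exp_add, Real.exp_add, ← Real.exp_nat_mul, mul_one, ← mul_assoc]
    have e1 : (3 : ℝ) ≤ Real.exp 2 := by
      have := Real.add_one_le_exp (2 : ℝ); linarith
    have e2 : Real.exp 1 * (4 * L * S * h2) ≤ 283 * κ := by
      have : (4 : ℝ) * L * S * h2 = 104 * κ := by rw [hS, hκ]; push_cast; ring
      rw [this]
      have := mul_le_mul_of_nonneg_right Real.exp_one_lt_d9.le (by linarith : (0 : ℝ) ≤ κ)
      linarith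
    gcongr
  have h4 : |ea F| * Real.exp 1 ^ (∑ k ∈ range N, k) ≤
      Real.exp (234 * κ + (N / 200 + (2 + K + N / 16 + 283 * κ))) ^ N := by
    refine hFa.trans ?_
    rw [exp_add_add_pow, hHe]
    gcongr
  have h5 : ‖eb F‖ ≤ Real.exp (N / 200 + (N / 16 + 234 * κ)) ^ N := by
    refine hFb.trans ?_
    rw [exp_add_add_pow, mul_pow, hHe]
    gcongr
  have h6 : Real.exp 1 ^ (∑ k ∈ range N, k) ≤
      Real.exp (234 * κ + (N / 200 + (2 + K + N / 16 + 283 * κ))) ^ N *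
      (Real.exp (N / 200 + (N / 16 + 234 * κ)) ^ N) ^ 2 := by
    calc Real.exp 1 ^ (∑ k ∈ range N, k) = Real.exp 1 ^ (∑ k ∈ range N, k) * 1 := by ring
      _ ≤ Real.exp 1 ^ (∑ k ∈ range N, k) * (|ea F| * ‖eb F‖ ^ 2) := by gcongr
      _ = (|ea F| * Real.exp 1 ^ (∑ k ∈ range N, k)) * ‖eb F‖ ^ 2 := by ring
      _ ≤ _ := by gcongr
  rw [← Real.exp_nat_mul, ← Real.exp_nat_mul, ← Real.exp_nat_mul, ← Real.exp_nat_mul,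
    ← Real.exp_add, Real.exp_le_exp] at h6
  have hsum : ((∑ k ∈ range N, k : ℕ) : ℝ) = N * (N - 1) / 2 := by
    have := Finset.sum_range_id_mul_two N
    have h8 : ((∑ k ∈ range N, k : ℕ) : ℝ) * 2 = N * ((N - 1 : ℕ) : ℝ) := by exact_mod_cast this
    rw [Nat.cast_sub (by omega)] at h8
    push_cast at h8 ⊢
    linarith
  rw [hsum] at h6
  have hNpos : (0 : ℝ) < N := by rw [hNκ]; linarith
  push_cast at h6
  have h9 : (N : ℝ) * ((N - 1) / 2) ≤ N * (234 * κ + (N / 200 + (2 + K + N / 16 + 283 * κ)) +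
      2 * (N / 200 + (N / 16 + 234 * κ))) := by linarith
  have h10 := le_of_mul_le_mul_left h9 hNpos
  rw [hNκ] at h10
  linarith

/-- The binomial expansion of `z ^ a * (1 + p * y) ^ z`, in which the coefficients become divisible by
high powers of `p`. -/
theorem padic_expand (p y : R) (a : ℕ) : ∃ c : ℕ → R, ∀ E z : ℕ, z < E →
    (z : R) ^ a * (1 + p * y) ^ z =
      ∑ m ∈ range E, p ^ (m - a) * c m * (Nat.choose z m : R) := by
  induction a with
  | zero =>
    refine ⟨fun m => y ^ m, fun E z hz => ?_⟩
    rw [pow_zero, one_mul, add_comm, add_pow]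
    have hsub : range (z + 1) ⊆ range E := by
      intro x hx; simp only [mem_range] at hx ⊢; omega
    rw [← Finset.sum_subset hsub]
    · refine Finset.sum_congr rfl fun m _ => ?_
      simp [mul_pow]
    · intro m _ hm
      rw [Nat.choose_eq_zero_of_lt (by simp only [mem_range] at hm; omega)]
      simp
  | succ a ih =>
    obtain ⟨c, hc⟩ := ih
    refine ⟨fun m => m * ((if m ≤ a then 1 else p) * c m + c (m - 1)), fun E z hz => ?_⟩
    rw [pow_succ, mul_assoc, mul_comm (z : R), ← mul_assoc, hc E z hz, Finset.sum_mul]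
    have key : ∀ m, (Nat.choose z m : R) * z = m * Nat.choose z m +
        ((m + 1 : ℕ) : R) * Nat.choose z (m + 1) := by
      intro m
      have h := Nat.choose_succ_right_eq z m
      rcases le_or_gt m z with hm | hm
      · have : Nat.choose z m * z = m * Nat.choose z m + (m + 1) * Nat.choose z (m + 1) := by
          have e : z = m + (z - m) := by omega
          calc Nat.choose z m * z = Nat.choose z m * (m + (z - m)) := by rw [← e]
            _ = m * Nat.choose z m + Nat.choose z m * (z - m) := by ring
            _ = _ := by rw [← h]; ring
        exact_mod_cast congrArg (Nat.cast : ℕ → R) this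
      · rw [Nat.choose_eq_zero_of_lt hm, Nat.choose_eq_zero_of_lt (by omega)]
        simp
    let F : ℕ → R := fun m => p ^ (m - 1 - a) * c (m - 1) * (m * Nat.choose z m)
    have hshift : ∑ m ∈ range E, p ^ (m - a) * c m * (((m + 1 : ℕ) : R) * Nat.choose z (m + 1)) =
        ∑ m ∈ range E, F m := by
      have s1 := Finset.sum_range_succ F E
      have s2 := Finset.sum_range_succ' F E
      have f0 : F 0 = 0 := by simp [F]
      have fE : F E = 0 := by simp [F, Nat.choose_eq_zero_of_lt hz]
      rw [f0, add_zero] at s2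
      rw [fE, add_zero] at s1
      rw [← s1, s2]
      refine Finset.sum_congr rfl fun m _ => ?_
      simp [F]
    calc _ = ∑ m ∈ range E, p ^ (m - a) * c m * (m * Nat.choose z m) +
        ∑ m ∈ range E, p ^ (m - a) * c m * (((m + 1 : ℕ) : R) * Nat.choose z (m + 1)) := by
          rw [← Finset.sum_add_distrib]
          refine Finset.sum_congr rfl fun m _ => ?_
          rw [mul_assoc, key]; ring
      _ = _ := by
          rw [hshift, ← Finset.sum_add_distrib]
          refine Finset.sum_congr rfl fun m _ => ?_
          simp only [F]
          have e1 : p ^ (m - a) = p ^ (m - (a + 1)) * (if m ≤ a then 1 else p) := by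
            split_ifs with h
            · rw [show m - a = 0 by omega, show m - (a + 1) = 0 by omega]; simp
            · rw [← pow_succ]; congr 1; omega
          rw [e1, show m - 1 - a = m - (a + 1) by omega]
          ring

set_option maxHeartbeats 1000000 in
/-- `B' * A ^ q` and `A'` are not too close `p`-adically, for `A` congruent to `1` modulo `p`. -/
theorem padic_interpolation (ea : R →+* ℝ) (eb : R →+* ℂ) (hLiou : ∀ x, ea x ≠ 0 → 1 ≤ |ea x| * ‖eb x‖ ^ 2)
    (p : ℕ) (hp : 2 ≤ p) (A A' B' : R) (hA0 : 0 < ea A) (hA0' : 0 < ea A') (hB0' : 0 < ea B')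
    (hne : ea A ≠ 1) (h1 h2 L q : ℕ) (hh1 : 1 ≤ h1) (hh2 : 1 ≤ h2) (hL : 160 ≤ L)
    (hA : ea A ≤ Real.exp h1)
    (hA' : ea A' ≤ Real.exp h2) (hB' : ea B' ≤ Real.exp h2)
    (kA : ‖eb A‖ ≤ Real.exp h1)
    (kA' : ‖eb A'‖ ≤ Real.exp h2) (kB' : ‖eb B'‖ ≤ Real.exp h2)
    (hRq : 13 * h2 * L ≤ q) (hZ : (13 * h1 * L * q : ℝ) ≤ Real.exp (L / 16))
    (hpA : (p : R) ∣ A - 1) (X : ℕ) (hX : (p : R) ^ X ∣ A' - B' * A ^ q) :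
    X < 156 * h1 * h2 * L ^ 2 := by
  by_contra hXN
  push Not at hXN
  obtain ⟨S, hS⟩ : ∃ S, S = 13 * h1 * L := ⟨_, rfl⟩
  obtain ⟨K, hK⟩ : ∃ K, K = 156 * h1 * h2 * L := ⟨_, rfl⟩
  obtain ⟨Rr, hRr⟩ : ∃ Rr, Rr = 13 * h2 * L := ⟨_, rfl⟩
  rw [← hRr] at hRq
  obtain ⟨N, hN⟩ : ∃ N, N = K * L := ⟨_, rfl⟩
  have hXN' : N ≤ X := by rw [hN, hK]; linarith
  obtain ⟨κ, hκ⟩ : ∃ κ : ℝ, κ = h1 * h2 * L ^ 2 := ⟨_, rfl⟩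
  have r1 : (1 : ℝ) ≤ h1 := by exact_mod_cast hh1
  have r2 : (1 : ℝ) ≤ h2 := by exact_mod_cast hh2
  have rL : (160 : ℝ) ≤ L := by exact_mod_cast hL
  have rL2 : (25600 : ℝ) ≤ L ^ 2 := by nlinarith
  have r12 : (1 : ℝ) ≤ h1 * h2 := one_le_mul_of_one_le_of_one_le r1 r2
  have hκ1 : (25600 : ℝ) ≤ κ := by
    rw [hκ]
    nlinarith
  have hNκ : (N : ℝ) = 156 * κ := by
    rw [hN, hK, hκ]; push_cast; ring
  have hN1 : 160000 ≤ N := by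
    have : (160000 : ℝ) ≤ N := by rw [hNκ]; linarith
    exact_mod_cast this
  have hKκ : (K : ℝ) ≤ κ := by
    have : (K : ℝ) * 160 ≤ K * L := by gcongr
    have h3 : (K : ℝ) * L = 156 * κ := by rw [← hNκ, hN]; push_cast; ring
    linarith
  have hLRr : L ≤ Rr := by rw [hRr]; nlinarith
  have hKL : K * L ≤ (Rr - L) * S := by
    have e1 : 12 * h2 * L ≤ Rr - L := by
      have : 12 * h2 * L + L ≤ 13 * h2 * L := by nlinarith
      omega
    calc K * L = 12 * h2 * L * (13 * h1 * L) := by rw [hK]; ring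
      _ ≤ (Rr - L) * S := by rw [hS]; exact Nat.mul_le_mul_right _ e1
  obtain ⟨f, hf, hdet⟩ := exists_det ea A 1 A' B' q K L Rr S hRq hLRr hKL hA0 (by simp)
    hA0' hB0' (by simpa using hne)
  set F := (imat A 1 A' B' q K L f).det with hF
  obtain ⟨Z, hZdef⟩ : ∃ Z, Z = S * q := ⟨_, rfl⟩
  have hS1 : 0 < S := by rw [hS]; positivity
  have hq1 : 0 < q := lt_of_lt_of_le (by omega) (hLRr.trans hRq)
  have hZ1 : 1 ≤ Z := by rw [hZdef]; exact Nat.mul_pos hS1 hq1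
  have hZr : (Z : ℝ) ≤ Real.exp (L / 16) := by
    refine le_trans (le_of_eq ?_) hZ
    rw [hZdef, hS]; push_cast; ring
  have hzle : ∀ c, (f c).1 + (f c).2 * q ≤ Z := by
    intro c
    obtain ⟨u1, u2⟩ := hf c
    have : ((f c).2 + 1) * q ≤ S * q := Nat.mul_le_mul_right _ u2
    rw [add_mul, one_mul] at this
    omega
  have hcard : Fintype.card (Fin K × Fin L) = N := by simp [hN]
  set H := Real.exp (L * (Rr * h1 + S * h2)) with hH
  have hone : (1 : ℝ) ≤ Real.exp h1 := Real.one_le_exp (by positivity)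
  have hFb : ‖eb F‖ ≤ N.factorial * ((Z : ℝ) ^ K * H) ^ N := by
    rw [hF, RingHom.map_det, ← hcard]
    refine norm_det_le _ _ fun i c => ?_
    exact entry_norm_le eb A 1 A' B' q L K Rr S h1 h2 Z kA (by simp) kA' kB' _ _ _ _
      i.1.2 i.2.2 (hf c).1 (hf c).2 (hzle c) hZ1
  have hFa : |ea F| ≤ N.factorial * ((Z : ℝ) ^ K * H) ^ N := by
    rw [← Real.norm_eq_abs, hF, RingHom.map_det, ← hcard]
    refine norm_det_le _ _ fun i c => ?_
    exact entry_norm_le ea A 1 A' B' q L K Rr S h1 h2 Z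
      (by rwa [Real.norm_of_nonneg hA0.le]) (by simp)
      (by rwa [Real.norm_of_nonneg hA0'.le]) (by rwa [Real.norm_of_nonneg hB0'.le]) _ _ _ _
      i.1.2 i.2.2 (hf c).1 (hf c).2 (hzle c) hZ1
  -- divisibility of the determinant
  set M := ∑ k ∈ range N, (k - K) with hM
  have hdvd : (p : R) ^ M ∣ F := by
    have hAj : ∀ j : ℕ, ∃ y, A ^ j = 1 + p * y := by
      intro j
      obtain ⟨y, hy⟩ := hpA.trans (sub_one_dvd_pow_sub_one A j)
      exact ⟨y, by rw [← hy]; ring⟩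
    choose y hy using hAj
    choose c hc using fun (i : Fin K × Fin L) => padic_expand (p : R) (y i.2) i.1
    have herr : ∀ i k : Fin K × Fin L, ∃ d, entry A 1 A' B' q L i.1 i.2 (f k).1 (f k).2 =
        (((f k).1 + (f k).2 * q : ℕ) : R) ^ (i.1 : ℕ) *
          (A ^ (i.2 : ℕ)) ^ ((f k).1 + (f k).2 * q) * B' ^ ((f k).2 * (L - 1)) +
          (p : R) ^ X * d := by
      intro i k
      set r := (f k).1
      set s := (f k).2
      set j := (i.2 : ℕ)
      have hj : j < L := i.2.2
      obtain ⟨d, hd⟩ := hX.trans (sub_dvd_pow_sub_pow A' (B' * A ^ q) (s * j))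
      refine ⟨d * ((r + s * q : ℕ) : R) ^ (i.1 : ℕ) * A ^ (r * j) * B' ^ (s * (L - 1 - j)), ?_⟩
      have e1 : A' ^ (s * j) = (B' * A ^ q) ^ (s * j) + (p : R) ^ X * d := by rw [← hd]; ring
      have e2 : B' ^ (s * (L - 1)) = B' ^ (s * j) * B' ^ (s * (L - 1 - j)) := by
        rw [← pow_add]; congr 1; rw [← mul_add]; congr 1; omega
      rw [entry, mul_pow, ← pow_mul, ← pow_mul, e1, e2, one_pow, one_mul, ← pow_mul]
      rw [mul_pow, ← pow_mul, ← pow_mul]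
      have e3 : A ^ (j * (r + s * q)) = A ^ (r * j) * A ^ (q * (s * j)) := by
        rw [← pow_add]; congr 1; ring
      rw [e3]
      ring
    choose d hd using herr
    refine det_dvd hcard (p : R) (Z + 1) K X hXN'
      (fun i k => (p : R) ^ ((k : ℕ) - (i.1 : ℕ) - ((k : ℕ) - K)) * c i k)
      (fun m k => (Nat.choose ((f k).1 + (f k).2 * q) m : R) * B' ^ ((f k).2 * (L - 1)))
      d _ ?_
    intro i k
    change entry _ _ _ _ _ _ _ _ _ _ = _
    rw [hd, hy, hc i (Z + 1) _ (Nat.lt_succ_of_le (hzle k)), Finset.sum_mul]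
    congr 1
    rw [← Fin.sum_univ_eq_sum_range (fun m => (p : R) ^ (m - (i.1 : ℕ)) * c i m *
      (Nat.choose ((f k).1 + (f k).2 * q) m : R) * B' ^ ((f k).2 * (L - 1)))]
    refine Finset.sum_congr rfl fun m _ => ?_
    have hi := i.1.2
    rw [← mul_assoc ((p : R) ^ ((m : ℕ) - K)), ← pow_add,
      show (m : ℕ) - K + ((m : ℕ) - (i.1 : ℕ) - ((m : ℕ) - K)) = (m : ℕ) - (i.1 : ℕ) by omega]
    ring
  obtain ⟨G, hG⟩ := hdvd
  have hpM : (0 : ℝ) < (p : ℝ) ^ M := by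
    have : (0 : ℝ) < p := by exact_mod_cast (by omega : 0 < p)
    positivity
  have hGne : ea G ≠ 0 := by
    intro h0
    apply hdet
    rw [hG, map_mul, h0, mul_zero]
  have hfin := hLiou G hGne
  have haG : |ea F| = (p : ℝ) ^ M * |ea G| := by
    rw [hG, map_mul, map_pow, map_natCast, abs_mul, abs_of_pos hpM]
  have hbG : ‖eb F‖ = (p : ℝ) ^ M * ‖eb G‖ := by
    rw [hG, map_mul, map_pow, map_natCast, norm_mul, norm_pow]
    simp
  set U : ℝ := N.factorial * ((Z : ℝ) ^ K * H) ^ N with hU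
  have hU0 : 0 ≤ U := by positivity
  have hcube : ((p : ℝ) ^ M) ^ 3 ≤ U ^ 3 := by
    calc ((p : ℝ) ^ M) ^ 3 = ((p : ℝ) ^ M) ^ 3 * 1 := by ring
      _ ≤ ((p : ℝ) ^ M) ^ 3 * (|ea G| * ‖eb G‖ ^ 2) := by gcongr
      _ = |ea F| * ‖eb F‖ ^ 2 := by rw [haG, hbG]; ring
      _ ≤ U * U ^ 2 := by gcongr
      _ = U ^ 3 := by ring
  have hpU : (p : ℝ) ^ M ≤ U := by
    exact le_of_pow_le_pow_left₀ (by norm_num) hU0 hcube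
  have hfac := factorial_le_exp N hN1
  have hZK : (Z : ℝ) ^ K ≤ Real.exp (N / 16) := by
    calc (Z : ℝ) ^ K ≤ Real.exp (L / 16) ^ K := by gcongr
      _ = _ := by
        rw [← Real.exp_nat_mul, hN]; congr 1; push_cast; ring
  have hHe : H = Real.exp (26 * κ) := by
    rw [hH, hRr, hS, hκ]; congr 1; push_cast; ring
  have hU2 : U ≤ Real.exp (N / 200 + (N / 16 + 26 * κ)) ^ N := by
    rw [hU, exp_add_add_pow, mul_pow, hHe]
    gcongr
  have h2M : Real.exp (0.69 * M) ≤ (p : ℝ) ^ M := by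
    have e1 : Real.exp (0.69 : ℝ) ≤ p := by
      have : Real.exp (0.69 : ℝ) ≤ 2 := by
        rw [← Real.le_log_iff_exp_le (by norm_num)]
        have := Real.log_two_gt_d9
        linarith
      have h2 : (2 : ℝ) ≤ p := by exact_mod_cast hp
      linarith
    rw [mul_comm, Real.exp_nat_mul]
    gcongr
  have hMge : (N : ℝ) * ((N - 1) / 2 - K) ≤ M := by
    have h8 : (∑ k ∈ range N, ((k : ℝ) - K)) ≤ M := by
      rw [hM]; push_cast
      refine Finset.sum_le_sum fun k _ => ?_
      have : k ≤ (k - K) + K := by omega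
      have : (k : ℝ) ≤ ((k - K : ℕ) : ℝ) + K := by exact_mod_cast this
      linarith
    rw [Finset.sum_sub_distrib] at h8
    have := Finset.sum_range_id_mul_two N
    have h9 : ((∑ k ∈ range N, k : ℕ) : ℝ) * 2 = N * ((N - 1 : ℕ) : ℝ) := by exact_mod_cast this
    rw [Nat.cast_sub (by omega)] at h9
    push_cast at h9
    simp only [Finset.sum_const, card_range, nsmul_eq_mul] at h8
    linarith
  have h10 := h2M.trans (hpU.trans hU2)
  rw [← Real.exp_nat_mul, Real.exp_le_exp] at h10
  have hNpos : (0 : ℝ) < N := by rw [hNκ]; linarith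
  have h11 : (N : ℝ) * (0.69 * ((N - 1) / 2 - K)) ≤ N * (N / 200 + (N / 16 + 26 * κ)) := by
    linarith
  have h12 := le_of_mul_le_mul_left h11 hNpos
  rw [hNκ] at h12
  linarith

end Core

end

/-! ### Lower bounds for linear forms in the logarithms of 2, 3 and `α` -/

section
open Finset

namespace Trib

/-- Simultaneous approximation of `x / m` and `y / m` with a common denominator `t ≤ J ^ 2`, by the
pigeonhole principle. -/
theorem dirichlet (x y m J : ℕ) (hx : x ≤ m) (hy : y ≤ m) (hm : 1 ≤ m) (hJ : 1 ≤ J) :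
    ∃ t k l : ℕ, 1 ≤ t ∧ t ≤ J ^ 2 ∧ k ≤ t ∧ l ≤ t ∧
      J * |(t * x : ℤ) - k * m| ≤ m ∧ J * |(t * y : ℤ) - l * m| ≤ m := by
  have key : ∀ z ≤ m, ∀ i j : ℕ, i < j → J * ((i * z) % m) / m = J * ((j * z) % m) / m →
      ∃ k : ℕ, k ≤ j - i ∧ J * |(((j - i : ℕ) : ℤ) * z) - k * m| ≤ m := by
    intro z hz i j hij h
    have h0 : i * z ≤ j * z := Nat.mul_le_mul_right _ hij.le
    have h1 : i * z / m ≤ j * z / m := Nat.div_le_div_right h0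
    refine ⟨j * z / m - i * z / m, ?_, ?_⟩
    · have : j * z / m ≤ i * z / m + (j - i) := by
        rw [← Nat.add_mul_div_right _ _ hm]
        apply Nat.div_le_div_right
        obtain ⟨d, rfl⟩ := Nat.exists_eq_add_of_lt hij
        have : i + d + 1 - i = d + 1 := by omega
        rw [this]
        nlinarith
      omega
    · have e1 := Nat.div_add_mod (i * z) m
      have e2 := Nat.div_add_mod (j * z) m
      have f1 := Nat.div_add_mod (J * ((i * z) % m)) m
      have f2 := Nat.div_add_mod (J * ((j * z) % m)) m
      have g1 := Nat.mod_lt (J * ((i * z) % m)) hm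
      have g2 := Nat.mod_lt (J * ((j * z) % m)) hm
      rw [h] at f1
      rw [← abs_of_nonneg (Int.natCast_nonneg J), ← abs_mul]
      zify [hij.le, h1] at e1 e2 f1 f2 g1 g2 ⊢
      have : (J : ℤ) * (((j : ℤ) - i) * z - ((j : ℤ) * z / m - (i : ℤ) * z / m) * m) =
        (J * ((j : ℤ) * z % m)) % m - (J * ((i : ℤ) * z % m)) % m := by
        linear_combination f1 - f2 + (J : ℤ) * e1 - (J : ℤ) * e2
      rw [this, abs_le]
      have p1 := Int.emod_nonneg (J * ((j : ℤ) * z % m)) (by omega : (m : ℤ) ≠ 0)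
      have p2 := Int.emod_nonneg (J * ((i : ℤ) * z % m)) (by omega : (m : ℤ) ≠ 0)
      constructor <;> linarith
  have hmap : ∀ i ∈ Finset.range (J ^ 2 + 1),
      (J * ((i * x) % m) / m, J * ((i * y) % m) / m) ∈ Finset.range J ×ˢ Finset.range J := by
    intro i _
    simp only [mem_product, mem_range]
    constructor <;>
    · rw [Nat.div_lt_iff_lt_mul hm]
      exact Nat.mul_lt_mul_of_pos_left (Nat.mod_lt _ hm) hJ
  obtain ⟨i, hi, j, hj, hne, he⟩ := Finset.exists_ne_map_eq_of_card_lt_of_maps_to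
    (by simp [sq]) hmap
  simp only [mem_range] at hi hj
  simp only [Prod.mk.injEq] at he
  rcases lt_or_gt_of_ne hne with h | h
  · obtain ⟨k, hk, hk2⟩ := key x hx i j h he.1
    obtain ⟨l, hl, hl2⟩ := key y hy i j h he.2
    exact ⟨j - i, k, l, by omega, by omega, hk, hl, hk2, hl2⟩
  · obtain ⟨k, hk, hk2⟩ := key x hx j i h he.1.symm
    obtain ⟨l, hl, hl2⟩ := key y hy j i h he.2.symm
    exact ⟨i - j, k, l, by omega, by omega, hk, hl, hk2, hl2⟩

theorem six_pow_le (n : ℕ) : (6 : ℝ) ^ n ≤ Real.exp (2 * n) := by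
  have h : (6 : ℝ) ≤ Real.exp 2 := by
    have : Real.exp 2 = Real.exp 1 ^ 2 := by rw [← Real.exp_nat_mul]; norm_num
    rw [this]
    nlinarith [Real.exp_one_gt_d9]
  calc (6 : ℝ) ^ n ≤ Real.exp 2 ^ n := by gcongr
    _ = _ := by rw [← Real.exp_nat_mul]; congr 1; ring

theorem α_pow_le_exp (n : ℕ) : α ^ n ≤ Real.exp n := by
  calc α ^ n ≤ Real.exp 1 ^ n := by
        have := α_pos
        have h2 := α_bounds.2
        have := Real.exp_one_gt_d9
        gcongr
        linarith
    _ = _ := by rw [← Real.exp_nat_mul]; simp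

theorem two_three_le (i j n : ℕ) (hi : i ≤ n) (hj : j ≤ n) :
    (2 : ℝ) ^ i * 3 ^ j ≤ Real.exp (2 * n) := by
  calc (2 : ℝ) ^ i * 3 ^ j ≤ 2 ^ n * 3 ^ n := by gcongr <;> norm_num
    _ = 6 ^ n := by rw [← mul_pow]; norm_num
    _ ≤ _ := six_pow_le n

theorem norm_eb_a_pow (n : ℕ) : ‖eb (a ^ n)‖ ≤ 1 := by
  rw [map_pow, eb_a, norm_pow]
  exact pow_le_one₀ (norm_nonneg _) (by linarith [norm_β_lt])

/-- With `q = m / t`, the exponent `x` is `q * k` up to a small remainder. -/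
theorem rem_bound (x m J t k : ℕ) (ht : 1 ≤ t) (hk : k ≤ t) (hJ : 1 ≤ J)
    (h : J * |(t * x : ℤ) - k * m| ≤ m) :
    ((x : ℤ) - (m / t : ℕ) * k).natAbs ≤ m / (t * J) + t := by
  have h1 : m / (t * J) + t = (m + t * (t * J)) / (t * J) := by
    rw [Nat.add_mul_div_right _ _ (by positivity)]
  rw [h1, Nat.le_div_iff_mul_le (by positivity)]
  have e := Nat.div_add_mod m t
  have g := Nat.mod_lt m ht
  set q : ℤ := ((m / t : ℕ) : ℤ) with hq
  have e' : (t : ℤ) * q + (m % t : ℕ) = m := by rw [hq]; exact_mod_cast e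
  have hid : (t : ℤ) * (x - q * k) = (t * x - k * m) + k * (m % t : ℕ) := by
    linear_combination (-(k : ℤ)) * e'
  have hb : (t : ℤ) * |x - q * k| ≤ |(t * x : ℤ) - k * m| + t * t := by
    have : (t : ℤ) * |x - q * k| = |(t : ℤ) * (x - q * k)| := by
      rw [abs_mul, abs_of_nonneg (Int.natCast_nonneg t)]
    rw [this, hid]
    refine (abs_add_le _ _).trans ?_
    rw [abs_of_nonneg (by positivity : (0:ℤ) ≤ k * (m % t : ℕ))]
    have : (k : ℤ) * (m % t : ℕ) ≤ t * t := by
      have : k * (m % t) ≤ t * t := Nat.mul_le_mul hk g.le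
      exact_mod_cast this
    linarith
  have hJ' : (0 : ℤ) ≤ J := by positivity
  have h3 := mul_le_mul_of_nonneg_left hb hJ'
  have h4 : (((x : ℤ) - q * k).natAbs : ℤ) * (t * J) ≤ m + t * (t * J) := by
    rw [Int.natCast_natAbs]
    linarith
  exact_mod_cast h4

theorem zsplit (z : ℤ) (b : ℝ) : b ^ z = b ^ z.toNat / b ^ (-z).toNat := by
  rcases le_total 0 z with h | h
  · have : (-z).toNat = 0 := by omega
    rw [this, pow_zero, div_one]
    conv_lhs => rw [← Int.toNat_of_nonneg h]
    exact zpow_natCast _ _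
  · have h1 : z.toNat = 0 := by omega
    rw [h1, pow_zero, one_div, ← zpow_natCast, Int.toNat_of_nonneg (by omega), zpow_neg, inv_inv]

set_option maxHeartbeats 1000000 in
/-- A lower bound for the linear form `Λ = x log 2 + y log 3 + log (ξ1 / ξ2) - m log α`. By Dirichlet
approximation `x = q k + r`, `y = q l + s`, `m = q t + u` with small remainders, and
`real_interpolation` applies to `2 ^ k * 3 ^ l / α ^ t`, of small height, and its `q`-th power. -/
theorem smooth_log_lower (ξ1 ξ2 : TR) (p1 : 0 < ea ξ1) (p2 : 0 < ea ξ2) (V x y m J L : ℕ)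
    (h1 : ea ξ1 ≤ Real.exp V) (h2 : ea ξ2 ≤ Real.exp V)
    (k1 : ‖eb ξ1‖ ≤ Real.exp V) (k2 : ‖eb ξ2‖ ≤ Real.exp V)
    (hx : x ≤ m) (hy : y ≤ m) (hL : 160 ≤ L) (hJ : 1000 * L ≤ J) (hV : V * J ^ 3 ≤ m)
    (hm : 6 * J ^ 5 ≤ m) (hZ : (52 * L * m : ℝ) ≤ Real.exp (L / 16)) (Λ : ℝ)
    (hΛ : 2 ^ x * 3 ^ y * ea ξ1 = ea ξ2 * α ^ m * Real.exp Λ) :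
    Real.exp (-(37100 * L ^ 2 * (m / J))) < |Λ| := by
  by_contra hcon
  push Not at hcon
  have hJ1 : 1 ≤ J := by omega
  have hm1 : 1 ≤ m := by
    have : 1 ≤ J ^ 5 := Nat.one_le_pow _ _ hJ1
    omega
  obtain ⟨t, k, l, ht, htJ, hk, hl, hk2, hl2⟩ := dirichlet x y m J hx hy hm1 hJ1
  have b2 := rem_bound x m J t k ht hk hJ1 hk2
  have b3 := rem_bound y m J t l ht hl hJ1 hl2
  set q := m / t with hq
  set r2 : ℤ := (x : ℤ) - q * k with hr2
  set r3 : ℤ := (y : ℤ) - q * l with hr3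
  set ρ := m / (t * J) + t with hρ
  set r0 := m % t with hr0
  have hr0t : r0 < t := Nat.mod_lt _ ht
  have hmq : t * q + r0 = m := Nat.div_add_mod m t
  set h2' := V + 2 * (m / (t * J)) + 3 * t with hh2
  have hdiv : m / (t * J) * (t * J) ≤ m := Nat.div_mul_le_self _ _
  have hJh : J * (2 * t * h2') ≤ 7 * m := by
    have q1 : J * t * V ≤ m := by
      calc J * t * V ≤ J * J ^ 2 * V := by gcongr
        _ = V * J ^ 3 := by ring
        _ ≤ m := hV
    have q2 : J * (t * t) * 6 ≤ m := by
      calc J * (t * t) * 6 ≤ J * (J ^ 2 * J ^ 2) * 6 := by gcongr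
        _ = 6 * J ^ 5 := by ring
        _ ≤ m := hm
    calc J * (2 * t * h2') = 2 * (J * t * V) + 4 * (m / (t * J) * (t * J)) + J * (t * t) * 6 := by
          rw [hh2]; ring
      _ ≤ 2 * m + 4 * m + m := by gcongr
      _ = 7 * m := by ring
  have i2 : r2.toNat ≤ ρ ∧ (-r2).toNat ≤ ρ := by omega
  have i3 : r3.toNat ≤ ρ ∧ (-r3).toNat ≤ ρ := by omega
  have hα := α_pos
  have eρ : Real.exp (2 * ρ) * Real.exp V ≤ Real.exp h2' := by
    rw [← Real.exp_add, Real.exp_le_exp]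
    rw [hh2, hρ]; push_cast
    have : (0 : ℝ) ≤ t := by positivity
    linarith
  have eρ' : Real.exp (2 * ρ) * Real.exp V * Real.exp t ≤ Real.exp h2' := by
    rw [← Real.exp_add, ← Real.exp_add, Real.exp_le_exp]
    rw [hh2, hρ]; push_cast
    linarith
  have ert : α ^ r0 ≤ Real.exp t := (α_pow_le_exp r0).trans (by
    rw [Real.exp_le_exp]; exact_mod_cast hr0t.le)
  have eb0 : ‖eb (a ^ r0)‖ ≤ Real.exp t := (norm_eb_a_pow r0).trans (Real.one_le_exp (by positivity))
  have h1t : α ^ t ≤ Real.exp (2 * t : ℕ) := (α_pow_le_exp t).trans (by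
    rw [Real.exp_le_exp]; push_cast; linarith [(Nat.cast_nonneg t : (0:ℝ) ≤ t)])
  have hkl : (2 : ℝ) ^ k * 3 ^ l ≤ Real.exp (2 * t : ℕ) := by
    push_cast; exact two_three_le k l t hk hl
  have s1 := two_three_le _ _ ρ i2.1 i3.1
  have s2 := two_three_le _ _ ρ i2.2 i3.2
  have hJR : (0 : ℝ) < J := by exact_mod_cast hJ1
  have hL2 : 208 * h2' * L ≤ q := by
    rw [hq, Nat.le_div_iff_mul_le ht]
    have : J * (208 * h2' * L * t) ≤ J * m := by
      calc J * (208 * h2' * L * t) = 104 * L * (J * (2 * t * h2')) := by ring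
        _ ≤ 104 * L * (7 * m) := by gcongr
        _ = 728 * L * m := by ring
        _ ≤ J * m := by gcongr; omega
    exact Nat.le_of_mul_le_mul_left this hJ1
  refine real_interpolation ea eb liouville (a ^ t) (2 ^ k * 3 ^ l) (2 ^ r2.toNat * 3 ^ r3.toNat * ξ1)
    (2 ^ (-r2).toNat * 3 ^ (-r3).toNat * ξ2 * a ^ r0) ?_ ?_ ?_ ?_ ?_ (2 * t) h2' L q (by omega)
    (by omega) hL ?_ ?_ ?_ ?_ ?_ ?_ ?_ ?_ hL2 ?_ Λ ?_ ?_
  · simp only [map_pow, ea_a]; positivity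
  · simp only [map_mul, map_pow, map_ofNat]; positivity
  · simp only [map_mul, map_pow, map_ofNat]; positivity
  · simp only [map_mul, map_pow, map_ofNat, ea_a]; positivity
  · have := α_pow_ne_nat t (2 ^ k * 3 ^ l) ht
    simp only [map_mul, map_pow, map_ofNat, ea_a]
    exact_mod_cast this
  · simpa using h1t
  · simp only [map_mul, map_pow, map_ofNat]; exact hkl
  · simp only [map_mul, map_pow, map_ofNat]
    refine le_trans ?_ eρ
    gcongr
  · simp only [map_mul, map_pow, map_ofNat, ea_a]
    refine le_trans ?_ eρ'
    gcongr
  · exact (norm_eb_a_pow t).trans (Real.one_le_exp (by positivity))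
  · simp only [map_mul, map_pow, map_ofNat, norm_mul, norm_pow, Complex.norm_ofNat]; exact hkl
  · simp only [map_mul, map_pow, map_ofNat, norm_mul, norm_pow, Complex.norm_ofNat]
    refine le_trans ?_ eρ
    gcongr
  · rw [map_mul, norm_mul]
    simp only [map_mul, map_pow, map_ofNat, norm_mul, norm_pow, Complex.norm_ofNat] at eb0 ⊢
    refine le_trans ?_ eρ'
    gcongr
  · refine le_trans ?_ hZ
    have : ((t * q : ℕ) : ℝ) ≤ m := by
      have : t * q ≤ m := by omega
      exact_mod_cast this
    push_cast at this ⊢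
    calc 26 * (2 * (t : ℝ)) * L * q = 52 * L * (t * q) := by ring
      _ ≤ 52 * L * m := by gcongr
  · simp only [map_mul, map_pow, map_ofNat, ea_a]
    have z2 := zsplit r2 2
    have z3 := zsplit r3 3
    have w2 : (2 : ℝ) ^ r2 = 2 ^ x / (2 ^ k) ^ q := by
      rw [hr2, zpow_sub₀ (by norm_num), ← pow_mul]; norm_cast; rw [mul_comm q k]
    have w3 : (3 : ℝ) ^ r3 = 3 ^ y / (3 ^ l) ^ q := by
      rw [hr3, zpow_sub₀ (by norm_num), ← pow_mul]; norm_cast; rw [mul_comm q l]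
    have hsplit : (2 : ℝ) ^ r2.toNat * 3 ^ r3.toNat * ea ξ1 / (2 ^ (-r2).toNat * 3 ^ (-r3).toNat * ea ξ2 * α ^ r0)
        = (2 ^ r2.toNat / 2 ^ (-r2).toNat) * (3 ^ r3.toNat / 3 ^ (-r3).toNat) * (ea ξ1 / (ea ξ2 * α ^ r0)) := by
      field_simp
    rw [hsplit, ← z2, ← z3, w2, w3]
    have hm' : α ^ m = (α ^ t) ^ q * α ^ r0 := by rw [← pow_mul, ← pow_add, hmq]
    rw [hm'] at hΛ
    rw [div_pow, mul_pow]
    have hξ : ea ξ2 ≠ 0 := p2.ne'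
    field_simp
    linear_combination hΛ
  · refine hcon.trans ?_
    rw [Real.exp_le_exp, neg_le_neg_iff]
    have : (J : ℝ) * (2 * t * h2') ≤ 7 * m := by exact_mod_cast hJh
    have h7 : (2 * t * h2' : ℝ) ≤ 7 * (m / J) := by
      rw [← mul_div_assoc, le_div_iff₀ hJR]; linarith
    have h8 := mul_le_mul_of_nonneg_left h7 (by positivity : (0 : ℝ) ≤ 5300 * L ^ 2)
    push_cast
    linarith

end Trib

end

/-! ### Differences of Tribonacci numbers divisible by high powers of 2 or 3 -/

section
open Finset

namespace Trib

/-- The addition formula: `T (m + k + 1)` is a combination of `T m`, `T (m + 1)`, `T (m + 2)` with the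
coordinates of `a ^ (k + 1)` as coefficients. -/
theorem T_add (k : ℕ) : ∀ m, T (m + k + 1) = (T (k + 2) - T (k + 1) - T k) * T m
    + (T (k + 1) - T k) * T (m + 1) + T k * T (m + 2) := by
  induction k with
  | zero => intro m; simp [T]
  | succ k ih =>
    intro m
    have := ih (m + 1)
    rw [show m + (k + 1) + 1 = m + 1 + k + 1 by ring, this, show k + 1 + 2 = k + 3 by ring,
      show m + 1 + 2 = m + 3 by ring, show m + 1 + 1 = m + 2 by ring,
      show k + 1 + 1 = k + 2 by ring, T_rec, T_rec]
    ring

/-- Three consecutive Tribonacci numbers are coprime. -/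
theorem bezout (m : ℕ) : ∃ x y z : ℤ, x * T m + y * T (m + 1) + z * T (m + 2) = 1 := by
  induction m with
  | zero => exact ⟨0, 1, 0, by simp [T]⟩
  | succ m ih =>
    obtain ⟨x, y, z, h⟩ := ih
    refine ⟨y - x, z - x, x, ?_⟩
    rw [show m + 1 + 2 = m + 3 by ring, T_rec, show m + 1 + 1 = m + 2 by ring]
    linear_combination h

theorem cd_nonneg (k : ℕ) : 0 ≤ T (k + 2) - T (k + 1) - T k ∧ 0 ≤ T (k + 1) - T k ∧ 0 ≤ T k := by
  induction k with
  | zero => simp [T]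
  | succ k ih =>
    rw [show k + 1 + 2 = k + 3 by ring, T_rec, show k + 1 + 1 = k + 2 by ring]
    omega

theorem α_pow_pos (k : ℕ) : 0 < α ^ k := pow_pos α_pos k
theorem α_sq_le : α ^ 2 ≤ 3.4 := by nlinarith [α_bounds.1, α_bounds.2]
theorem one_le_α_pow (k : ℕ) : 1 ≤ α ^ k := one_le_pow₀ (by linarith [α_bounds.1])

theorem cd_le (k : ℕ) : ((T (k + 2) - T (k + 1) - T k : ℤ) : ℝ) ≤ α ^ (k + 1) ∧
    ((T (k + 1) - T k : ℤ) : ℝ) ≤ α ^ (k + 1) ∧ ((T k : ℤ) : ℝ) ≤ α ^ (k + 1) := by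
  have h := α_pow_T k
  obtain ⟨h1, h2, h3⟩ := cd_nonneg k
  have h1' : (0 : ℝ) ≤ ((T (k + 2) - T (k + 1) - T k : ℤ) : ℝ) := by exact_mod_cast h1
  have h2' : (0 : ℝ) ≤ ((T (k + 1) - T k : ℤ) : ℝ) := by exact_mod_cast h2
  have h3' : (0 : ℝ) ≤ ((T k : ℤ) : ℝ) := by exact_mod_cast h3
  have hα : 1 ≤ α := by linarith [α_bounds.1]
  have hα2 : 1 ≤ α ^ 2 := one_le_pow₀ hα
  push_cast at *
  have q2 := mul_le_mul_of_nonneg_left hα h2'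
  have q3 := mul_le_mul_of_nonneg_left hα2 h3'
  refine ⟨?_, ?_, ?_⟩ <;> linarith

theorem re_norm_lower (n : ℕ) (c : ℝ) (h : c ≤ 1 - (β ^ n).re) : c ≤ ‖eb (a ^ n - 1)‖ := by
  rw [map_sub, map_pow, eb_a, map_one, norm_sub_rev]
  refine h.trans ?_
  have := Complex.re_le_norm (1 - β ^ n)
  simpa using this

theorem β_re : β.re = (1 - α) / 2 := rfl
theorem β_sq_re : (β ^ 2).re = (1 - α) ^ 2 / 2 - (α ^ 2 - α - 1) := by
  have h := βim_sq
  rw [sq, Complex.mul_re]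
  simp only [β]
  linear_combination -h
theorem β_cube_re : (β ^ 3).re = (1 - α) ^ 2 / 2 - (α ^ 2 - α - 1) + (1 - α) / 2 + 1 := by
  rw [β_cube, Complex.add_re, Complex.add_re, β_sq_re, β_re]; simp

/-- The elements `a ^ d - 1` and `a ^ (d + k) - 1` are not rationally proportional, as is seen by
comparing the ratios of their two absolute values. -/
theorem indep (d k : ℕ) (hd : 1 ≤ d) (hk : 1 ≤ k) (hne : ¬ (d = 3 ∧ k = 1)) :
    |ea (a ^ (d + k) - 1)| * ‖eb (a ^ d - 1)‖ ≠ |ea (a ^ d - 1)| * ‖eb (a ^ (d + k) - 1)‖ := by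
  intro h
  have hα := α_bounds
  have h1 : 1 < α ^ d := one_lt_pow₀ (by linarith) (by omega)
  have e1 : |ea (a ^ d - 1)| = α ^ d - 1 := by
    simp only [map_sub, map_pow, ea_a, map_one]; exact abs_of_pos (by linarith)
  have e2 : |ea (a ^ (d + k) - 1)| = α ^ (d + k) - 1 := by
    simp only [map_sub, map_pow, ea_a, map_one]
    exact abs_of_nonneg (by linarith [one_le_α_pow (d + k)])
  have e3 : α ^ k * (α ^ d - 1) ≤ α ^ (d + k) - 1 := by
    rw [pow_add]; linarith [one_le_α_pow k]
  have hb0 := norm_β_lt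
  have hbn := norm_nonneg β
  have e4 : ‖eb (a ^ (d + k) - 1)‖ ≤ 1 + ‖β‖ ^ (d + k) := by
    rw [map_sub, map_pow, eb_a, map_one]
    refine (norm_sub_le _ _).trans ?_
    rw [norm_pow, norm_one]; linarith
  rw [e1, e2] at h
  have e5 : α ^ k * ‖eb (a ^ d - 1)‖ ≤ ‖eb (a ^ (d + k) - 1)‖ := by
    have : (α ^ d - 1) * (α ^ k * ‖eb (a ^ d - 1)‖) ≤ (α ^ d - 1) * ‖eb (a ^ (d + k) - 1)‖ := by
      rw [← h]
      have := mul_le_mul_of_nonneg_right e3 (norm_nonneg (eb (a ^ d - 1)))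
      linarith
    exact le_of_mul_le_mul_left this (by linarith)
  have hpow : ∀ i j : ℕ, j ≤ i → ‖β‖ ^ i ≤ 0.738 ^ j := by
    intro i j hij
    calc ‖β‖ ^ i ≤ ‖β‖ ^ j := pow_le_pow_of_le_one hbn (by linarith) hij
      _ ≤ _ := by gcongr
  have hk1 : ∀ j, j ≤ k → α ^ j ≤ α ^ k := fun j hj => pow_le_pow_right₀ (by linarith) hj
  have hak := hk1 1 hk
  rw [pow_one] at hak
  have fin : ∀ c b : ℝ, ∀ j, j ≤ k → c ≤ ‖eb (a ^ d - 1)‖ → 0 ≤ c → ‖β‖ ^ (d + k) ≤ b →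
      1 + b < α ^ j * c → False := by
    intro c b j hj hc hc0 hb hlt
    have : α ^ j * c ≤ α ^ k * ‖eb (a ^ d - 1)‖ :=
      mul_le_mul (hk1 j hj) hc hc0 (α_pow_pos k).le
    linarith
  rcases Nat.lt_or_ge d 4 with hd4 | hd4
  · interval_cases d
    · refine fin 1.4 _ 1 hk (re_norm_lower _ _ ?_) (by norm_num) (hpow _ 1 (by omega)) ?_
      · rw [pow_one, β_re]; linarith
      · norm_num; nlinarith
    · refine fin 1.1 _ 1 hk (re_norm_lower _ _ ?_) (by norm_num) (hpow _ 2 (by omega)) ?_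
      · rw [β_sq_re]; nlinarith
      · norm_num; nlinarith
    · refine fin 0.6 _ 2 (by omega) (re_norm_lower _ _ ?_) (by norm_num) (hpow _ 3 (by omega)) ?_
      · rw [β_cube_re]; nlinarith
      · norm_num; nlinarith
  · refine fin (1 - 0.738 ^ 4) _ 1 hk ?_ (by norm_num) (hpow _ 5 (by omega)) ?_
    · rw [map_sub, map_pow, eb_a, map_one, norm_sub_rev]
      have := norm_sub_norm_le 1 (β ^ d)
      rw [norm_one, norm_pow] at this
      linarith [hpow d 4 hd4]
    · norm_num; nlinarith

theorem α_pow_le_exp2 (n : ℕ) : α ^ (2 * n) ≤ Real.exp (5 / 4 * n) := by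
  have h8 : α ^ 8 ≤ Real.exp 5 := by
    have h1 : α ^ 8 ≤ 1.839287 ^ 8 := by
      have := α_bounds.2
      have := α_pos
      gcongr
    have h2 : Real.exp 5 = Real.exp 1 ^ 5 := by rw [← Real.exp_nat_mul]; norm_num
    have h3 : (2.7 : ℝ) ^ 5 ≤ Real.exp 1 ^ 5 := by
      have := Real.exp_one_gt_d9
      gcongr; linarith
    rw [h2]; refine h1.trans (le_trans ?_ h3); norm_num
  have h4 : α ^ 2 ≤ Real.exp (5 / 4) := by
    have : (α ^ 2) ^ 4 ≤ Real.exp (5 / 4) ^ 4 := by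
      rw [← pow_mul, ← Real.exp_nat_mul]; norm_num; exact h8
    exact le_of_pow_le_pow_left₀ (by norm_num) (Real.exp_pos _).le this
  calc α ^ (2 * n) = (α ^ 2) ^ n := by rw [pow_mul]
    _ ≤ Real.exp (5 / 4) ^ n := by
        have := α_pos
        gcongr
    _ = _ := by rw [← Real.exp_nat_mul]; congr 1; ring

theorem α26 : α ^ 26 ≤ Real.exp 16 := by
  have h1 : α ^ 26 ≤ 1.839287 ^ 26 := by
    have := α_bounds.2
    have := α_pos
    gcongr
  have h2 : Real.exp 16 = Real.exp 1 ^ 16 := by rw [← Real.exp_nat_mul]; norm_num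
  have h3 : (2.718 : ℝ) ^ 16 ≤ Real.exp 1 ^ 16 := by
    have := Real.exp_one_gt_d9
    gcongr; linarith
  rw [h2]; refine h1.trans (le_trans ?_ h3); norm_num

theorem abs_cross (x y z w M N : ℝ) (hx : |x| ≤ M) (hy : |y| ≤ M) (hz : |z| ≤ N) (hw : |w| ≤ N) :
    |x * z - y * w| ≤ 2 * (M * N) := by
  have hM : 0 ≤ M := (abs_nonneg _).trans hx
  have h1 : |x * z| ≤ M * N := by
    rw [abs_mul]; exact mul_le_mul hx hz (abs_nonneg _) hM
  have h2 : |y * w| ≤ M * N := by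
    rw [abs_mul]; exact mul_le_mul hy hw (abs_nonneg _) hM
  have := abs_sub (x * z) (y * w)
  linarith

/-- Congruent coordinates have congruent norm forms. -/
theorem nf_congr (P u v w u' v' w' : ℤ) (hu : P ∣ u - u') (hv : P ∣ v - v') (hw : P ∣ w - w') :
    P ∣ nf u v w - nf u' v' w' := by
  obtain ⟨x, hx⟩ := hu
  obtain ⟨y, hy⟩ := hv
  obtain ⟨z, hz⟩ := hw
  obtain rfl : u = u' + P * x := by linarith
  obtain rfl : v = v' + P * y := by linarith
  obtain rfl : w = w' + P * z := by linarith
  have hM : ∀ a b : ℤ, a ≡ b [ZMOD P] → P ∣ a - b := fun a b h => (Int.modEq_iff_dvd.1 h.symm)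
  apply hM
  have e1 : u' + P * x ≡ u' [ZMOD P] := by simp [Int.ModEq]
  have e2 : v' + P * y ≡ v' [ZMOD P] := by simp [Int.ModEq]
  have e3 : w' + P * z ≡ w' [ZMOD P] := by simp [Int.ModEq]
  unfold nf
  gcongr

theorem nf_a_pow (m : ℕ) : nf (T (m + 2) - T (m + 1) - T m) (T (m + 1) - T m) (T m) = 1 := by
  have h := norm_eq (T (m + 2) - T (m + 1) - T m) (T (m + 1) - T m) (T m)
  rw [← a_pow, map_pow, map_pow, ea_a, eb_a, norm_pow, ← pow_mul, mul_comm (m + 1) 2, pow_mul,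
    norm_β_sq, ← mul_pow, α_mul_inv, one_pow] at h
  exact_mod_cast h.symm

/-- If a vector is proportional to the Tribonacci vector at `m` modulo `P`, the element of `TR` with
these coordinates is a scalar times the unit `a ^ (m + 1)`; cubing and comparing norms determines
the scalar. -/
theorem cross_cube_dvd (m : ℕ) (P t z1 z2 z3 : ℤ) (d1 : P ∣ z1 - t * T m) (d2 : P ∣ z2 - t * T (m + 1))
    (d3 : P ∣ z3 - t * T (m + 2)) :
    (P : TR) ∣ ((z3 - z2 - z1 : ℤ) + (z2 - z1 : ℤ) * a + (z1 : ℤ) * a ^ 2) ^ 3 -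
      (nf (z3 - z2 - z1) (z2 - z1) z1 : ℤ) * a ^ (3 * (m + 1)) := by
  have hc : P ∣ nf (z3 - z2 - z1) (z2 - z1) z1 - t ^ 3 := by
    have h1 := nf_congr P (z3 - z2 - z1) (z2 - z1) z1 (t * (T (m + 2) - T (m + 1) - T m))
      (t * (T (m + 1) - T m)) (t * T m) (by
        have := dvd_sub (dvd_sub d3 d2) d1
        refine this.trans (dvd_of_eq (by ring))) (by
        have := dvd_sub d2 d1
        refine this.trans (dvd_of_eq (by ring))) d1
    have h2 : nf (t * (T (m + 2) - T (m + 1) - T m)) (t * (T (m + 1) - T m)) (t * T m) = t ^ 3 := by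
      have := nf_a_pow m
      unfold nf at this ⊢
      linear_combination t ^ 3 * this
    rwa [h2] at h1
  have hc' : (P : TR) ∣ (nf (z3 - z2 - z1) (z2 - z1) z1 : ℤ) - (t : TR) ^ 3 := by
    have := Int.cast_dvd_cast (α := TR) _ _ hc
    simpa using this
  have hζ : (P : TR) ∣ ((z3 - z2 - z1 : ℤ) + (z2 - z1 : ℤ) * a + (z1 : ℤ) * a ^ 2) - t * a ^ (m + 1) := by
    have c1 := Int.cast_dvd_cast (α := TR) _ _ d1
    have c2 := Int.cast_dvd_cast (α := TR) _ _ d2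
    have c3 := Int.cast_dvd_cast (α := TR) _ _ d3
    have e := dvd_add (dvd_add (dvd_sub (dvd_sub c3 c2) c1) (Dvd.dvd.mul_right (dvd_sub c2 c1) a))
      (Dvd.dvd.mul_right c1 (a ^ 2))
    refine e.trans (dvd_of_eq ?_)
    rw [a_pow m]; push_cast; ring
  have h3 := (hζ.trans (sub_dvd_pow_sub_pow _ _ 3))
  have h4 := dvd_sub h3 (Dvd.dvd.mul_right hc' (a ^ (3 * (m + 1))))
  refine h4.trans (dvd_of_eq ?_)
  rw [mul_pow, ← pow_mul, mul_comm (m + 1) 3]; ring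

set_option maxHeartbeats 1000000 in
/-- Both divisibilities are linear conditions modulo `p ^ X` on the window of `T` at `m`; so the window
is proportional to their cross product, which has height `O(d + k)`. By `cross_cube_dvd` the power
`a ^ (3 * (m + 1))` is `p`-adically close to an element of small height, up to a rational factor,
and `padic_interpolation` bounds `X`. -/
theorem padic_separation_core (p q0 : ℕ) (hp : 2 ≤ p) (hq0 : Even q0) (hq1 : 1 ≤ q0) (hq26 : q0 ≤ 26)
    (hdiv : (p : TR) ∣ a ^ q0 - 1) (m d k D L X : ℕ) (hd : 1 ≤ d) (hk : 1 ≤ k) (hD : d + k ≤ D)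
    (hne : ¬ (d = 3 ∧ k = 1)) (hL : 160 ≤ L) (hm : 1014 * D * L ≤ m)
    (hZ : (624 * L * (m + 1) : ℝ) ≤ Real.exp (L / 16))
    (h1 : (p : ℤ) ^ X ∣ T (m + d) - T m) (h2 : (p : ℤ) ^ X ∣ T (m + (d + k)) - T m) :
    X < 584064 * L ^ 2 * D := by
  obtain ⟨i, rfl⟩ : ∃ i, d = i + 1 := ⟨d - 1, by omega⟩
  obtain ⟨j, hj⟩ : ∃ j, i + 1 + k = j + 1 := ⟨i + k, by omega⟩
  have hind := indep (i + 1) k hd hk hne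
  rw [hj] at h2 hD hind
  -- coordinates of `a ^ d - 1` and of `a ^ (d + k) - 1`
  have pi := a_pow i
  have pj := a_pow j
  have Ti := T_add i m
  have Tj := T_add j m
  have ci := cd_le i
  have cj := cd_le j
  have ni := cd_nonneg i
  have nj := cd_nonneg j
  rw [show m + (i + 1) = m + i + 1 by ring, Ti] at h1
  rw [show m + (j + 1) = m + j + 1 by ring, Tj] at h2
  set u1 := T (i + 2) - T (i + 1) - T i
  set v1 := T (i + 1) - T i
  set w1 := T i
  set u2 := T (j + 2) - T (j + 1) - T j
  set v2 := T (j + 1) - T j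
  set w2 := T j
  set P : ℤ := (p : ℤ) ^ X with hP
  set M := α ^ (i + 1) with hM
  set N := α ^ (j + 1) with hN
  have hM1 : 1 ≤ M := one_le_α_pow _
  have hN1 : 1 ≤ N := one_le_α_pow _
  set z1 := v1 * w2 - w1 * v2 with hz1
  set z2 := w1 * (u2 - 1) - (u1 - 1) * w2 with hz2
  set z3 := (u1 - 1) * v2 - v1 * (u2 - 1) with hz3
  -- the cross product is nonzero
  have hz : ¬ (z1 = 0 ∧ z2 = 0 ∧ z3 = 0) := by
    rintro ⟨e1, e2, e3⟩
    have par : ∃ c c' : ℤ, c ≠ 0 ∧ (c : TR) * (a ^ (j + 1) - 1) = c' * (a ^ (i + 1) - 1) := by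
      rw [pi, pj]
      have hE1 : ¬ (u1 - 1 = 0 ∧ v1 = 0 ∧ w1 = 0) := by
        rintro ⟨f1, f2, f3⟩
        have : a ^ (i + 1) = 1 := by
          rw [pi, f2, f3, show u1 = 1 by omega]; simp
        have := congrArg ea this
        simp only [map_pow, ea_a, map_one] at this
        have h1 : 1 < α ^ (i + 1) := one_lt_pow₀ (by linarith [α_bounds.1]) (by omega)
        linarith
      have e1' : (v1 * w2 - w1 * v2 : TR) = 0 := by exact_mod_cast congrArg (Int.cast : ℤ → TR) e1
      have e2' : (w1 * (u2 - 1) - (u1 - 1) * w2 : TR) = 0 := by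
        exact_mod_cast congrArg (Int.cast : ℤ → TR) e2
      have e3' : ((u1 - 1) * v2 - v1 * (u2 - 1) : TR) = 0 := by
        exact_mod_cast congrArg (Int.cast : ℤ → TR) e3
      by_cases f1 : u1 - 1 = 0
      · by_cases f2 : v1 = 0
        · refine ⟨w1, w2, fun f3 => hE1 ⟨f1, f2, f3⟩, ?_⟩
          linear_combination e2' - a * e1'
        · refine ⟨v1, v2, f2, ?_⟩
          linear_combination a ^ 2 * e1' - e3'
      · refine ⟨u1 - 1, u2 - 1, f1, ?_⟩
        push_cast
        linear_combination a * e3' - a ^ 2 * e2'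
    obtain ⟨c, c', hc, hcc⟩ := par
    have g1 := congrArg (fun x => |ea x|) hcc
    have g2 := congrArg (fun x => ‖eb x‖) hcc
    simp only [map_mul, map_intCast, abs_mul, norm_mul, Complex.norm_intCast] at g1 g2
    have hc0 : |(c : ℝ)| ≠ 0 := by simpa using hc
    apply hind
    have : |(c : ℝ)| * (|ea (a ^ (j + 1) - 1)| * ‖eb (a ^ (i + 1) - 1)‖) =
      |(c : ℝ)| * (|ea (a ^ (i + 1) - 1)| * ‖eb (a ^ (j + 1) - 1)‖) := by
      linear_combination ‖eb (a ^ (i + 1) - 1)‖ * g1 - |ea (a ^ (i + 1) - 1)| * g2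
    exact mul_left_cancel₀ hc0 this
  -- the cross product is a multiple of the Tribonacci vector modulo `P`
  obtain ⟨x, y, z, hbez⟩ := bezout m
  set s1 := T m
  set s2 := T (m + 1)
  set s3 := T (m + 2)
  set t := x * z1 + y * z2 + z * z3 with ht
  obtain ⟨g1, hg1⟩ := h1
  obtain ⟨g2, hg2⟩ := h2
  have d1 : P ∣ z1 - t * s1 := by
    refine ⟨y * (w2 * g1 - w1 * g2) - z * (v2 * g1 - v1 * g2), ?_⟩
    rw [ht, hz1, hz2, hz3]
    linear_combination (-(v1 * w2 - w1 * v2)) * hbez + (y * w2 - z * v2) * hg1 - (y * w1 - z * v1) * hg2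
  have d2 : P ∣ z2 - t * s2 := by
    refine ⟨(z * ((u2 - 1) * g1 - (u1 - 1) * g2) - x * (w2 * g1 - w1 * g2)), ?_⟩
    rw [ht, hz1, hz2, hz3]
    linear_combination (-(w1 * (u2 - 1) - (u1 - 1) * w2)) * hbez + (z * (u2 - 1) - x * w2) * hg1 - (z * (u1 - 1) - x * w1) * hg2
  have d3 : P ∣ z3 - t * s3 := by
    refine ⟨(x * (v2 * g1 - v1 * g2) - y * ((u2 - 1) * g1 - (u1 - 1) * g2)), ?_⟩
    rw [ht, hz1, hz2, hz3]
    linear_combination (-((u1 - 1) * v2 - v1 * (u2 - 1))) * hbez + (x * v2 - y * (u2 - 1)) * hg1 - (x * v1 - y * (u1 - 1)) * hg2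
  have hdvd := cross_cube_dvd m P t z1 z2 z3 d1 d2 d3
  set U := z3 - z2 - z1 with hU
  set V := z2 - z1 with hV
  set ζ : TR := (U : ℤ) + (V : ℤ) * a + (z1 : ℤ) * a ^ 2 with hζ
  have hζ0 : ea ζ ≠ 0 := by
    intro h0
    apply hz
    rw [hζ] at h0
    simp only [map_add, map_mul, map_pow, ea_a, map_intCast] at h0
    have := coords_zero U V z1 h0
    omega
  -- sizes
  have hND : M * N ≤ α ^ (2 * D) := by
    rw [hM, hN, ← pow_add]; exact pow_le_pow_right₀ (by linarith [α_bounds.1]) (by omega)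
  have bnd : ∀ c : ℤ, 0 ≤ c → ∀ B : ℝ, 1 ≤ B → (c : ℝ) ≤ B → |(c : ℝ)| ≤ B ∧ |(c : ℝ) - 1| ≤ B := by
    intro c hc B hB hcB
    have : (0 : ℝ) ≤ c := by exact_mod_cast hc
    constructor <;> rw [abs_le] <;> constructor <;> linarith
  have bu1 := bnd _ ni.1 M hM1 ci.1
  have bv1 := bnd _ ni.2.1 M hM1 ci.2.1
  have bw1 := bnd _ ni.2.2 M hM1 ci.2.2
  have bu2 := bnd _ nj.1 N hN1 cj.1
  have bv2 := bnd _ nj.2.1 N hN1 cj.2.1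
  have bw2 := bnd _ nj.2.2 N hN1 cj.2.2
  have B1 : |(z1 : ℝ)| ≤ 2 * α ^ (2 * D) := by
    have := abs_cross _ _ _ _ M N bv1.1 bw1.1 bw2.1 bv2.1
    rw [hz1]; push_cast; linarith
  have B2 : |(z2 : ℝ)| ≤ 2 * α ^ (2 * D) := by
    have := abs_cross _ _ _ _ M N bw1.1 bu1.2 bu2.2 bw2.1
    rw [hz2]; push_cast; linarith
  have B3 : |(z3 : ℝ)| ≤ 2 * α ^ (2 * D) := by
    have := abs_cross _ _ _ _ M N bu1.2 bv1.1 bv2.1 bu2.2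
    rw [hz3]; push_cast; linarith
  have BV : |(V : ℝ)| ≤ 4 * α ^ (2 * D) := by
    rw [hV]; push_cast
    have := abs_sub (z2 : ℝ) z1
    linarith
  have BU : |(U : ℝ)| ≤ 6 * α ^ (2 * D) := by
    rw [hU]; push_cast
    have := abs_sub (z2 : ℝ) z1
    have := abs_sub ((z3 : ℝ) - z2) z1
    have := abs_sub (z3 : ℝ) z2
    linarith
  have h21 : 21 * α ^ (2 * D) ≤ Real.exp (3 * D) := by
    have hD2 : (2 : ℝ) ≤ D := by
      have : 2 ≤ D := by omega
      exact_mod_cast this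
    have e1 := α_pow_le_exp2 D
    have e2 : (21 : ℝ) ≤ Real.exp (7 / 4 * D) := by
      have : Real.exp (7 / 2) ≤ Real.exp (7 / 4 * D) := by
        rw [Real.exp_le_exp]; linarith
      refine le_trans ?_ this
      have h7 : Real.exp (7 / 2) ^ 2 = Real.exp 1 ^ 7 := by
        rw [← Real.exp_nat_mul, ← Real.exp_nat_mul]; norm_num
      have h8 : (2.7 : ℝ) ^ 7 ≤ Real.exp 1 ^ 7 := by
        have := Real.exp_one_gt_d9
        gcongr; linarith
      refine le_of_pow_le_pow_left₀ (n := 2) (by norm_num) (Real.exp_pos _).le ?_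
      rw [h7]; refine le_trans ?_ h8; norm_num
    calc 21 * α ^ (2 * D) ≤ Real.exp (7 / 4 * D) * Real.exp (5 / 4 * D) := by
          have := (α_pow_pos (2 * D)).le
          gcongr
      _ = _ := by rw [← Real.exp_add]; congr 1; ring
  have Eζ : |ea ζ| ≤ Real.exp (3 * D) := by
    refine le_trans ?_ h21
    rw [hζ]
    simp only [map_add, map_mul, map_pow, ea_a, map_intCast]
    have hα := α_bounds
    have t1 : |(V : ℝ) * α| ≤ 4 * α ^ (2 * D) * 1.84 := by
      rw [abs_mul, abs_of_pos α_pos]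
      exact mul_le_mul BV (by linarith) α_pos.le ((abs_nonneg _).trans BV)
    have t2 : |(z1 : ℝ) * α ^ 2| ≤ 2 * α ^ (2 * D) * 3.4 := by
      rw [abs_mul, abs_of_pos (α_pow_pos 2)]
      exact mul_le_mul B1 α_sq_le (α_pow_pos 2).le ((abs_nonneg _).trans B1)
    have t3 := abs_add_le ((U : ℝ) + V * α) (z1 * α ^ 2)
    have t4 := abs_add_le (U : ℝ) (V * α)
    have := α_pow_pos (2 * D)
    linarith
  have Fζ : ‖eb ζ‖ ≤ Real.exp (3 * D) := by
    refine le_trans ?_ h21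
    rw [hζ]
    simp only [map_add, map_mul, map_pow, eb_a, map_intCast]
    have hb := norm_β_lt
    have hb0 := norm_nonneg β
    have t1 : ‖(V : ℂ) * β‖ ≤ 4 * α ^ (2 * D) * 1 := by
      rw [norm_mul, Complex.norm_intCast]
      exact mul_le_mul BV (by linarith) hb0 ((abs_nonneg _).trans BV)
    have t2 : ‖(z1 : ℂ) * β ^ 2‖ ≤ 2 * α ^ (2 * D) * 1 := by
      rw [norm_mul, Complex.norm_intCast, norm_pow]
      exact mul_le_mul B1 (pow_le_one₀ hb0 (hb.le.trans (by norm_num))) (by positivity) ((abs_nonneg _).trans B1)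
    have t3 := norm_add_le ((U : ℂ) + V * β) (z1 * β ^ 2)
    have t4 := norm_add_le (U : ℂ) (V * β)
    rw [Complex.norm_intCast] at t4
    have := α_pow_pos (2 * D)
    linarith
  have hν := norm_eq U V z1
  rw [← hζ] at hν
  set ν := nf U V z1 with hνdef
  have hν0 : (ν : ℝ) ≠ 0 := by
    rw [← hν]
    have := eb_ne ζ hζ0
    exact mul_ne_zero hζ0 (by simpa using this)
  have Eν : |(ν : ℝ)| ≤ Real.exp (9 * D) := by
    rw [← hν, abs_mul, abs_of_nonneg (sq_nonneg ‖eb ζ‖)]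
    calc |ea ζ| * ‖eb ζ‖ ^ 2 ≤ Real.exp (3 * D) * Real.exp (3 * D) ^ 2 := by gcongr
      _ = _ := by rw [← Real.exp_nat_mul, ← Real.exp_add]; congr 1; push_cast; ring
  have epow : ∀ c : ℝ, 0 ≤ c → c ≤ Real.exp (9 * D) → c ^ q0 ≤ Real.exp ((234 * D : ℕ) : ℝ) := by
    intro c hc0 hc
    calc c ^ q0 ≤ Real.exp (9 * D) ^ q0 := by gcongr
      _ ≤ Real.exp (9 * D) ^ 26 := pow_le_pow_right₀ (Real.one_le_exp (by positivity)) hq26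
      _ = _ := by rw [← Real.exp_nat_mul]; congr 1; push_cast; ring
  have cube : ∀ c : ℝ, 0 ≤ c → c ≤ Real.exp (3 * D) → c ^ 3 ≤ Real.exp (9 * D) := by
    intro c hc0 hc
    calc c ^ 3 ≤ Real.exp (3 * D) ^ 3 := by gcongr
      _ = _ := by rw [← Real.exp_nat_mul]; congr 1; push_cast; ring
  have hA16 : α ^ q0 ≤ Real.exp ((16 : ℕ) : ℝ) := by
    push_cast
    exact (pow_le_pow_right₀ (by linarith [α_bounds.1]) hq26).trans α26
  have hlt : 1 < α ^ q0 := one_lt_pow₀ (by linarith [α_bounds.1]) (by omega)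
  have key := padic_interpolation ea eb liouville p hp (a ^ q0) ((ζ ^ 3) ^ q0) ((ν : TR) ^ q0)
    (by simp only [map_pow, ea_a]; linarith)
    (by simp only [map_pow]; exact hq0.pow_pos (pow_ne_zero _ hζ0))
    (by simp only [map_pow, map_intCast]; exact hq0.pow_pos hν0)
    (by simp only [map_pow, ea_a]; exact hlt.ne')
    16 (234 * D) L (3 * (m + 1)) (by norm_num) (by omega) hL
    (by simp only [map_pow, ea_a]; exact hA16)
    (by
      simp only [map_pow]
      refine (le_abs_self _).trans ?_
      rw [abs_pow, abs_pow]
      exact epow _ (by positivity) (cube _ (abs_nonneg _) Eζ))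
    (by
      simp only [map_pow, map_intCast]
      refine (le_abs_self _).trans ?_
      rw [abs_pow]
      exact epow _ (abs_nonneg _) Eν)
    ((norm_eb_a_pow q0).trans (Real.one_le_exp (by positivity)))
    (by
      simp only [map_pow, norm_pow]
      exact epow _ (by positivity) (cube _ (norm_nonneg _) Fζ))
    (by
      simp only [map_pow, map_intCast, norm_pow, Complex.norm_intCast]
      exact epow _ (abs_nonneg _) Eν)
    (by rw [show 13 * (234 * D) * L = 3 * (1014 * D * L) by ring]; clear * - hm; omega)
    (by push_cast; refine le_trans (le_of_eq ?_) hZ; ring)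
    hdiv X
    (by
      have h := hdvd.trans (sub_dvd_pow_sub_pow _ _ q0)
      rw [hP] at h
      push_cast at h
      refine h.trans (dvd_of_eq ?_)
      rw [mul_pow, ← pow_mul a, ← pow_mul a, mul_comm (3 * (m + 1)) q0])
  calc X < _ := key
    _ = _ := by ring

theorem dvd_two : ((2 : ℕ) : TR) ∣ a ^ 4 - 1 :=
  ⟨a ^ 2 + a, by push_cast; linear_combination (a + 1) * a_cube⟩

theorem dvd_three : ((3 : ℕ) : TR) ∣ a ^ 26 - 1 := by
  have h : ((3 : ℕ) : TR) ∣ a ^ 13 - 1 := by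
    refine ⟨91 + 141 * a + 168 * a ^ 2, ?_⟩
    rw [a_pow 12]
    simp [T]
    ring
  have h2 : a ^ 26 - 1 = (a ^ 13 - 1) * (a ^ 13 + 1) := by ring
  rw [h2]
  exact h.mul_right _

/-- Two differences of Tribonacci numbers with the same first index are not both divisible by a high
power of 2, or of 3. The case `d = 3`, `k = 1` is an exception, because the identity
`a ^ 4 - 1 = 2 * (a ^ 3 - 1)` makes the two conditions proportional. -/
theorem padic_separation (p : ℕ) (hp : p = 2 ∨ p = 3) (m d k D L X : ℕ) (hd : 1 ≤ d) (hk : 1 ≤ k) (hD : d + k ≤ D)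
    (hne : ¬ (d = 3 ∧ k = 1)) (hL : 160 ≤ L) (hm : 1014 * D * L ≤ m)
    (hZ : (624 * L * (m + 1) : ℝ) ≤ Real.exp (L / 16))
    (h1 : (p : ℤ) ^ X ∣ T (m + d) - T m) (h2 : (p : ℤ) ^ X ∣ T (m + (d + k)) - T m) :
    X < 584064 * L ^ 2 * D := by
  rcases hp with rfl | rfl
  · exact padic_separation_core 2 4 (by norm_num) (by decide) (by norm_num) (by norm_num) dvd_two m d k D L X
      hd hk hD hne hL hm hZ h1 h2
  · exact padic_separation_core 3 26 (by norm_num) (by decide) (by norm_num) (by norm_num) dvd_three m d k D L X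
      hd hk hD hne hL hm hZ h1 h2

end Trib

end

/-! ### Systems of four representations -/

section
open Finset

namespace Trib

/-- A sum of two three-smooth numbers is three-smooth only in the few sporadic cases up to scaling, so
the ratio of the summands is at most 8. The proof is by descent and congruences modulo 80. -/
theorem gersonides (n : ℕ) : ∀ a1 b1 a2 b2 a3 b3 : ℕ, a1 + a2 + a3 + b1 + b2 + b3 ≤ n →
    2 ^ a1 * 3 ^ b1 + 2 ^ a2 * 3 ^ b2 = 2 ^ a3 * 3 ^ b3 → 2 ^ a2 * 3 ^ b2 ≤ 8 * (2 ^ a1 * 3 ^ b1) := by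
  have h3odd : ∀ b : ℕ, 3 ^ b % 2 = 1 := by
    intro b; rw [Nat.pow_mod]; simp
  have h2mod : ∀ b : ℕ, 2 ^ b % 3 = 1 ∨ 2 ^ b % 3 = 2 := by
    intro b
    induction b with
    | zero => simp
    | succ b ih => rw [pow_succ]; omega
  have p2 : ∀ b : ℕ, 1 ≤ 2 ^ b := fun b => Nat.one_le_two_pow
  have p3 : ∀ b : ℕ, 1 ≤ 3 ^ b := fun b => Nat.one_le_pow _ _ (by norm_num)
  have h16 : ∀ b : ℕ, 3 ^ b % 80 = 1 ∨ 3 ^ b % 80 = 3 ∨ 3 ^ b % 80 = 9 ∨ 3 ^ b % 80 = 27 := by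
    intro b
    induction b with
    | zero => simp
    | succ b ih => rw [pow_succ]; omega
  have h5 : ∀ b : ℕ, 2 ^ b % 5 ≠ 0 := by
    intro b
    induction b with
    | zero => simp
    | succ b ih => rw [pow_succ]; omega
  have g1 : ∀ a b : ℕ, 1 + 2 ^ a = 3 ^ b → 2 ^ a ≤ 8 := by
    intro a b h
    by_contra hlt
    have ha : 4 ≤ a := by
      by_contra h4
      have : a ≤ 3 := by omega
      have := Nat.pow_le_pow_right (show 0 < 2 by norm_num) this
      omega
    obtain ⟨k, rfl⟩ := Nat.exists_eq_add_of_le ha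
    rw [pow_add] at h
    have := h16 b
    have := h5 k
    norm_num at h
    omega
  have g2 : ∀ a b : ℕ, 1 + 3 ^ b = 2 ^ a → 3 ^ b ≤ 8 := by
    intro a b h
    by_contra hlt
    have ha : 3 ≤ a := by
      by_contra h4
      have : a ≤ 2 := by omega
      have := Nat.pow_le_pow_right (show 0 < 2 by norm_num) this
      omega
    obtain ⟨k, rfl⟩ := Nat.exists_eq_add_of_le ha
    rw [pow_add] at h
    have := h16 b
    norm_num at h
    omega
  induction n with
  | zero =>
    intro a1 b1 a2 b2 a3 b3 hn h
    obtain ⟨rfl, rfl, rfl, rfl, rfl, rfl⟩ : a1 = 0 ∧ b1 = 0 ∧ a2 = 0 ∧ b2 = 0 ∧ a3 = 0 ∧ b3 = 0 := by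
      omega
    simp
  | succ n ih =>
    intro a1 b1 a2 b2 a3 b3 hn h
    have red2 : ∀ a, a ≠ 0 → ∃ k, a = k + 1 := fun a ha => ⟨a - 1, by omega⟩
    have ev : ∀ k b : ℕ, (2 ^ (k + 1) * 3 ^ b) % 2 = 0 := by
      intro k b; rw [pow_succ]; simp [Nat.mul_mod]
    have th : ∀ k b : ℕ, (2 ^ b * 3 ^ (k + 1)) % 3 = 0 := by
      intro k b; rw [pow_succ]; simp [Nat.mul_mod]
    have c3 := h3odd b1
    have c4 := h3odd b2
    have c5 := h3odd b3
    have d3 := h2mod a1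
    have d4 := h2mod a2
    have d5 := h2mod a3
    by_cases A1 : a1 = 0 <;> by_cases A2 : a2 = 0 <;> by_cases A3 : a3 = 0
    · subst A1 A2 A3; simp only [pow_zero, one_mul] at h; omega
    · -- `a3` carries the powers of two
      subst A1 A2
      simp only [pow_zero, one_mul] at h ⊢
      by_cases B1 : b1 = 0 <;> by_cases B2 : b2 = 0
      · subst B1 B2; simp
      · subst B1
        by_cases B3 : b3 = 0
        · subst B3
          simp only [pow_zero, mul_one] at h ⊢
          exact g2 _ _ h
        · obtain ⟨k, rfl⟩ := red2 b2 B2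
          obtain ⟨l, rfl⟩ := red2 b3 B3
          have := th l a3
          rw [pow_succ] at h
          omega
      · subst B2
        have := p3 b1
        simp; omega
      · obtain ⟨k, rfl⟩ := red2 b1 B1
        obtain ⟨l, rfl⟩ := red2 b2 B2
        by_cases B3 : b3 = 0
        · subst B3
          simp only [pow_succ, pow_zero, mul_one] at h
          omega
        · obtain ⟨i, rfl⟩ := red2 b3 B3
          have := ih 0 k 0 l a3 i (by omega) (by
            simp only [pow_succ, pow_zero, one_mul, ← mul_assoc] at h ⊢; omega)
          simp only [pow_succ, pow_zero, one_mul] at this ⊢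
          omega
    · subst A1 A3
      simp only [pow_zero, one_mul] at h ⊢
      by_cases B1 : b1 = 0 <;> by_cases B3 : b3 = 0
      · subst B1 B3
        have := p2 a2; have := p3 b2
        have : 1 ≤ 2 ^ a2 * 3 ^ b2 := Nat.mul_pos (p2 a2) (p3 b2)
        omega
      · subst B1
        by_cases B2 : b2 = 0
        · subst B2
          simp only [pow_zero, mul_one] at h ⊢
          exact g1 _ _ h
        · obtain ⟨k, rfl⟩ := red2 b2 B2
          obtain ⟨l, rfl⟩ := red2 b3 B3
          have := th k a2
          rw [pow_succ 3 l] at h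
          omega
      · subst B3
        have := p3 b1
        have : 1 ≤ 2 ^ a2 * 3 ^ b2 := Nat.mul_pos (p2 a2) (p3 b2)
        omega
      · obtain ⟨k, rfl⟩ := red2 b1 B1
        obtain ⟨l, rfl⟩ := red2 b3 B3
        by_cases B2 : b2 = 0
        · subst B2
          simp only [pow_succ, pow_zero, mul_one] at h
          omega
        · obtain ⟨i, rfl⟩ := red2 b2 B2
          have := ih 0 k a2 i 0 l (by omega) (by
            simp only [pow_succ, pow_zero, one_mul, ← mul_assoc] at h ⊢; omega)
          simp only [pow_succ, pow_zero, one_mul, ← mul_assoc] at this ⊢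
          omega
    · subst A1
      obtain ⟨k, rfl⟩ := red2 a2 A2
      obtain ⟨l, rfl⟩ := red2 a3 A3
      have := ev k b2; have := ev l b3
      simp only [pow_zero, one_mul] at h
      omega
    · -- `a1` carries the powers of two
      subst A2 A3
      simp only [pow_zero, one_mul] at h ⊢
      by_cases B2 : b2 = 0
      · subst B2
        have : 1 ≤ 2 ^ a1 * 3 ^ b1 := Nat.mul_pos (p2 a1) (p3 b1)
        simp; omega
      · by_cases B3 : b3 = 0
        · subst B3
          have := p3 b2
          have : 1 ≤ 2 ^ a1 * 3 ^ b1 := Nat.mul_pos (p2 a1) (p3 b1)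
          omega
        · obtain ⟨l, rfl⟩ := red2 b2 B2
          obtain ⟨i, rfl⟩ := red2 b3 B3
          by_cases B1 : b1 = 0
          · subst B1
            simp only [pow_succ, pow_zero, mul_one] at h
            omega
          · obtain ⟨k, rfl⟩ := red2 b1 B1
            have := ih a1 k 0 l 0 i (by omega) (by
              simp only [pow_succ, pow_zero, one_mul, ← mul_assoc] at h ⊢; omega)
            simp only [pow_succ, pow_zero, one_mul, ← mul_assoc] at this ⊢
            omega
    · subst A2
      obtain ⟨k, rfl⟩ := red2 a1 A1
      obtain ⟨l, rfl⟩ := red2 a3 A3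
      have := ev k b1; have := ev l b3
      simp only [pow_zero, one_mul] at h
      omega
    · subst A3
      obtain ⟨k, rfl⟩ := red2 a1 A1
      obtain ⟨l, rfl⟩ := red2 a2 A2
      have := ev k b1; have := ev l b2
      simp only [pow_zero, one_mul] at h
      omega
    · obtain ⟨k, rfl⟩ := red2 a1 A1
      obtain ⟨l, rfl⟩ := red2 a2 A2
      obtain ⟨i, rfl⟩ := red2 a3 A3
      have e : ∀ k b : ℕ, 2 ^ (k + 1) * 3 ^ b = 2 * (2 ^ k * 3 ^ b) := by
        intro k b; rw [pow_succ]; ring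
      rw [e, e, e] at h
      have := ih k b1 l b2 i b3 (by omega) (by omega)
      rw [e, e]
      omega

theorem abs_log_le (r : ℝ) (h : |r - 1| ≤ 1 / 2) : |Real.log r| ≤ 2 * |r - 1| := by
  have h' := abs_le.1 h
  have hr : 0 < r := by linarith
  have h1 := Real.log_le_sub_one_of_pos hr
  have h2 := Real.log_le_sub_one_of_pos (inv_pos.2 hr)
  rw [Real.log_inv] at h2
  have h3 : r⁻¹ - 1 ≤ 2 * |r - 1| := by
    have : r⁻¹ - 1 = (1 - r) * r⁻¹ := by field_simp
    rw [this]
    have hi : r⁻¹ ≤ 2 := by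
      rw [inv_le_comm₀ hr (by norm_num)]; linarith
    calc (1 - r) * r⁻¹ ≤ |r - 1| * r⁻¹ := by
          gcongr; rw [abs_sub_comm]; exact le_abs_self _
      _ ≤ |r - 1| * 2 := by gcongr
      _ = _ := by ring
  rw [abs_le]
  have := le_abs_self (r - 1)
  have := abs_nonneg (r - 1)
  constructor <;> linarith

/-- `smooth_log_lower` in terms of the relative error. -/
theorem smooth_form_lower (ξ1 ξ2 : TR) (p1 : 0 < ea ξ1) (p2 : 0 < ea ξ2) (V x y m J L : ℕ)
    (h1 : ea ξ1 ≤ Real.exp V) (h2 : ea ξ2 ≤ Real.exp V)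
    (k1 : ‖eb ξ1‖ ≤ Real.exp V) (k2 : ‖eb ξ2‖ ≤ Real.exp V)
    (hx : x ≤ m) (hy : y ≤ m) (hL : 160 ≤ L) (hJ : 1000 * L ≤ J) (hV : V * J ^ 3 ≤ m)
    (hm : 6 * J ^ 5 ≤ m) (hZ : (52 * L * m : ℝ) ≤ Real.exp (L / 16)) (ε : ℝ) (hε : ε ≤ 1 / 2)
    (hΛ : |2 ^ x * 3 ^ y * ea ξ1 - ea ξ2 * α ^ m| ≤ ε * (ea ξ2 * α ^ m)) :
    Real.exp (-(37100 * L ^ 2 * (m / J))) < 2 * ε := by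
  have hden : 0 < ea ξ2 * α ^ m := mul_pos p2 (α_pow_pos m)
  have hαm : α ^ m ≠ 0 := (α_pow_pos m).ne'
  have hξ : ea ξ2 ≠ 0 := p2.ne'
  set r := 2 ^ x * 3 ^ y * ea ξ1 / (ea ξ2 * α ^ m) with hr
  have hr0 : 0 < r := by positivity
  have h3 : |r - 1| ≤ ε := by
    have : r - 1 = (2 ^ x * 3 ^ y * ea ξ1 - ea ξ2 * α ^ m) / (ea ξ2 * α ^ m) := by
      rw [hr, sub_div, div_self hden.ne']
    rw [this, abs_div, abs_of_pos hden, div_le_iff₀ hden]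
    exact hΛ
  have h4 := smooth_log_lower ξ1 ξ2 p1 p2 V x y m J L h1 h2 k1 k2 hx hy hL hJ hV hm hZ (Real.log r) (by
    rw [Real.exp_log hr0, hr, mul_div_cancel₀ _ hden.ne'])
  have h5 := abs_log_le r (h3.trans hε)
  linarith

/-- A system of four representations, ordered by index. -/
structure Sys (c : ℤ) (n x y : Fin 4 → ℕ) : Prop where
  hc : 1 ≤ c
  mono : StrictMono n
  rep : ∀ i, T (n i) = c + 2 ^ x i * 3 ^ y i

variable {c : ℤ} {n x y : Fin 4 → ℕ}

theorem Sys.S_lt (h : Sys c n x y) (i : Fin 4) : (2 : ℝ) ^ x i * 3 ^ y i < α ^ n i := by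
  have h1 := T_le_α (n i)
  rw [h.rep i] at h1
  push_cast at h1
  have : (1 : ℝ) ≤ c := by exact_mod_cast h.hc
  linarith

theorem pow_le_of_smooth (x y n : ℕ) (h : (2 : ℝ) ^ x * 3 ^ y < α ^ n) : x ≤ n ∧ y ≤ n := by
  have h2 : α ^ n ≤ 2 ^ n := by
    have := α_pos
    gcongr; linarith [α_bounds.2]
  have h3 : (2 : ℝ) ^ n ≤ 3 ^ n := by gcongr; norm_num
  have a1 : (1 : ℝ) ≤ 2 ^ x := one_le_pow₀ (by norm_num)
  have a2 : (1 : ℝ) ≤ 3 ^ y := one_le_pow₀ (by norm_num)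
  constructor
  · have : (2 : ℝ) ^ x < 2 ^ n := by nlinarith
    exact ((pow_lt_pow_iff_right₀ (by norm_num)).1 this).le
  · have : (3 : ℝ) ^ y < 3 ^ n := by nlinarith
    exact ((pow_lt_pow_iff_right₀ (by norm_num)).1 this).le

theorem Sys.le (h : Sys c n x y) (i : Fin 4) : x i ≤ n i ∧ y i ≤ n i :=
  pow_le_of_smooth _ _ _ (h.S_lt i)

theorem Sys.diff (h : Sys c n x y) (i j : Fin 4) :
    T (n j) - T (n i) = 2 ^ x j * 3 ^ y j - 2 ^ x i * 3 ^ y i := by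
  rw [h.rep, h.rep]; ring

theorem Sys.diffR (h : Sys c n x y) (i j : Fin 4) :
    |θ * (2 ^ x j * 3 ^ y j - 2 ^ x i * 3 ^ y i) - (α ^ n j - α ^ n i)| ≤ 4 := by
  have h1 := er_le (n j)
  have h2 := er_le (n i)
  have h3 : ((T (n j) - T (n i) : ℤ) : ℝ) = 2 ^ x j * 3 ^ y j - 2 ^ x i * 3 ^ y i := by
    rw [h.diff]; push_cast; ring
  rw [← h3]
  push_cast
  have : θ * ((T (n j) : ℝ) - T (n i)) - (α ^ n j - α ^ n i) =
    (θ * T (n j) - α ^ n j) - (θ * T (n i) - α ^ n i) := by ring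
  rw [this]
  have := abs_sub (θ * T (n j) - α ^ n j) (θ * T (n i) - α ^ n i)
  linarith

/-- Every three-smooth number of the system is approximated by `α ^ n i / θ` up to `O(c)`, and
`c < T (n 0)`. -/
theorem Sys.main_err (h : Sys c n x y) (i : Fin 4) :
    |θ * (2 ^ x i * 3 ^ y i) - α ^ n i| ≤ 5 * α ^ n 0 := by
  have h1 := er_le (n i)
  have h2 := er_le (n 0)
  have hi : (T (n i) : ℝ) = c + 2 ^ x i * 3 ^ y i := by exact_mod_cast congrArg (Int.cast : ℤ → ℝ) (h.rep i)
  have h0 : (T (n 0) : ℝ) = c + 2 ^ x 0 * 3 ^ y 0 := by exact_mod_cast congrArg (Int.cast : ℤ → ℝ) (h.rep 0)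
  have hc : (1 : ℝ) ≤ c := by exact_mod_cast h.hc
  have hθ := θ_bounds
  rw [hi] at h1
  have hpos : (0 : ℝ) < 2 ^ x 0 * 3 ^ y 0 := by positivity
  have hcle : θ * c ≤ α ^ n 0 + 2 := by
    have := (abs_le.1 h2).2
    have : θ * c ≤ θ * T (n 0) := by
      apply mul_le_mul_of_nonneg_left _ (by linarith)
      linarith
    linarith
  have hc0 : 0 ≤ θ * c := by
    apply mul_nonneg <;> linarith
  have := one_le_α_pow (n 0)
  have h1' := abs_le.1 h1
  rw [abs_le]
  constructor <;> linarith

/-- The element of `TR` with `ea ϑ = θ`. -/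
noncomputable def ϑ : TR := -a ^ 2 + 4 * a - 1
theorem ea_ϑ : ea ϑ = θ := by simp only [ϑ, θ, map_add, map_sub, map_neg, map_mul, map_pow, map_one, map_ofNat, ea_a]
theorem eb_ϑ : ‖eb ϑ‖ ≤ 5 := by
  simp only [ϑ, map_add, map_sub, map_neg, map_mul, map_pow, map_one, map_ofNat, eb_a]
  have hb := norm_β_lt
  have hb0 := norm_nonneg β
  have h1 := norm_sub_le (-β ^ 2 + 4 * β) 1
  have h2 := norm_add_le (-β ^ 2) (4 * β)
  rw [norm_neg, norm_pow, norm_mul, Complex.norm_ofNat] at h2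
  rw [norm_one] at h1
  nlinarith

theorem exp_ge (k : ℕ) : (2.718 : ℝ) ^ k ≤ Real.exp k := by
  have : Real.exp k = Real.exp 1 ^ k := by rw [← Real.exp_nat_mul]; simp
  rw [this]
  have := Real.exp_one_gt_d9
  gcongr; linarith

theorem exp_le_α_pow (k : ℕ) : Real.exp (0.6 * k) ≤ α ^ k := by
  have h : Real.exp 0.6 ≤ α := by
    have h5 : Real.exp 0.6 ^ 5 ≤ α ^ 5 := by
      have e : Real.exp 0.6 ^ 5 = Real.exp 1 ^ 3 := by
        rw [← Real.exp_nat_mul, ← Real.exp_nat_mul]; norm_num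
      have h1 : Real.exp 1 ^ 3 ≤ 2.72 ^ 3 := by
        have := Real.exp_one_lt_d9
        have := Real.exp_pos 1
        gcongr; linarith
      have h2 : (1.839286 : ℝ) ^ 5 ≤ α ^ 5 := by
        have := α_bounds.1
        gcongr
      rw [e]
      refine h1.trans (le_trans ?_ h2)
      norm_num
    exact le_of_pow_le_pow_left₀ (by norm_num) α_pos.le h5
  calc Real.exp (0.6 * k) = Real.exp 0.6 ^ k := by rw [← Real.exp_nat_mul]; congr 1; ring
    _ ≤ _ := by
      have := Real.exp_pos 0.6
      gcongr

end Trib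

end

/-! ### Bounding the gap; pairs and triples of representations -/

section
open Finset

namespace Trib
variable {c : ℤ} {n x y : Fin 4 → ℕ}

/-- The linear form bound, applied to the largest representation, bounds the gap. -/
theorem gap_le (h : Sys c n x y) (J L : ℕ) (hL : 160 ≤ L) (hJ : 1000 * L ≤ J) (hm : 6 * J ^ 5 ≤ n 3)
    (hZ : (52 * L * n 3 : ℝ) ≤ Real.exp (L / 16)) :
    0.6 * ((n 3 : ℝ) - n 0) ≤ 3 + 37100 * L ^ 2 * (n 3 / J) := by
  have h03 : n 0 < n 3 := h.mono (by decide)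
  obtain ⟨δ, hδ⟩ := Nat.exists_eq_add_of_lt h03
  have hJ0 : 0 ≤ 37100 * (L : ℝ) ^ 2 * (n 3 / J) := by positivity
  have hδ' : ((n 3 : ℝ) - n 0) = (δ + 1 : ℕ) := by rw [hδ]; push_cast; ring
  rw [hδ']
  by_cases h4 : δ + 1 < 4
  · have : ((δ + 1 : ℕ) : ℝ) ≤ 3 := by exact_mod_cast Nat.le_of_lt_succ h4
    linarith
  have e2 : (7 : ℝ) ≤ Real.exp (2 : ℕ) := le_trans (by norm_num) (exp_ge 2)
  have hθ := θ_bounds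
  have hαδ : (10 : ℝ) ≤ α ^ (δ + 1) := by
    have h1 : (1.839286 : ℝ) ^ 4 ≤ α ^ 4 := by
      have := α_bounds.1
      gcongr
    have h2 : α ^ 4 ≤ α ^ (δ + 1) := pow_le_pow_right₀ (by linarith [α_bounds.1]) (by omega)
    refine le_trans ?_ (h1.trans h2)
    norm_num
  have hαδ0 : 0 < α ^ (δ + 1) := by linarith
  have hJ3 : 2 * J ^ 3 ≤ n 3 := by
    have : J ^ 3 ≤ J ^ 5 := Nat.pow_le_pow_right (by omega) (by norm_num)
    omega
  have key := smooth_form_lower ϑ 1 (by rw [ea_ϑ]; linarith) (by simp) 2 (x 3) (y 3) (n 3) J L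
    (by rw [ea_ϑ]; linarith) (by rw [map_one]; linarith) (eb_ϑ.trans (by linarith))
    (by rw [map_one, norm_one]; linarith) (h.le 3).1 (h.le 3).2 hL hJ hJ3 hm hZ
    (5 / α ^ (δ + 1)) (by rw [div_le_iff₀ hαδ0]; linarith) (by
      rw [ea_ϑ, map_one, one_mul]
      have := h.main_err 3
      have e : 5 / α ^ (δ + 1) * α ^ n 3 = 5 * α ^ n 0 := by
        rw [hδ, add_assoc, pow_add α (n 0)]
        generalize α ^ (δ + 1) = z at hαδ0
        field_simp
      rw [e, mul_comm]
      exact this)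
  have h5 : Real.exp (0.6 * (δ + 1 : ℕ)) ≤ Real.exp (3 + 37100 * L ^ 2 * (n 3 / J)) := by
    refine (exp_le_α_pow _).trans ?_
    have h10 : (10 : ℝ) ≤ Real.exp 3 := by
      have := exp_ge 3
      push_cast at this
      refine le_trans ?_ this
      norm_num
    rw [Real.exp_add]
    rw [Real.exp_neg, show 2 * (5 / α ^ (δ + 1)) = 10 / α ^ (δ + 1) by ring, lt_div_iff₀ hαδ0, inv_mul_lt_iff₀ (Real.exp_pos _)] at key
    nlinarith [Real.exp_pos (37100 * L ^ 2 * (n 3 / J) : ℝ)]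
  exact Real.exp_le_exp.1 h5

set_option maxHeartbeats 800000 in
/-- No three-smooth number times a small `A` approximates `(α ^ nj - α ^ ni) / θ`, by the linear form
bound with `ξ1 = θ * A` and `ξ2 = α ^ (nj - ni) - 1`. -/
theorem pair (ni nj D L K A u v : ℕ) (hij : ni < nj) (hD : nj ≤ ni + D)
    (hK : K = 584064 * L ^ 2 * D) (hL : 160 ≤ L) (hZ : (624 * L * (nj + 1) : ℝ) ≤ Real.exp (L / 16))
    (h1 : 2 * 10 ^ 22 * L ^ 8 * D ≤ ni) (h2 : 2 * 10 ^ 27 * L ^ 10 ≤ ni) (hA : 1 ≤ A)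
    (hA' : (A : ℝ) ≤ Real.exp (3 * K)) (hu : u ≤ nj) (hv : v ≤ nj)
    (hE : |θ * (A * (2 ^ u * 3 ^ v)) - (α ^ nj - α ^ ni)| ≤ Real.exp (3 * K)) : False := by
  obtain ⟨d, hd⟩ := Nat.exists_eq_add_of_lt hij
  have hd' : nj = ni + (d + 1) := by omega
  have hdD : d + 1 ≤ D := by omega
  have hL2 : 1 ≤ L ^ 2 := Nat.one_le_pow _ _ (by omega)
  have hKD : 584064 * D ≤ K := by rw [hK]; nlinarith
  have hK8 : 4 * K ≤ 2 * 10 ^ 22 * L ^ 8 * D := by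
    rw [hK]
    have : L ^ 2 ≤ L ^ 8 := Nat.pow_le_pow_right (by omega) (by norm_num)
    nlinarith
  have hKn : 10 ^ 15 * K ≤ ni := by
    refine le_trans ?_ h1
    rw [hK]
    have : L ^ 2 ≤ L ^ 8 := Nat.pow_le_pow_right (by omega) (by norm_num)
    nlinarith
  set ε := 1.25 * Real.exp (3 * K) / α ^ ni with hε
  have hαi := α_pow_pos ni
  have hα1 : (1.8 : ℝ) ≤ α ^ (d + 1) := by
    have := α_bounds.1
    calc (1.8 : ℝ) ≤ α := by linarith
      _ = α ^ 1 := (pow_one _).symm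
      _ ≤ _ := pow_le_pow_right₀ (by linarith) (by omega)
  have hαd : α ^ (d + 1) ≤ Real.exp (D : ℕ) := by
    refine (α_pow_le_exp _).trans (Real.exp_le_exp.2 ?_)
    exact_mod_cast hdD
  have hθ := θ_bounds
  have hKr : (584064 * D : ℝ) ≤ K := by exact_mod_cast hKD
  have hD1 : (1 : ℝ) ≤ D := by exact_mod_cast (show 1 ≤ D by omega)
  have hA0 : (1 : ℝ) ≤ A := by exact_mod_cast hA
  have e2 : (7 : ℝ) ≤ Real.exp 2 := le_trans (by norm_num) (exp_ge 2)
  have eV : Real.exp 2 * Real.exp (3 * K) * Real.exp D ≤ Real.exp (4 * K : ℕ) := by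
    rw [← Real.exp_add, ← Real.exp_add]
    apply Real.exp_le_exp.2
    push_cast
    linarith
  have eD1 : 1 ≤ Real.exp D := Real.one_le_exp (by linarith)
  have eK1 : 1 ≤ Real.exp (3 * K) := Real.one_le_exp (by linarith)
  have b1 : θ * A * α ^ (d + 1) ≤ Real.exp 2 * Real.exp (3 * K) * Real.exp D := by
    gcongr
    · linarith
  have b2 : Real.exp D ≤ Real.exp (4 * K : ℕ) := by
    apply Real.exp_le_exp.2
    push_cast
    linarith
  have b3 : (5 : ℝ) * A ≤ Real.exp 2 * Real.exp (3 * K) * Real.exp D := by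
    calc (5 : ℝ) * A ≤ Real.exp 2 * Real.exp (3 * K) := by gcongr; linarith
      _ ≤ _ := le_mul_of_one_le_right (by positivity) eD1
  have b4 : (2 : ℝ) ≤ Real.exp (4 * K : ℕ) := by
    have : Real.exp 2 ≤ Real.exp (4 * K : ℕ) := by
      apply Real.exp_le_exp.2
      push_cast
      linarith
    linarith
  have eα : Real.exp (0.6 * ni) ≤ α ^ ni := exp_le_α_pow ni
  have hKnr : (10 ^ 15 * K : ℝ) ≤ ni := by exact_mod_cast hKn
  have hε2 : ε ≤ 1 / 2 := by
    rw [hε, div_le_iff₀ hαi]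
    have : Real.exp 2 * Real.exp (3 * K) ≤ Real.exp (0.6 * ni) := by
      rw [← Real.exp_add]
      apply Real.exp_le_exp.2
      linarith
    nlinarith
  have key := smooth_form_lower (ϑ * A * a ^ (d + 1)) (a ^ (d + 1) - 1)
    (by simp only [map_mul, map_pow, map_natCast, ea_a, ea_ϑ]; exact mul_pos (mul_pos (by linarith) (by linarith)) (by linarith))
    (by simp only [map_sub, map_pow, map_one, ea_a]; linarith) (4 * K) u v nj (200000 * L ^ 2) L
    (by simp only [map_mul, map_pow, map_natCast, ea_a, ea_ϑ]; exact b1.trans eV)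
    (by simp only [map_sub, map_pow, map_one, ea_a]; linarith)
    (by
      simp only [map_mul, map_pow, map_natCast, eb_a, norm_mul, norm_pow, Complex.norm_natCast]
      refine le_trans ?_ (b3.trans eV)
      have hb := norm_β_lt
      have : ‖β‖ ^ (d + 1) ≤ 1 := pow_le_one₀ (norm_nonneg _) (by linarith)
      calc ‖eb ϑ‖ * A * ‖β‖ ^ (d + 1) ≤ 5 * A * 1 := by gcongr; exact eb_ϑ
        _ = _ := mul_one _)
    (by
      simp only [map_sub, map_pow, map_one, eb_a]
      have hb := norm_β_lt
      have : ‖β‖ ^ (d + 1) ≤ 1 := pow_le_one₀ (norm_nonneg _) (by linarith)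
      have := norm_sub_le (β ^ (d + 1)) 1
      rw [norm_pow, norm_one] at this
      linarith)
    hu hv hL (by nlinarith) ?_ ?_ ?_ ε hε2 ?_
  · have hq : 37100 * (L : ℝ) ^ 2 * (nj / (200000 * L ^ 2 : ℕ)) = 0.1855 * nj := by
      have : (L : ℝ) ≠ 0 := by
        have : L ≠ 0 := by omega
        exact_mod_cast this
      push_cast
      field_simp
      ring
    have hnj : (nj : ℝ) ≤ ni + D := by exact_mod_cast hD
    rw [hq, hε, show 2 * (1.25 * Real.exp (3 * K) / α ^ ni) = 2.5 * Real.exp (3 * K) / α ^ ni by ring,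
      lt_div_iff₀ hαi] at key
    have k2 : Real.exp (-(0.1855 * nj)) * Real.exp (0.6 * ni) < Real.exp 2 * Real.exp (3 * K) := by
      calc _ ≤ Real.exp (-(0.1855 * nj)) * α ^ ni := by gcongr
        _ < _ := key
        _ ≤ _ := by gcongr; linarith
    rw [← Real.exp_add, ← Real.exp_add, Real.exp_lt_exp] at k2
    linarith
  · rw [hK]
    have : 4 * (584064 * L ^ 2 * D) * (200000 * L ^ 2) ^ 3 ≤ 2 * 10 ^ 22 * L ^ 8 * D := by
      have : 4 * (584064 * L ^ 2 * D) * (200000 * L ^ 2) ^ 3 = 18690048000000000000000 * (L ^ 8 * D) := by ring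
      rw [this, mul_assoc]
      gcongr
      norm_num
    omega
  · have : 6 * (200000 * L ^ 2) ^ 5 ≤ 2 * 10 ^ 27 * L ^ 10 := by
      have : 6 * (200000 * L ^ 2) ^ 5 = 1920000000000000000000000000 * L ^ 10 := by ring
      rw [this]
      gcongr
      norm_num
    omega
  · refine le_trans ?_ hZ
    gcongr
    · norm_num
    · linarith
  · simp only [map_mul, map_sub, map_pow, map_one, map_natCast, ea_a, ea_ϑ]
    have e1 : 2 ^ u * 3 ^ v * (θ * A * α ^ (d + 1)) - (α ^ (d + 1) - 1) * α ^ nj =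
      α ^ (d + 1) * (θ * (A * (2 ^ u * 3 ^ v)) - (α ^ nj - α ^ ni)) := by
      rw [hd', pow_add α ni]; ring
    have e3 : ε * ((α ^ (d + 1) - 1) * α ^ nj) =
      α ^ (d + 1) * (1.25 * (α ^ (d + 1) - 1) * Real.exp (3 * K)) := by
      rw [hε, hd', pow_add α ni]
      generalize α ^ (d + 1) = z
      generalize α ^ ni = w at hαi
      field_simp
    rw [e1, e3, abs_mul, abs_of_pos (by linarith : 0 < α ^ (d + 1))]
    gcongr
    refine hE.trans ?_
    apply le_mul_of_one_le_left (by positivity)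
    linarith

theorem Sys.S_ge (h : Sys c n x y) (i : Fin 4) (hi : 0 < i) (h0 : (2 : ℝ) ≤ 2 ^ x 0 * 3 ^ y 0) :
    α ^ n i ≤ 8 * (2 ^ x i * 3 ^ y i) := by
  have h1 := (abs_le.1 (h.diffR 0 i)).1
  have hθ := θ_bounds
  have h2 : α ^ n 0 * α ≤ α ^ n i := by
    rw [← pow_succ]
    exact pow_le_pow_right₀ (by linarith [α_bounds.1]) (h.mono hi)
  have h3 := α_bounds.1
  have h4 := α_pow_pos (n 0)
  have h5 : 0 < (2 : ℝ) ^ x i * 3 ^ y i := by positivity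
  have h6 : θ * (2 ^ x i * 3 ^ y i) ≤ 3 * (2 ^ x i * 3 ^ y i) := by gcongr; linarith
  have h7 : α ^ n 0 * 1.8 ≤ α ^ n 0 * α := by gcongr; linarith
  have h8 : 2.974 * 2 ≤ θ * (2 ^ x 0 * 3 ^ y 0) := by gcongr <;> linarith [hθ.1]
  linarith

theorem T_mono1 (n : ℕ) : T n ≤ T (n + 1) := by
  match n with
  | 0 => simp [T]
  | 1 => simp [T]
  | n + 2 =>
    have := T_rec n; have := T_nonneg n; have := T_nonneg (n + 1)
    rw [show n + 2 + 1 = n + 3 by ring]; linarith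

/-- No three representations have all their three-smooth numbers divisible by a high power of `p`. In
the exceptional case of `padic_separation`, the three representations give an equation between
three-smooth numbers. -/
theorem triple (h : Sys c n x y) (p : ℕ) (hp : p = 2 ∨ p = 3) (D L X : ℕ) (i j k : Fin 4)
    (hij : i < j) (hjk : j < k) (hL : 160 ≤ L) (hD : n k ≤ n i + D) (hm : 1014 * D * L ≤ n i)
    (h5 : 5 ≤ n i)
    (hZ : (624 * L * (n i + 1) : ℝ) ≤ Real.exp (L / 16)) (hX : 584064 * L ^ 2 * D ≤ X)
    (H : ∀ l, l = i ∨ l = j ∨ l = k → (p : ℤ) ^ X ∣ 2 ^ x l * 3 ^ y l) : False := by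
  have a1 : n i < n j := h.mono hij
  have a2 : n j < n k := h.mono hjk
  by_cases hne : n j - n i = 3 ∧ n k - n j = 1
  · obtain ⟨m, hm⟩ : ∃ m, n i = m + 3 := ⟨n i - 3, by omega⟩
    have ej : n j = m + 6 := by omega
    have ek : n k = m + 7 := by omega
    have r1 := h.rep i
    have r2 := h.rep j
    have r3 := h.rep k
    rw [hm] at r1
    rw [ej] at r2
    rw [ek] at r3
    have t1 := T_rec m
    have t2 := T_rec (m + 1)
    have t3 := T_rec (m + 2)
    have t4 := T_rec (m + 3)
    have t5 := T_rec (m + 4)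
    have t0 := T_nonneg m
    have t0' := T_nonneg (m + 1)
    have u0 := T_mono1 m
    have u1 := T_mono1 (m + 1)
    have u2 := T_mono1 (m + 2)
    have hc := h.hc
    simp only [add_assoc, Nat.reduceAdd] at t1 t2 t3 t4 t5 u0 u1 u2
    have E : (2 ^ x i * 3 ^ y i + 2 ^ x k * 3 ^ y k : ℤ) = 2 ^ (x j + 1) * 3 ^ y j := by
      rw [pow_succ, mul_assoc, mul_comm 2, ← mul_assoc]
      linarith
    have g := gersonides _ (x i) (y i) (x k) (y k) (x j + 1) (y j) le_rfl (by exact_mod_cast E)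
    have g' : (2 ^ x k * 3 ^ y k : ℤ) ≤ 8 * (2 ^ x i * 3 ^ y i) := by exact_mod_cast g
    have pi : (1 : ℤ) ≤ 2 ^ x i * 3 ^ y i := by
      have : (0 : ℤ) < 2 ^ x i * 3 ^ y i := by positivity
      linarith
    linarith
  · have d1 := h.diff i j
    have d2 := h.diff i k
    have := padic_separation p hp (n i) (n j - n i) (n k - n j) D L X (by omega) (by omega) (by omega) hne hL hm hZ
      (by
        rw [show n i + (n j - n i) = n j by omega, d1]
        exact dvd_sub (H j (by simp)) (H i (by simp)))
      (by
        rw [show n i + (n j - n i + (n k - n j)) = n k by omega, d2]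
        exact dvd_sub (H k (by simp)) (H i (by simp)))
    omega

end Trib

end

/-! ### Excluding systems with small gap and large indices -/

section
open Finset

namespace Trib
variable {c : ℤ} {n x y : Fin 4 → ℕ}

/-- For two three-smooth numbers, one of whose exponents is small in both, the quotient of the larger
by their greatest common divisor is bounded in terms of their ratio. -/
theorem diff_pow_le (u1 v1 u2 v2 K : ℕ) (B : ℝ) (hB : 1 ≤ B) (hK : (u1 ≤ K ∧ u2 ≤ K) ∨ (v1 ≤ K ∧ v2 ≤ K))
    (h : (2 : ℝ) ^ u2 * 3 ^ v2 ≤ B * (2 ^ u1 * 3 ^ v1)) :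
    (2 : ℝ) ^ (u2 - min u1 u2) * 3 ^ (v2 - min v1 v2) ≤ 3 ^ (2 * K) * B := by
  have h23 : ∀ k : ℕ, (2 : ℝ) ^ k ≤ 3 ^ k := fun k => by gcongr; norm_num
  have p1 : ∀ k : ℕ, (1 : ℝ) ≤ 2 ^ k := fun k => one_le_pow₀ (by norm_num)
  have q1 : ∀ k : ℕ, (1 : ℝ) ≤ 3 ^ k := fun k => one_le_pow₀ (by norm_num)
  have e1 : (2 : ℝ) ^ u2 * 3 ^ v2 = (2 ^ (u2 - min u1 u2) * 3 ^ (v2 - min v1 v2)) *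
      (2 ^ min u1 u2 * 3 ^ min v1 v2) := by
    rw [mul_mul_mul_comm, ← pow_add, ← pow_add]
    congr 2 <;> omega
  have e2 : (2 : ℝ) ^ u1 * 3 ^ v1 = (2 ^ (u1 - min u1 u2) * 3 ^ (v1 - min v1 v2)) *
      (2 ^ min u1 u2 * 3 ^ min v1 v2) := by
    rw [mul_mul_mul_comm, ← pow_add, ← pow_add]
    congr 2 <;> omega
  rw [e1, e2, ← mul_assoc B] at h
  have h' := le_of_mul_le_mul_right h (by positivity)
  have hKK : (3 : ℝ) ^ (2 * K) = 3 ^ K * 3 ^ K := by rw [two_mul, pow_add]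
  rw [hKK]
  rcases hK with ⟨k1, k2⟩ | ⟨k1, k2⟩
  · have A1 : (2 : ℝ) ^ (u2 - min u1 u2) ≤ 3 ^ K :=
      (h23 _).trans (pow_le_pow_right₀ (by norm_num) (by omega))
    have A2 : (2 : ℝ) ^ (u1 - min u1 u2) ≤ 3 ^ K :=
      (h23 _).trans (pow_le_pow_right₀ (by norm_num) (by omega))
    rcases le_total v1 v2 with hv | hv
    · have z : v1 - min v1 v2 = 0 := by omega
      rw [z, pow_zero, mul_one] at h'
      calc _ ≤ B * 2 ^ (u1 - min u1 u2) := h'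
        _ ≤ B * 3 ^ K := by gcongr
        _ ≤ 3 ^ K * (3 ^ K * B) := by nlinarith [q1 K, mul_pos (by linarith : 0 < B) (by linarith [q1 K] : (0:ℝ) < 3 ^ K)]
        _ = _ := by ring
    · have z : v2 - min v1 v2 = 0 := by omega
      rw [z, pow_zero, mul_one]
      calc _ ≤ (3 : ℝ) ^ K * (1 * 1) := by rw [mul_one, mul_one]; exact A1
        _ ≤ 3 ^ K * (3 ^ K * B) := by gcongr; exact q1 K
        _ = _ := by ring
  · have A1 : (3 : ℝ) ^ (v2 - min v1 v2) ≤ 3 ^ K := pow_le_pow_right₀ (by norm_num) (by omega)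
    have A2 : (3 : ℝ) ^ (v1 - min v1 v2) ≤ 3 ^ K := pow_le_pow_right₀ (by norm_num) (by omega)
    rcases le_total u1 u2 with hv | hv
    · have z : u1 - min u1 u2 = 0 := by omega
      rw [z, pow_zero, one_mul] at h'
      calc _ ≤ B * 3 ^ (v1 - min v1 v2) := h'
        _ ≤ B * 3 ^ K := by gcongr
        _ ≤ 3 ^ K * (3 ^ K * B) := by nlinarith [q1 K, mul_pos (by linarith : 0 < B) (by linarith [q1 K] : (0:ℝ) < 3 ^ K)]
        _ = _ := by ring
    · have z : u2 - min u1 u2 = 0 := by omega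
      rw [z, pow_zero, one_mul]
      calc _ ≤ (3 : ℝ) ^ K * (1 * 1) := by rw [mul_one, mul_one]; exact A1
        _ ≤ 3 ^ K * (3 ^ K * B) := by gcongr; exact q1 K
        _ = _ := by ring

theorem nine_pow_le (K : ℕ) : (3 : ℝ) ^ (2 * K) ≤ Real.exp (2.5 * K) := by
  have h : (3 : ℝ) ^ 4 ≤ Real.exp 1 ^ 5 := by
    have := Real.exp_one_gt_d9
    calc (3 : ℝ) ^ 4 ≤ 2.718 ^ 5 := by norm_num
      _ ≤ _ := by gcongr; linarith
  have h2 : ((3 : ℝ) ^ 2) ≤ Real.exp 2.5 := by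
    have e : Real.exp 2.5 ^ 2 = Real.exp 1 ^ 5 := by
      rw [← Real.exp_nat_mul, ← Real.exp_nat_mul]; norm_num
    refine le_of_pow_le_pow_left₀ (n := 2) (by norm_num) (Real.exp_pos _).le ?_
    rw [e]
    refine le_trans ?_ h
    norm_num
  calc (3 : ℝ) ^ (2 * K) = (3 ^ 2) ^ K := by rw [pow_mul]
    _ ≤ Real.exp 2.5 ^ K := by gcongr
    _ = _ := by rw [← Real.exp_nat_mul]; congr 1; ring

/-- No two of the last three representations have small exponents of 2, or of 3: their difference
would be a three-smooth number times a small integer, against `pair`. -/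
theorem small_exponents_contra (h : Sys c n x y) (D L K : ℕ) (hL : 160 ≤ L) (hK : K = 584064 * L ^ 2 * D)
    (hD1 : 1 ≤ D)
    (hD : n 3 ≤ n 0 + D) (hZ : (624 * L * (n 3 + 1) : ℝ) ≤ Real.exp (L / 16))
    (h1 : 2 * 10 ^ 22 * L ^ 8 * D ≤ n 0) (h2 : 2 * 10 ^ 27 * L ^ 10 ≤ n 0)
    (h0 : (2 : ℝ) ≤ 2 ^ x 0 * 3 ^ y 0) (i j : Fin 4) (hi : 0 < i) (hij : i < j)
    (hc : (x i ≤ K ∧ x j ≤ K) ∨ (y i ≤ K ∧ y j ≤ K)) : False := by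
  have h3 : n j ≤ n 3 := h.mono.monotone (Fin.le_last j)
  have h4 : n 0 ≤ n i := h.mono.monotone hi.le
  have h5 : n i < n j := h.mono hij
  have hnj : (n j : ℝ) ≤ n 3 := by exact_mod_cast h3
  have hL2 : 1 ≤ L ^ 2 := Nat.one_le_pow _ _ (by omega)
  have hKD : 584064 * D ≤ K := by rw [hK]; nlinarith
  have hKr : (584064 * D : ℝ) ≤ K := by exact_mod_cast hKD
  have hD1r : (1 : ℝ) ≤ D := by exact_mod_cast hD1
  have Sj := (h.S_lt j).le
  have Si := h.S_ge i hi h0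
  have Sij : (2 : ℝ) ^ x j * 3 ^ y j ≤ (8 * Real.exp D) * (2 ^ x i * 3 ^ y i) := by
    have e : α ^ n j ≤ Real.exp D * α ^ n i := by
      rw [show n j = (n j - n i) + n i by omega, pow_add]
      gcongr
      · exact (α_pow_pos _).le
      · refine (α_pow_le_exp _).trans (Real.exp_le_exp.2 ?_)
        exact_mod_cast (show n j - n i ≤ D by omega)
    calc _ ≤ α ^ n j := Sj
      _ ≤ Real.exp D * α ^ n i := e
      _ ≤ Real.exp D * (8 * (2 ^ x i * 3 ^ y i)) := by gcongr
      _ = _ := by ring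
  have eD1 : 1 ≤ Real.exp D := Real.one_le_exp (by linarith)
  have bd := diff_pow_le (x i) (y i) (x j) (y j) K _ (by linarith) hc Sij
  -- the quotient of the difference by the common smooth part
  have hlt : (2 ^ x i * 3 ^ y i : ℤ) < 2 ^ x j * 3 ^ y j := by
    have := h.diff i j
    have : T (n i) < T (n j) := by
      have m : ∀ k l : ℕ, 2 ≤ k → T k < T (k + 1 + l) := by
        intro k l hk
        induction l with
        | zero =>
          obtain ⟨k, rfl⟩ := Nat.exists_eq_add_of_le' hk
          have h1 := T_rec k
          have hp : ∀ q : ℕ, 1 ≤ T (q + 1) := by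
            intro q
            induction q with
            | zero => simp [T]
            | succ q ih => exact ih.trans (T_mono1 _)
          have := hp k
          have := T_nonneg k
          rw [show k + 2 + 1 + 0 = k + 3 by ring]
          linarith
        | succ l ih => exact lt_of_lt_of_le ih (T_mono1 _)
      have hn2 : 2 ≤ n i := by
        have : 1 ≤ L ^ 10 := Nat.one_le_pow _ _ (by omega)
        omega
      have := m (n i) (n j - n i - 1) hn2
      rwa [show n i + 1 + (n j - n i - 1) = n j by omega] at this
    linarith
  set u := min (x i) (x j) with hu
  set v := min (y i) (y j) with hv
  have ej : (2 ^ x j * 3 ^ y j : ℤ) = 2 ^ (x j - u) * 3 ^ (y j - v) * (2 ^ u * 3 ^ v) := by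
    rw [mul_mul_mul_comm, ← pow_add, ← pow_add]
    congr 2 <;> omega
  have ei : (2 ^ x i * 3 ^ y i : ℤ) = 2 ^ (x i - u) * 3 ^ (y i - v) * (2 ^ u * 3 ^ v) := by
    rw [mul_mul_mul_comm, ← pow_add, ← pow_add]
    congr 2 <;> omega
  obtain ⟨A, hA⟩ : ∃ A : ℕ, (A : ℤ) = 2 ^ (x j - u) * 3 ^ (y j - v) - 2 ^ (x i - u) * 3 ^ (y i - v) := by
    apply Int.eq_ofNat_of_zero_le _ |>.imp (fun _ h => h.symm)
    rw [ei, ej] at hlt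
    have := lt_of_mul_lt_mul_right hlt (by positivity)
    linarith
  have hAS : (A * (2 ^ u * 3 ^ v) : ℤ) = 2 ^ x j * 3 ^ y j - 2 ^ x i * 3 ^ y i := by
    rw [ei, ej, hA]; ring
  have hA1 : 1 ≤ A := by
    by_contra hA0
    have : A = 0 := by omega
    rw [this] at hAS
    push_cast at hAS
    linarith
  have hASr : ((A : ℝ) * (2 ^ u * 3 ^ v)) = 2 ^ x j * 3 ^ y j - 2 ^ x i * 3 ^ y i := by
    exact_mod_cast hAS
  refine pair (n i) (n j) D L K A u v h5 (by omega) hK hL ?_ (by omega) (by omega) hA1 ?_ ?_ ?_ ?_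
  · refine le_trans ?_ hZ
    gcongr
  · have hAr : (A : ℝ) = 2 ^ (x j - u) * 3 ^ (y j - v) - 2 ^ (x i - u) * 3 ^ (y i - v) := by
      exact_mod_cast hA
    have : (0 : ℝ) < 2 ^ (x i - u) * 3 ^ (y i - v) := by positivity
    have e3 : (8 : ℝ) ≤ Real.exp 3 := by
      have := exp_ge 3
      push_cast at this
      refine le_trans ?_ this
      norm_num
    calc (A : ℝ) ≤ 3 ^ (2 * K) * (8 * Real.exp D) := by linarith
      _ ≤ Real.exp (2.5 * K) * (Real.exp 3 * Real.exp D) := by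
        gcongr
        exact nine_pow_le K
      _ = Real.exp (2.5 * K + (3 + D)) := by rw [Real.exp_add, Real.exp_add]
      _ ≤ _ := Real.exp_le_exp.2 (by linarith)
  · exact (min_le_right _ _).trans (h.le j).1
  · exact (min_le_right _ _).trans (h.le j).2
  · rw [hASr]
    refine (h.diffR i j).trans ?_
    have e2 := exp_ge 2
    push_cast at e2
    calc (4 : ℝ) ≤ Real.exp 2 := le_trans (by norm_num) e2
      _ ≤ _ := Real.exp_le_exp.2 (by linarith)

/-- A system with small gap has bounded indices: if `2 ^ x 0 * 3 ^ y 0` is small, `pair` applies to the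
first two representations; otherwise one of `x 0`, `y 0` is at least `K`, and the pigeonhole principle
for the other three representations leads to `triple` or to `small_exponents_contra`. -/
theorem no_small_gap (h : Sys c n x y) (D L : ℕ) (hL : 160 ≤ L) (hD1 : 1 ≤ D)
    (hD : n 3 ≤ n 0 + D) (hZ : (624 * L * (n 3 + 1) : ℝ) ≤ Real.exp (L / 16))
    (h1 : 2 * 10 ^ 22 * L ^ 8 * D ≤ n 0) (h2 : 2 * 10 ^ 27 * L ^ 10 ≤ n 0) : False := by
  obtain ⟨K, hK⟩ : ∃ K, K = 584064 * L ^ 2 * D := ⟨_, rfl⟩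
  have hL2 : 1 ≤ L ^ 2 := Nat.one_le_pow _ _ (by omega)
  have hKD : 584064 * D ≤ K := by rw [hK]; nlinarith
  have hKr : (584064 * D : ℝ) ≤ K := by exact_mod_cast hKD
  have hD1r : (1 : ℝ) ≤ D := by exact_mod_cast hD1
  have l01 : n 0 < n 1 := h.mono (by decide)
  have l13 : n 1 < n 3 := h.mono (by decide)
  have hZ' : ∀ m : ℕ, m ≤ n 3 → (624 * L * (m + 1) : ℝ) ≤ Real.exp (L / 16) := by
    intro m hm
    refine le_trans ?_ hZ
    gcongr
  by_cases hS : (2 : ℝ) ^ x 0 * 3 ^ y 0 ≤ 6 ^ K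
  · refine pair (n 0) (n 1) D L K 1 (x 1) (y 1) l01 (by omega) hK hL (hZ' _ l13.le) h1 h2 le_rfl ?_
      (h.le 1).1 (h.le 1).2 ?_
    · push_cast
      exact Real.one_le_exp (by linarith)
    · push_cast
      rw [one_mul]
      have h3 := abs_le.1 (h.diffR 0 1)
      have hθ := θ_bounds
      have h6 := six_pow_le K
      have hS0 : (0 : ℝ) < 2 ^ x 0 * 3 ^ y 0 := by positivity
      have t : θ * (2 ^ x 0 * 3 ^ y 0) ≤ 3 * Real.exp (2 * K) := by
        gcongr
        · linarith
        · linarith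
      have t0 : 0 < θ * (2 ^ x 0 * 3 ^ y 0) := mul_pos (by linarith) hS0
      have e2 := exp_ge 2
      push_cast at e2
      have e7 : (7 : ℝ) ≤ Real.exp 2 := le_trans (by norm_num) e2
      have e1 : 1 ≤ Real.exp (2 * K) := Real.one_le_exp (by linarith)
      have : Real.exp 2 * Real.exp (2 * K) ≤ Real.exp (3 * K) := by
        rw [← Real.exp_add]
        exact Real.exp_le_exp.2 (by linarith)
      have : 7 * Real.exp (2 * K) ≤ Real.exp 2 * Real.exp (2 * K) := by gcongr
      rw [abs_le]
      constructor <;> linarith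
  · push Not at hS
    have h6K : (2 : ℝ) ≤ 6 ^ K := by
      calc (2 : ℝ) ≤ 6 ^ 1 := by norm_num
        _ ≤ _ := pow_le_pow_right₀ (by norm_num) (by omega)
    have h0 : (2 : ℝ) ≤ 2 ^ x 0 * 3 ^ y 0 := by linarith
    have hm : 1014 * D * L ≤ n 0 := by
      refine le_trans ?_ h1
      have : L ^ 1 ≤ L ^ 8 := Nat.pow_le_pow_right (by omega) (by norm_num)
      nlinarith
    have h5 : 5 ≤ n 0 := by
      have : 1 ≤ L ^ 10 := Nat.one_le_pow _ _ (by omega)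
      omega
    have or0 : K ≤ x 0 ∨ K ≤ y 0 := by
      by_contra hcon
      push Not at hcon
      have : (2 : ℝ) ^ x 0 * 3 ^ y 0 ≤ 2 ^ K * 3 ^ K := by
        gcongr
        · norm_num
        · exact hcon.1.le
        · norm_num
        · exact hcon.2.le
      rw [← mul_pow] at this
      norm_num at this
      linarith
    have cII := fun i j hi hij => small_exponents_contra h D L K hL hK hD1 hD hZ h1 h2 h0 i j hi hij
    have l3 : ∀ k : Fin 4, n k ≤ n 0 + D := fun k => (h.mono.monotone (Fin.le_last k)).trans hD
    rcases or0 with hx0 | hy0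
    · have tr : ∀ i j : Fin 4, 0 < i → i < j → K ≤ x i → K ≤ x j → False := by
        intro i j hi hij hxi hxj
        refine triple h 2 (Or.inl rfl) D L K 0 i j hi hij hL (l3 j) hm h5 (hZ' _ (by omega)) hK.ge ?_
        rintro l (rfl | rfl | rfl) <;>
          exact Dvd.dvd.mul_right (pow_dvd_pow _ (by assumption)) _
      have t12 := tr 1 2 (by decide) (by decide)
      have t13 := tr 1 3 (by decide) (by decide)
      have t23 := tr 2 3 (by decide) (by decide)
      have c12 := cII 1 2 (by decide) (by decide)
      have c13 := cII 1 3 (by decide) (by decide)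
      have c23 := cII 2 3 (by decide) (by decide)
      by_cases z1 : K ≤ x 1 <;> by_cases z2 : K ≤ x 2 <;> by_cases z3 : K ≤ x 3 <;>
        first
        | exact t12 z1 z2
        | exact t13 z1 z3
        | exact t23 z2 z3
        | exact c12 (Or.inl ⟨by omega, by omega⟩)
        | exact c13 (Or.inl ⟨by omega, by omega⟩)
        | exact c23 (Or.inl ⟨by omega, by omega⟩)
    · have tr : ∀ i j : Fin 4, 0 < i → i < j → K ≤ y i → K ≤ y j → False := by
        intro i j hi hij hxi hxj
        refine triple h 3 (Or.inr rfl) D L K 0 i j hi hij hL (l3 j) hm h5 (hZ' _ (by omega)) hK.ge ?_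
        rintro l (rfl | rfl | rfl) <;>
          exact Dvd.dvd.mul_left (pow_dvd_pow _ (by assumption)) _
      have t12 := tr 1 2 (by decide) (by decide)
      have t13 := tr 1 3 (by decide) (by decide)
      have t23 := tr 2 3 (by decide) (by decide)
      have c12 := cII 1 2 (by decide) (by decide)
      have c13 := cII 1 3 (by decide) (by decide)
      have c23 := cII 2 3 (by decide) (by decide)
      by_cases z1 : K ≤ y 1 <;> by_cases z2 : K ≤ y 2 <;> by_cases z3 : K ≤ y 3 <;>
        first
        | exact t12 z1 z2
        | exact t13 z1 z3
        | exact t23 z2 z3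
        | exact c12 (Or.inr ⟨by omega, by omega⟩)
        | exact c13 (Or.inr ⟨by omega, by omega⟩)
        | exact c23 (Or.inr ⟨by omega, by omega⟩)

end Trib

end

/-! ### The initial bound -/

section
open Finset

namespace Trib
variable {c : ℤ} {n x y : Fin 4 → ℕ}

set_option exponentiation.threshold 3000 in
theorem exp_beats (L : ℕ) (hL : 13100 ≤ L) :
    (624 * 10 ^ 141 * (L + 1) ^ 51 : ℝ) ≤ Real.exp (L / 16) := by
  induction L, hL using Nat.le_induction with
  | base =>
    have h := exp_ge 818
    have h2 : Real.exp (818 : ℕ) ≤ Real.exp ((13100 : ℕ) / 16) := Real.exp_le_exp.2 (by norm_num)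
    refine le_trans ?_ (h.trans h2)
    norm_num
  | succ L hL ih =>
    have hLr : (13100 : ℝ) ≤ L := by exact_mod_cast hL
    have e : Real.exp ((L + 1 : ℕ) / 16) = Real.exp (L / 16) * Real.exp (1 / 16) := by
      rw [← Real.exp_add]; congr 1; push_cast; ring
    have h1 : ((L : ℝ) + 2) ^ 51 ≤ (L + 1) ^ 51 * Real.exp (1 / 16) := by
      have h2 : (L : ℝ) + 2 ≤ (L + 1) * Real.exp (1 / (16 * 51)) := by
        have := Real.add_one_le_exp (1 / (16 * 51) : ℝ)
        have h3 : ((L : ℝ) + 1) * (1 / (16 * 51) + 1) ≤ (L + 1) * Real.exp (1 / (16 * 51)) := by gcongr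
        refine le_trans ?_ h3
        linarith
      calc ((L : ℝ) + 2) ^ 51 ≤ ((L + 1) * Real.exp (1 / (16 * 51))) ^ 51 := by gcongr
        _ = _ := by rw [mul_pow, ← Real.exp_nat_mul]; congr 2; norm_num
    rw [e]
    calc (624 * 10 ^ 141 * ((L + 1 : ℕ) + 1) ^ 51 : ℝ) = 624 * 10 ^ 141 * (L + 2) ^ 51 := by
          push_cast; ring
      _ ≤ 624 * 10 ^ 141 * ((L + 1) ^ 51 * Real.exp (1 / 16)) := by gcongr
      _ = 624 * 10 ^ 141 * (L + 1) ^ 51 * Real.exp (1 / 16) := by ring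
      _ ≤ _ := by gcongr

/-- For large `n 3` the gap is small enough, by `gap_le`, for `no_small_gap`. -/
theorem no_big (h : Sys c n x y) (L : ℕ) (hL : 160 ≤ L)
    (hZ : (624 * L * (n 3 + 1) : ℝ) ≤ Real.exp (L / 16)) (hN : 10 ^ 141 * L ^ 50 ≤ n 3) : False := by
  have h03 : n 0 < n 3 := h.mono (by decide)
  have hL1 : ∀ k, 1 ≤ L ^ k := fun k => Nat.one_le_pow _ _ (by omega)
  have hLr : (160 : ℝ) ≤ L := by exact_mod_cast hL
  have key := gap_le h (10 ^ 28 * L ^ 10) L hL (by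
      have : L ^ 1 ≤ L ^ 10 := Nat.pow_le_pow_right (by omega) (by norm_num)
      rw [pow_one] at this
      omega)
    (by
      have : 6 * (10 ^ 28 * L ^ 10) ^ 5 = 6 * 10 ^ 140 * L ^ 50 := by ring
      rw [this]
      refine le_trans ?_ hN
      gcongr
      norm_num)
    (by
      refine le_trans ?_ hZ
      gcongr
      · norm_num
      · linarith)
  have hNr : (10 ^ 141 * L ^ 50 : ℝ) ≤ n 3 := by exact_mod_cast hN
  have l0 : (0 : ℝ) < L := by linarith
  have p8 : (1 : ℝ) ≤ (L : ℝ) ^ 8 := one_le_pow₀ (by linarith)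
  have q1 : 37100 * (L : ℝ) ^ 2 * (n 3 / (10 ^ 28 * L ^ 10 : ℕ)) = 371 / 10 ^ 26 * (n 3 / L ^ 8) := by
    push_cast
    field_simp
    ring
  rw [q1] at key
  have p42 : (1 : ℝ) ≤ (L : ℝ) ^ 42 := one_le_pow₀ (by linarith)
  have q2 : (10 ^ 141 : ℝ) ≤ n 3 / L ^ 8 := by
    rw [le_div_iff₀ (by positivity)]
    refine le_trans ?_ hNr
    have : (L : ℝ) ^ 50 = L ^ 42 * L ^ 8 := by ring
    rw [this]
    nlinarith
  obtain ⟨D, hD⟩ := Nat.exists_eq_add_of_lt h03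
  have hDr : (n 3 : ℝ) = n 0 + (D + 1 : ℕ) := by rw [hD]; push_cast; ring
  have key2 : ((D + 1 : ℕ) : ℝ) ≤ 10 ^ 3 / 10 ^ 26 * (n 3 / L ^ 8) := by linarith
  have key3 : (10 ^ 23 * L ^ 8 * (D + 1 : ℕ) : ℝ) ≤ n 3 := by
    have : (n 3 : ℝ) = n 3 / L ^ 8 * L ^ 8 := by field_simp
    calc (10 ^ 23 * L ^ 8 * (D + 1 : ℕ) : ℝ) ≤ 10 ^ 23 * L ^ 8 * (10 ^ 3 / 10 ^ 26 * (n 3 / L ^ 8)) := by gcongr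
      _ = n 3 := by field_simp
  have key4 : 10 ^ 23 * L ^ 8 * (D + 1) ≤ n 3 := by exact_mod_cast key3
  have h8 := hL1 8
  have k5 : D + 1 ≤ L ^ 8 * (D + 1) := Nat.le_mul_of_pos_left _ h8
  have k4' : 10 ^ 23 * (L ^ 8 * (D + 1)) ≤ n 3 := by rw [← mul_assoc]; exact key4
  refine no_small_gap h (D + 1) L hL (by omega) (by omega) hZ ?_ ?_
  · rw [mul_assoc]
    omega
  · have : L ^ 10 ≤ L ^ 50 := Nat.pow_le_pow_right (by omega) (by norm_num)
    omega

set_option exponentiation.threshold 3000 in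
theorem initial (h : Sys c n x y) : n 3 < 10 ^ 347 := by
  by_contra hcon
  push Not at hcon
  have hex : ∃ L, n 3 < 10 ^ 141 * (L + 1) ^ 50 := ⟨n 3, by
    have h1 : n 3 + 1 ≤ (n 3 + 1) ^ 50 := Nat.le_self_pow (by norm_num) _
    omega⟩
  have h1 := Nat.find_spec hex
  have h2 := fun m => Nat.find_min hex (m := m)
  set L := Nat.find hex with hLdef
  have hL : 13100 ≤ L := by
    by_contra hlt
    have : (L + 1) ^ 50 ≤ 13100 ^ 50 := Nat.pow_le_pow_left (by omega) _
    have : 10 ^ 141 * (L + 1) ^ 50 ≤ 10 ^ 141 * 13100 ^ 50 := Nat.mul_le_mul_left _ this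
    have : 10 ^ 141 * 13100 ^ 50 ≤ 10 ^ 347 := by norm_num
    omega
  refine no_big h L (by omega) ?_ ?_
  · refine le_trans ?_ (exp_beats L hL)
    have : (n 3 : ℝ) + 1 ≤ 10 ^ 141 * (L + 1) ^ 50 := by exact_mod_cast h1
    have aux : ∀ l N C : ℝ, 0 ≤ l → 0 ≤ C → N + 1 ≤ C * (l + 1) ^ 50 → 624 * l * (N + 1) ≤ 624 * C * (l + 1) ^ 51 := by
      intro l N C hl hC hN
      calc 624 * l * (N + 1) ≤ 624 * l * (C * (l + 1) ^ 50) := by gcongr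
        _ ≤ 624 * (l + 1) * (C * (l + 1) ^ 50) := by gcongr; linarith
        _ = _ := by ring
    exact aux L (n 3) (10 ^ 141) (Nat.cast_nonneg _) (by positivity) this
  · have := h2 (L - 1) (by omega)
    rw [show L - 1 + 1 = L by omega] at this
    omega

/-- The bound on `n 3` once the gap is known to be at most `D`; `L` depends only on the logarithm of the
previous bound `N`. -/
theorem reduce (h : Sys c n x y) (N D L E : ℕ) (hN : n 3 < N) (hD : n 3 ≤ n 0 + D) (hD1 : 1 ≤ D)
    (hL : 160 ≤ L) (hE : E ≤ L / 16) (hZ : 624 * L * N * 1000 ^ E ≤ 2718 ^ E)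
    (hDL : D ≤ 100000 * L ^ 2) : n 3 < 2 * 10 ^ 27 * L ^ 10 + D := by
  by_contra hcon
  push Not at hcon
  refine no_small_gap h D L hL hD1 hD ?_ ?_ (by omega)
  · have h1 : (E : ℝ) ≤ L / 16 := by
      have : E * 16 ≤ L := (Nat.le_div_iff_mul_le (by norm_num)).1 hE
      have : (E * 16 : ℝ) ≤ L := by exact_mod_cast this
      linarith
    refine le_trans ?_ ((exp_ge E).trans (Real.exp_le_exp.2 h1))
    have h2 : (624 * L * N * 1000 ^ E : ℝ) ≤ 2718 ^ E := by exact_mod_cast hZ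
    have h3 : (2.718 : ℝ) ^ E = 2718 ^ E / 1000 ^ E := by rw [← div_pow]; norm_num
    rw [h3, le_div_iff₀ (by positivity)]
    refine le_trans ?_ h2
    gcongr
    exact_mod_cast hN
  · have : 2 * 10 ^ 22 * L ^ 8 * D ≤ 2 * 10 ^ 22 * L ^ 8 * (100000 * L ^ 2) := Nat.mul_le_mul_left _ hDL
    have e : 2 * 10 ^ 22 * L ^ 8 * (100000 * L ^ 2) = 2 * 10 ^ 27 * L ^ 10 := by ring
    omega

end Trib

end

/-! ### Verified fixed-point logarithms -/

section
open Finset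

namespace Trib

/-- `frc n f = f n`, arranged so that kernel reduction evaluates `n` to a literal first. -/
noncomputable def frc {σ : Type} (n : ℕ) (f : ℕ → σ) : σ :=
  Nat.rec (f 0) (fun k _ => f k) (Nat.add n 1)

theorem frc_eq {σ : Type} (n : ℕ) (f : ℕ → σ) : frc n f = f n := rfl

/-- Fixed-point partial sums (denominator `D`) of the series `∑ z ^ (2 k + 1) / (2 k + 1)`;
`w` stands for `z ^ 2`, `p` for the current power and `s` for the sum so far. -/
noncomputable def artS (D w n : ℕ) : ℕ → ℕ → ℕ → ℕ :=
  Nat.rec (fun _ _ s => s)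
    (fun _ ih k p s => frc (p * w / D) fun p' => frc (s + p / (2 * k + 1)) fun s' => ih (k + 1) p' s') n

theorem artS_succ (D w n k p s : ℕ) :
    artS D w (n + 1) k p s = artS D w n (k + 1) (p * w / D) (s + p / (2 * k + 1)) := by
  rw [show artS D w (n + 1) k p s = frc (p * w / D) fun p' => frc (s + p / (2 * k + 1)) fun s' =>
    artS D w n (k + 1) p' s' from rfl, frc_eq, frc_eq]

theorem nat_div_err (a b : ℕ) (hb : 0 < b) :
    (a : ℝ) / b - 1 ≤ ((a / b : ℕ) : ℝ) ∧ ((a / b : ℕ) : ℝ) ≤ a / b := by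
  refine ⟨?_, Nat.cast_div_le⟩
  have h := Nat.lt_div_mul_add hb (a := a)
  have h2 : (a : ℝ) < (a / b : ℕ) * b + b := by exact_mod_cast h
  have hb' : (0 : ℝ) < b := by exact_mod_cast hb
  rw [sub_le_iff_le_add, div_le_iff₀ hb']
  linarith

theorem step_err {D p w Z z p' : ℝ} (hD : 100 ≤ D) (hz : 0 ≤ z) (hz3 : z ≤ 1 / 3) (hZ : 0 ≤ Z)
    (hZ3 : Z ≤ 1 / 3) (hw : |w - D * z ^ 2| ≤ 3) (hp : |p - D * Z| ≤ 8)
    (h1 : p * w / D - 1 ≤ p') (h2 : p' ≤ p * w / D) : |p' - D * (Z * z ^ 2)| ≤ 8 := by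
  have hD0 : 0 < D := by linarith
  set e := w - D * z ^ 2 with he
  set g := p - D * Z with hg
  have e1 : p * w / D = D * (Z * z ^ 2) + (g * z ^ 2 + Z * e + g * e / D) := by
    field_simp; rw [he, hg]; ring
  have b1 : |g * z ^ 2| ≤ 8 * (1 / 9) := by
    rw [abs_mul, abs_of_nonneg (sq_nonneg z)]
    have : z ^ 2 ≤ 1 / 9 := by nlinarith
    gcongr
  have b2 : |Z * e| ≤ 1 / 3 * 3 := by
    rw [abs_mul, abs_of_nonneg hZ]; gcongr
  have b3 : |g * e / D| ≤ 1 := by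
    rw [abs_div, abs_mul, abs_of_pos hD0, div_le_one hD0]
    calc |g| * |e| ≤ 8 * 3 := by gcongr
      _ ≤ D := by linarith
  rw [abs_le] at *
  constructor <;> linarith [b1.1, b1.2, b2.1, b2.2, b3.1, b3.2]

theorem artS_err (D w : ℕ) (hD : 100 ≤ D) (z : ℝ) (hz : 0 ≤ z) (hz3 : z ≤ 1 / 3)
    (hw : |(w : ℝ) - D * z ^ 2| ≤ 3) (n : ℕ) : ∀ k p s : ℕ, |(p : ℝ) - D * z ^ (2 * k + 1)| ≤ 8 →
    |(artS D w n k p s : ℝ) - s - D * ∑ i ∈ range n, z ^ (2 * (k + i) + 1) / (2 * (k + i : ℕ) + 1 : ℝ)|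
      ≤ 9 * n := by
  induction n with
  | zero => intro k p s _; simp [artS]
  | succ n ih =>
    intro k p s hp
    have hDr : (100 : ℝ) ≤ D := by exact_mod_cast hD
    have hd := nat_div_err (p * w) D (by omega)
    have hd2 := nat_div_err p (2 * k + 1) (by omega)
    push_cast at hd hd2
    have hZ0 : 0 ≤ z ^ (2 * k + 1) := by positivity
    have hZ3 : z ^ (2 * k + 1) ≤ 1 / 3 := by
      have h1 : z ^ (2 * k) ≤ 1 := pow_le_one₀ hz (by linarith)
      rw [pow_succ]
      nlinarith
    have hs := step_err hDr hz hz3 hZ0 hZ3 hw hp hd.1 hd.2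
    rw [show z ^ (2 * k + 1) * z ^ 2 = z ^ (2 * (k + 1) + 1) by ring] at hs
    have hi := ih (k + 1) (p * w / D) (s + p / (2 * k + 1)) hs
    rw [artS_succ, sum_range_succ']
    have e1 : ∀ i ∈ range n, z ^ (2 * (k + (i + 1)) + 1) / (2 * (k + (i + 1) : ℕ) + 1 : ℝ) =
        z ^ (2 * (k + 1 + i) + 1) / (2 * (k + 1 + i : ℕ) + 1 : ℝ) := by
      intro i _; rw [show k + (i + 1) = k + 1 + i by ring]
    rw [sum_congr rfl e1]
    set Sg := ∑ i ∈ range n, z ^ (2 * (k + 1 + i) + 1) / (2 * (k + 1 + i : ℕ) + 1 : ℝ)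
    have hk : (0 : ℝ) < 2 * k + 1 := by positivity
    have h5 : |(p : ℝ) / (2 * k + 1) - D * (z ^ (2 * k + 1) / (2 * k + 1))| ≤ 8 := by
      rw [show (p : ℝ) / (2 * k + 1) - D * (z ^ (2 * k + 1) / (2 * k + 1)) =
        (p - D * z ^ (2 * k + 1)) / (2 * k + 1) by ring, abs_div, abs_of_pos hk, div_le_iff₀ hk]
      have : (0 : ℝ) ≤ k := Nat.cast_nonneg _
      linarith
    simp only [add_zero]
    push_cast at hi ⊢
    rw [abs_le] at *
    constructor <;> linarith [hd2.1, hd2.2, h5.1, h5.2, hi.1, hi.2]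

theorem art_log (D Z n : ℕ) (hD : 100 ≤ D) (z : ℝ) (hz : 0 ≤ z) (hz3 : z ≤ 1 / 3)
    (hZ : |(Z : ℝ) - D * z| ≤ 2) (ht : D * z ^ (2 * n + 1) ≤ 1 / 4) :
    |D * Real.log ((1 + z) / (1 - z)) - 2 * artS D (Z * Z / D) n 0 Z 0| ≤ 18 * n + 1 := by
  have hDr : (100 : ℝ) ≤ D := by exact_mod_cast hD
  have hD0 : (0 : ℝ) < D := by linarith
  have hd := nat_div_err (Z * Z) D (by omega)
  have hw : |((Z * Z / D : ℕ) : ℝ) - D * z ^ 2| ≤ 3 := by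
    push_cast at hd
    set e := (Z : ℝ) - D * z with he
    have e1 : (Z : ℝ) * Z / D = D * z ^ 2 + 2 * (e * z) + e * e / D := by
      field_simp; rw [he]; ring
    have b1 : |e * z| ≤ 2 * (1 / 3) := by rw [abs_mul, abs_of_nonneg hz]; gcongr
    have b2 : |e * e / D| ≤ 4 / 100 := by
      rw [abs_div, abs_mul, abs_of_pos hD0]
      calc |e| * |e| / D ≤ 2 * 2 / 100 := by gcongr
        _ = _ := by norm_num
    rw [abs_le] at *
    constructor <;> linarith [hd.1, hd.2, b1.1, b1.2, b2.1, b2.2]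
  have h := artS_err D _ hD z hz hz3 hw n 0 Z 0 (by simpa using hZ.trans (by norm_num))
  have l1 := Real.sum_range_le_log_div hz (by linarith) n
  have l2 := Real.log_div_le_sum_range_add hz (by linarith) n
  simp only [zero_add, Nat.cast_zero, sub_zero] at h
  set Sg := ∑ i ∈ range n, z ^ (2 * i + 1) / (2 * (i : ℕ) + 1 : ℝ)
  have l3 : D * (z ^ (2 * n + 1) / (1 - z ^ 2)) ≤ 1 / 2 := by
    have : 0 < 1 - z ^ 2 := by nlinarith
    rw [← mul_div_assoc, div_le_iff₀ this]
    nlinarith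
  have l4 : D * Sg ≤ D * (1 / 2 * Real.log ((1 + z) / (1 - z))) := by gcongr
  have l5 : D * (1 / 2 * Real.log ((1 + z) / (1 - z))) ≤ D * (Sg + z ^ (2 * n + 1) / (1 - z ^ 2)) := by
    gcongr
  rw [abs_le] at *
  constructor <;> linarith [h.1, h.2]

end Trib

end

/-! ### Baker–Davenport reduction of the gap -/

section
open Finset

namespace Trib

/-- Common denominator of the fixed-point values below. -/
@[irreducible] def DD : ℕ := 2 ^ 3560
/-- `⌊DD * α⌋`. -/
@[irreducible] def αN : ℕ := 8539530760540785249907096754086478539137411951656515748528469312447404174397063095182478208236971740793541116016622099415335402495929049970894362759227282900216422653561410038531434789421638744374825363250082525498256438283036701867697257380958478523762270758837652347970098879802352953701899396416450489481251400442976662806344572860202433497327441507387649372938011406159204946579719112417497286249858944769030194310790351190718391910477066282955799288188951646893095983702272083583494293463687788676991394442226023971608924692982826871552903641696959909445528428157777818290488478979497151850030142185421444155263644526961669197179245456401948920250914210599541356285900569911473463583490240853658912352784557133814908967342298383385557529663666614500547324824375255486132399105042608817820470247300866162278195466339105199895427723179258083330758922800531732715500747378484860884111793059404274640125292471271255889214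266957508689238274856490737659891359280994498384555216606844525085168285723670825865124930732688760354810294048644534432748205004162883457987247839526
/-- Approximation to `DD * log 2`. -/
@[irreducible] def l2N : ℕ := 3218177727422694444450392184398646901763509768373528294732181551297537406601362049213603671721064256203132758585431100199238508644494431705275646163273030229820653412343887133411807379078945843177673807712530506799735911359511946041637387364754672755236568518339962352539580168289143271143709119933988328697482266197395721625231498207491248332234890994367632505088053035752777352976775982085884891952756798828642249245751726940906514408013676066143472994167638706656927682662678597742202743207820824439126841305252731104113172522396021091009262858537872650094620829804404515444197188460038863707454095599108074863628919459702099897309017252250565758757437756623930455247117521962674193271313265690242326490648222787638581268661328762828791428380930549164577624150497172244708145341618792952835124408986923281831519103806117286809953465094506981614611457290287790673249605023628710828302173607002149510948397714285287249373093335529800295007484924958733040906997063727569621627277298817817782169170549100666907969563931595775425864004256910884974214937387125704574779193670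
/-- Approximation to `DD * log (3 / 2)`. -/
@[irreducible] def l3N : ℕ := 1882513291198306660109434399933212429537278121910738093180360079365219701116432856010950803487279596381504296050823285003458861096333188279146750930805877618442183203502097148290689002342616349197207872005110126442065712369153309920218056474876219097751355618797000842983382942667959627237543049895489341796518459830522634528527607855639812725177172148567164628247657761298005920583482955835874768920328184474169424037944873731421648738002377488072029157903438227778591960195806645334743679806154986642051304967288050636353193266478632857537035502861818867573599729319571265584799740228102907495934911339143075182377070631459067145102680887747016448664892787223459778219909775298727554240565659789767745872853112245900417168623683048883731745381500569018308312750167255919860946000177654236194045949890157655703678162964697587161559194878947199678443570496271502661702397900328962951074490363232873078556830117285193945823308171161130705446821536684103978384930989952120420224261638661699565495934557755028856038420602792994612855203709325904122205788134496450862266857992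
/-- Approximation to `DD * log (2 / α)`. -/
@[irreducible] def laN : ℕ := 388928294264849623755460996045693859840180354390786018843392663976863590685409912297429174284100851086738537562904053297967408230752475842506876289991869262169771363710117211833936096155831425163649609325960193605241216255570584677334519913222016638722318435920297970188356432946079281050147177809547635925995803735195029548362654278778156065741768190384253062157341117814264256636089032953493784884182231639103822359030141336687875037330832410245788616500388487473320772437951336773752579850995468742007054202662320079038842090635285366159670428697247814849877935920378004408473687649598515005086319585282039582140339322124628975837860304880609086868483104836820455009910791873166537602949911825434617975124540715792012209852858425955962689851599560074022363298801952701969494858649019609876757406328982891453772978312104537702625211864558777296989676284814418616318916827000820852489038536294688939810811731109370041561698766599656631573840961106239282745659159382963278893928064713960780651823262898491803052062572813268970823837310328307882906499368720322958281799794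
/-- Approximation to `DD * log (3 / θ)`. -/
@[irreducible] def ltN : ℕ := 40146060683568962859513417037430283864785933660604309813302743171934332713694846321558703358542400491696357806435053854506726721566424052550602292644160913713029721701221097726344197531127608707061090810504664730161143202565502035900006040522214624497312473916155354979783931163297234145781060601577974200807257602042108511823567280857818511920703756554478449944695435374064299309447954813674114294957919780587565046160321192762357470725926955899367543945199652188043432132762783122389411159278464013924950523856903579399374856166278219006416618168258117731191379134117068322061640254116187582470759528779610838926712280107124431671135949257679781406482325038404678785298566423938458789004684948848442906269916382674725168249966885681851793634143709382191525756929496088109850899967182898407189016920254091751809063783619026903683298675189909366773952234645903615907943679502312658235539514709616350739920934492828314249716925163330482812974050510610336433511164635269047789661452194366073916374139549165847273827383720631087831685672041417162614500119508638930754054172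

/-- The cubic changes sign between `αN / DD` and `(αN + 1) / DD`. -/
theorem αN_check : αN ^ 3 ≤ αN ^ 2 * DD + αN * DD ^ 2 + DD ^ 3 ∧
    (αN + 1) ^ 2 * DD + (αN + 1) * DD ^ 2 + DD ^ 3 ≤ (αN + 1) ^ 3 ∧ DD ≤ αN := by decide +kernel

theorem DD_pos : (0 : ℝ) < DD := by
  have : 0 < DD := by decide +kernel
  exact_mod_cast this

theorem DD_ge : 100 ≤ DD := by decide +kernel

theorem cubic_lt {x : ℝ} (hx : 1 ≤ x) (h : x ^ 3 ≤ x ^ 2 + x + 1) : x ≤ α := by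
  by_contra hlt
  push Not at hlt
  have h1 := α_cube
  have h2 := α_bounds.1
  have : 0 < (x - α) * (x * x + x * α + α * α - x - α - 1) := by
    apply mul_pos (by linarith)
    nlinarith
  nlinarith

theorem cubic_gt {x : ℝ} (hx : 1 ≤ x) (h : x ^ 2 + x + 1 ≤ x ^ 3) : α ≤ x := by
  by_contra hlt
  push Not at hlt
  have h1 := α_cube
  have h2 := α_bounds.1
  have : 0 < (α - x) * (x * x + x * α + α * α - x - α - 1) := by
    apply mul_pos (by linarith)
    nlinarith
  nlinarith

theorem αN_bounds : (αN : ℝ) ≤ DD * α ∧ DD * α ≤ αN + 1 := by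
  obtain ⟨h1, h2, h3⟩ := αN_check
  have hD := DD_pos
  have h1' : (αN : ℝ) ^ 3 ≤ αN ^ 2 * DD + αN * DD ^ 2 + DD ^ 3 := by exact_mod_cast h1
  have h2' : (αN + 1 : ℝ) ^ 2 * DD + (αN + 1) * DD ^ 2 + DD ^ 3 ≤ (αN + 1) ^ 3 := by exact_mod_cast h2
  have h3' : (DD : ℝ) ≤ αN := by exact_mod_cast h3
  have aux : ∀ a d : ℝ, 0 < d → (a / d) ^ 3 - (a / d) ^ 2 - a / d - 1 =
      (a ^ 3 - a ^ 2 * d - a * d ^ 2 - d ^ 3) / d ^ 3 := by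
    intro a d hd; field_simp
  constructor
  · rw [mul_comm, ← div_le_iff₀ hD]
    apply cubic_lt ((one_le_div hD).2 h3')
    have := aux αN DD hD
    have h5 : ((αN : ℝ) ^ 3 - αN ^ 2 * DD - αN * DD ^ 2 - DD ^ 3) / (DD : ℝ) ^ 3 ≤ 0 :=
      div_nonpos_of_nonpos_of_nonneg (by linarith) (by positivity)
    linarith
  · rw [mul_comm, ← le_div_iff₀ hD]
    apply cubic_gt ((one_le_div hD).2 (by linarith))
    have := aux (αN + 1) DD hD
    have h5 : 0 ≤ ((αN + 1 : ℝ) ^ 3 - (αN + 1) ^ 2 * DD - (αN + 1) * DD ^ 2 - DD ^ 3) / (DD : ℝ) ^ 3 :=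
      div_nonneg (by linarith) (by positivity)
    linarith

/-- Fixed-point value of `(m - t) / (m + t)` from an approximation `a` to `D t`. -/
theorem quot_err (D a m : ℕ) (t : ℝ) (hD : 0 < D) (hm : 2 ≤ m) (ha : a ≤ m * D) (ha1 : D ≤ a)
    (h : |(a : ℝ) - D * t| ≤ 2) (ht1 : 1 ≤ t) :
    |(((m * D - a) * D / (m * D + a) : ℕ) : ℝ) - D * ((m - t) / (m + t))| ≤ 2 := by
  have hd := nat_div_err ((m * D - a) * D) (m * D + a) (by positivity)
  have hDr : (0 : ℝ) < D := by exact_mod_cast hD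
  have hmr : (2 : ℝ) ≤ m := by exact_mod_cast hm
  have har : (D : ℝ) ≤ a := by exact_mod_cast ha1
  rw [Nat.cast_mul, Nat.cast_sub ha] at hd
  push_cast at hd
  have e : ((m : ℝ) * D - a) * D / (m * D + a) - D * ((m - t) / (m + t)) =
      2 * (m * D) * (D * t - a) / ((m * D + a) * (m + t)) := by
    have h1 : (m : ℝ) * D + a ≠ 0 := by positivity
    have h2 : (m : ℝ) + t ≠ 0 := by positivity
    field_simp; ring
  have b : |((m : ℝ) * D - a) * D / (m * D + a) - D * ((m - t) / (m + t))| ≤ 1 := by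
    have hpos : 0 < (m * D + a : ℝ) * (m + t) := by positivity
    rw [e, abs_div, abs_mul, abs_of_pos hpos, abs_of_pos (show (0 : ℝ) < 2 * (m * D) by positivity),
      div_le_one hpos, abs_sub_comm]
    have k1 : (m * D + D : ℝ) * (m + 1) ≤ (m * D + a) * (m + t) := by gcongr
    have k2 : 2 * (m * D : ℝ) * |(a : ℝ) - D * t| ≤ 2 * (m * D) * 2 := by gcongr
    have k3 : 0 ≤ (D : ℝ) * ((m - 1) ^ 2) := by positivity
    nlinarith
  rw [abs_le] at *
  constructor <;> linarith [hd.1, hd.2, b.1, b.2]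

theorem log_ratio (m t : ℝ) (ht : 0 < t) (hm : 0 < m) :
    Real.log ((1 + (m - t) / (m + t)) / (1 - (m - t) / (m + t))) = Real.log m - Real.log t := by
  rw [← Real.log_div hm.ne' ht.ne']
  congr 1
  have : m + t ≠ 0 := by positivity
  have e1 : 1 + (m - t) / (m + t) = 2 * m / (m + t) := by field_simp; ring
  have e2 : 1 - (m - t) / (m + t) = 2 * t / (m + t) := by field_simp; ring
  rw [e1, e2]
  field_simp

/-- The tail of the series is negligible, reduced to a comparison of natural numbers. -/
theorem tail_le (D k n : ℕ) (z : ℝ) (hz : 0 ≤ z) (hk : 0 < k) (hzk : z ≤ 1 / k)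
    (h : D * 4 ≤ k ^ (2 * n + 1)) : D * z ^ (2 * n + 1) ≤ 1 / 4 := by
  have h1 : z ^ (2 * n + 1) ≤ (1 / k) ^ (2 * n + 1) := by gcongr
  have hkr : (0 : ℝ) < k := by exact_mod_cast hk
  have h2 : (D * 4 : ℝ) ≤ k ^ (2 * n + 1) := by exact_mod_cast h
  have h3 : (D : ℝ) * (1 / k) ^ (2 * n + 1) ≤ 1 / 4 := by
    rw [one_div_pow, mul_one_div, div_le_iff₀ (by positivity)]
    linarith
  have : (D : ℝ) * z ^ (2 * n + 1) ≤ D * (1 / k) ^ (2 * n + 1) := by gcongr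
  linarith

theorem log_ratio_err (D a m n k R : ℕ) (t : ℝ) (hD : 100 ≤ D) (hm : 2 ≤ m) (ha : a ≤ m * D)
    (ha1 : D ≤ a) (h : |(a : ℝ) - D * t| ≤ 2) (ht1 : 1 ≤ t) (htm : t ≤ m) (hk : 3 ≤ k)
    (hz : ((m : ℝ) - t) * k ≤ m + t) (hn : D * 4 ≤ k ^ (2 * n + 1))
    (hR : frc ((m * D - a) * D / (m * D + a)) (fun Z => frc (Z * Z / D)
      fun w => 2 * artS D w n 0 Z 0) = R) :
    |D * (Real.log m - Real.log t) - R| ≤ 18 * n + 1 := by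
  have hmr : (2 : ℝ) ≤ m := by exact_mod_cast hm
  have hq := quot_err D a m t (by omega) hm ha ha1 h ht1
  have hkr : (3 : ℝ) ≤ k := by exact_mod_cast hk
  have z0 : 0 ≤ (m - t) / (m + t) := div_nonneg (by linarith) (by linarith)
  have zk : ((m : ℝ) - t) / (m + t) ≤ 1 / k := by
    rw [div_le_div_iff₀ (by linarith) (by linarith)]; linarith
  have z3 : ((m : ℝ) - t) / (m + t) ≤ 1 / 3 := zk.trans (one_div_le_one_div_of_le (by norm_num) hkr)
  have := art_log D _ n hD _ z0 z3 hq (tail_le D k n _ z0 (by omega) zk hn)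
  rw [log_ratio m t (by linarith) (by linarith)] at this
  rw [frc_eq, frc_eq] at hR
  rw [← hR]
  push_cast
  exact this

theorem log2_err : |DD * Real.log 2 - l2N| ≤ 30000 := by
  have hD := DD_pos
  have := log_ratio_err DD DD 2 1130 3 l2N 1 DD_ge le_rfl (by decide +kernel) le_rfl (by simp) le_rfl
    (by norm_num) le_rfl (by norm_num) (by decide +kernel) (by decide +kernel)
  norm_num at this
  linarith

theorem log3_err : |DD * (Real.log 3 - Real.log 2) - l3N| ≤ 30000 := by
  have hD := DD_pos
  have := log_ratio_err DD (2 * DD) 3 780 5 l3N 2 DD_ge (by norm_num) (by decide +kernel)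
    (by decide +kernel) (by push_cast; rw [mul_comm]; simp) (by norm_num)
    (by norm_num) (by norm_num) (by norm_num) (by decide +kernel) (by decide +kernel)
  norm_num at this
  linarith

theorem logα_err : |DD * (Real.log 2 - Real.log α) - laN| ≤ 30000 := by
  have hD := DD_pos
  have hb := α_bounds
  have hN := αN_bounds
  have := log_ratio_err DD αN 2 400 23 laN α DD_ge (by norm_num) (by decide +kernel)
    (by decide +kernel) (by rw [abs_le]; constructor <;> linarith) (by linarith)
    (by norm_num; linarith) (by norm_num) (by norm_num; linarith) (by decide +kernel) (by decide +kernel)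
  norm_num at this
  linarith

theorem logθ_err : |DD * (Real.log 3 - Real.log θ) - ltN| ≤ 30000 := by
  have hD := DD_pos
  have hb := α_bounds
  have ht := θ_bounds
  have hN := αN_bounds
  have hd := nat_div_err (4 * αN * DD - αN * αN - DD * DD) DD (by decide +kernel)
  have hle1 : αN * αN ≤ 4 * αN * DD := by decide +kernel
  have hle2 : DD * DD ≤ 4 * αN * DD - αN * αN := by decide +kernel
  rw [Nat.cast_sub hle2, Nat.cast_sub hle1] at hd
  push_cast at hd
  set e := DD * α - αN with he
  have e1 : (4 * αN * DD - αN * αN - DD * DD : ℝ) / DD = DD * θ - (4 - 2 * α) * e - e * e / DD := by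
    unfold θ; field_simp; rw [he]; ring
  have he0 : 0 ≤ e := by linarith
  have he1 : e ≤ 1 := by linarith
  have b1 : 0 ≤ (4 - 2 * α) * e := mul_nonneg (by linarith) he0
  have b1' : (4 - 2 * α) * e ≤ 0.4 := by nlinarith
  have b2 : 0 ≤ e * e / DD := by positivity
  have b2' : e * e / DD ≤ 0.4 := by
    have : (100 : ℝ) ≤ DD := by exact_mod_cast DD_ge
    rw [div_le_iff₀ hD]; nlinarith
  have := log_ratio_err DD ((4 * αN * DD - αN * αN - DD * DD) / DD) 3 240 220 ltN θ DD_ge (by norm_num)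
    (by decide +kernel)
    (by decide +kernel) (by rw [abs_le]; constructor <;> linarith) (by linarith)
    (by norm_num; linarith) (by norm_num) (by norm_num; linarith) (by decide +kernel) (by decide +kernel)
  norm_num at this
  linarith

/-- The linear form in logarithms attached to the largest representation is tiny. -/
theorem Sys.lin_form {c : ℤ} {n x y : Fin 4 → ℕ} (h : Sys c n x y) (hδ : 10 * α ^ n 0 ≤ α ^ n 3) :
    |x 3 * Real.log 2 + y 3 * Real.log 3 + Real.log θ - n 3 * Real.log α| * α ^ n 3 ≤ 10 * α ^ n 0 := by
  have hm := h.main_err 3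
  have hp : 0 < α ^ n 3 := pow_pos α_pos _
  have hθ : 0 < θ := by linarith [θ_bounds.1]
  set r := θ * (2 ^ x 3 * 3 ^ y 3) / α ^ n 3 with hr
  have e : r - 1 = (θ * (2 ^ x 3 * 3 ^ y 3) - α ^ n 3) / α ^ n 3 := by rw [hr]; field_simp
  have h1 : |r - 1| * α ^ n 3 ≤ 5 * α ^ n 0 := by
    rw [e, abs_div, abs_of_pos hp, div_mul_cancel₀ _ hp.ne']; exact hm
  have h2 : |r - 1| ≤ 1 / 2 := by
    by_contra hc; push Not at hc
    nlinarith
  have h3 := abs_log_le r h2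
  have h4 : Real.log r = x 3 * Real.log 2 + y 3 * Real.log 3 + Real.log θ - n 3 * Real.log α := by
    rw [hr, Real.log_div (by positivity) hp.ne', Real.log_mul hθ.ne' (by positivity),
      Real.log_mul (by positivity) (by positivity), Real.log_pow, Real.log_pow, Real.log_pow]
    ring
  rw [← h4]
  nlinarith

/-- The Baker–Davenport certificate: `q` makes `q log α` and `q log 3` close to integer multiples of
`log 2` (`p₁` and `p₂` times), while `q log θ` stays away from them. The logarithms are given by the
fixed-point values `l2`, `l3`, `la`, `lt` with denominator `D`. -/
def bdCheckGen (D l2 l3 la lt N K q p1 p2 p3 : ℕ) : Prop :=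
  (|(q * (l2 - la) - p1 * l2 : ℤ)| + (q + p1) * 60000) * (40 * N) ≤ D ∧
  (|(q * (l2 + l3) - p2 * l2 : ℤ)| + (q + p2) * 60000) * (40 * N) ≤ D ∧
  2 * D + 10 * (q + p3) * 90000 ≤ 10 * (q * (l2 + l3 - lt) - p3 * l2 : ℤ) ∧
  10 * (q * (l2 + l3 - lt) - p3 * l2 : ℤ) + 10 * (q + p3) * 90000 ≤ 5 * D ∧
  100 * q * 1000 ^ K < 1839 ^ K ∧ 0 < q

/-- `bdCheckGen` for the values of the logarithms computed above. -/
def bdCheck (N K q p1 p2 p3 : ℕ) : Prop := bdCheckGen DD l2N l3N laN ltN N K q p1 p2 p3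

instance (N K q p1 p2 p3 : ℕ) : Decidable (bdCheck N K q p1 p2 p3) := by
  unfold bdCheck bdCheckGen; infer_instance

theorem comb_err {D l l' q p A B e : ℝ} (hq : 0 ≤ q) (hp : 0 ≤ p) (h1 : |D * l - A| ≤ e)
    (h2 : |D * l' - B| ≤ e) : |D * (q * l - p * l') - (q * A - p * B)| ≤ (q + p) * e := by
  have e1 : D * (q * l - p * l') - (q * A - p * B) = q * (D * l - A) - p * (D * l' - B) := by ring
  have b1 : |q * (D * l - A)| ≤ q * e := by rw [abs_mul, abs_of_nonneg hq]; gcongr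
  have b2 : |p * (D * l' - B)| ≤ p * e := by rw [abs_mul, abs_of_nonneg hp]; gcongr
  rw [e1, abs_le]
  have := abs_le.1 b1
  have := abs_le.1 b2
  constructor <;> linarith

theorem dist_aux {M : ℤ} {l ρ s : ℝ} (hl : 0.69 ≤ l) (h1 : 0.2 ≤ ρ) (h2 : ρ ≤ 0.5) (hs : |s| ≤ 0.05) :
    0.1 ≤ |M * l + ρ + s| := by
  have := abs_le.1 hs
  rcases le_or_gt 0 M with hM | hM
  · have : (0 : ℝ) ≤ M := by exact_mod_cast hM
    have : 0 ≤ M * l := by positivity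
    exact le_trans (by linarith) (le_abs_self _)
  · have : (M : ℝ) ≤ -1 := by exact_mod_cast Int.le_sub_one_of_lt hM
    have : (M : ℝ) * l ≤ -0.69 := by nlinarith
    exact le_trans (by linarith) (neg_le_abs _)

/-- The Baker–Davenport lemma with a verified certificate. The numerical values are variables here, so
that they are not unfolded. -/
theorem Sys.baker_gen {c : ℤ} {n x y : Fin 4 → ℕ} (h : Sys c n x y) (DD l2N l3N laN ltN : ℕ)
    (hD : (0 : ℝ) < DD) (g2 : |DD * Real.log 2 - l2N| ≤ 30000)
    (g3 : |DD * (Real.log 3 - Real.log 2) - l3N| ≤ 30000)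
    (gα : |DD * (Real.log 2 - Real.log α) - laN| ≤ 30000)
    (gθ : |DD * (Real.log 3 - Real.log θ) - ltN| ≤ 30000) (N K q p1 p2 p3 : ℕ) (hN : n 3 < N)
    (hb : bdCheckGen DD l2N l3N laN ltN N K q p1 p2 p3) : n 3 < n 0 + K := by
  obtain ⟨b1, b2, b3, b4, b5, hq⟩ := hb
  have hα := α_bounds.1
  have hle := h.mono.monotone (Fin.zero_le 3)
  have hqr : (1 : ℝ) ≤ q := by exact_mod_cast hq
  -- it suffices to bound `α ^ (n 3 - n 0)` by `100 q`
  have key : α ^ n 3 ≤ 100 * q * α ^ n 0 := by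
    have hp0 : 0 < α ^ n 0 := pow_pos α_pos _
    by_contra hcon
    push Not at hcon
    have hlf := h.lin_form (by nlinarith)
    set ℓ2 := Real.log 2
    set ℓ3 := Real.log 3
    set ℓα := Real.log α
    set ℓθ := Real.log θ
    have hl2 : 0.69 ≤ ℓ2 := by have := Real.log_two_gt_d9; linarith
    have f2 : |DD * ℓ2 - (l2N : ℝ)| ≤ 60000 := g2.trans (by norm_num)
    have f3 : |DD * ℓ3 - (l2N + l3N : ℝ)| ≤ 60000 := by
      rw [abs_le] at *; constructor <;> linarith [g2.1, g2.2, g3.1, g3.2]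
    have fα : |DD * ℓα - (l2N - laN : ℝ)| ≤ 60000 := by
      rw [abs_le] at *; constructor <;> linarith [g2.1, g2.2, gα.1, gα.2]
    have fθ : |DD * ℓθ - (l2N + l3N - ltN : ℝ)| ≤ 90000 := by
      rw [abs_le] at *; constructor <;> linarith [f3.1, f3.2, gθ.1, gθ.2]
    have c1 := comb_err (q := q) (p := p1) (by positivity) (by positivity) fα f2
    have c2 := comb_err (q := q) (p := p2) (by positivity) (by positivity) f3 f2
    have c3 := comb_err (q := q) (p := p3) (by positivity) (by positivity) fθ (f2.trans (by norm_num))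
    have b1' : (|(q * (l2N - laN) - p1 * l2N : ℝ)| + (q + p1) * 60000) * (40 * N) ≤ DD := by exact_mod_cast b1
    have b2' : (|(q * (l2N + l3N) - p2 * l2N : ℝ)| + (q + p2) * 60000) * (40 * N) ≤ DD := by exact_mod_cast b2
    have b3' : 2 * DD + 10 * (q + p3) * 90000 ≤ 10 * (q * (l2N + l3N - ltN) - p3 * l2N : ℝ) := by exact_mod_cast b3
    have b4' : 10 * (q * (l2N + l3N - ltN) - p3 * l2N : ℝ) + 10 * (q + p3) * 90000 ≤ 5 * DD := by exact_mod_cast b4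
    clear b1 b2 b3 b4 b5 f2 f3 fα fθ g2 g3 gα gθ
    have hxn := h.le 3
    have hNr : (n 3 : ℝ) ≤ N := by exact_mod_cast hN.le
    have hyr : (y 3 : ℝ) ≤ N := by exact_mod_cast hxn.2.trans hN.le
    have small : ∀ (u v m : ℝ), 0 ≤ m → m ≤ N → ∀ w, |DD * u - v| ≤ w → (|v| + w) * (40 * N) ≤ DD →
        |m * u| ≤ 0.025 := by
      intro u v m hm hmN w h1 h2
      have h3 : |DD * u| ≤ |v| + w := by
        have := abs_add_le (DD * u - v) v
        rw [sub_add_cancel] at this; linarith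
      rw [abs_mul, abs_of_pos hD] at h3
      rw [abs_mul, abs_of_nonneg hm]
      have h4 : (m * |u|) * 40 * DD ≤ DD := by
        calc (m * |u|) * 40 * DD = (DD * |u|) * (40 * m) := by ring
          _ ≤ (|v| + w) * (40 * N) := by gcongr; exact le_trans (by positivity) h3
          _ ≤ DD := h2
      nlinarith
    have s1 := small _ _ (n 3) (by positivity) hNr _ c1 b1'
    have s2 := small _ _ (y 3) (by positivity) hyr _ c2 b2'
    set ρ := q * ℓθ - p3 * ℓ2 with hρ
    have c3' := abs_le.1 c3
    have r1 : 0.2 ≤ ρ := by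
      have : (0.2 : ℝ) * DD ≤ ρ * DD := by linarith
      exact le_of_mul_le_mul_right this hD
    have r2 : ρ ≤ 0.5 := by
      have : ρ * DD ≤ 0.5 * DD := by linarith
      exact le_of_mul_le_mul_right this hD
    have hs : |y 3 * (q * ℓ3 - p2 * ℓ2) - n 3 * (q * ℓα - p1 * ℓ2)| ≤ 0.05 :=
      (abs_sub _ _).trans (by linarith)
    have hd := dist_aux (M := q * x 3 + y 3 * p2 + p3 - n 3 * p1) hl2 r1 r2 hs
    have ee : ((q * x 3 + y 3 * p2 + p3 - n 3 * p1 : ℤ) : ℝ) * ℓ2 + ρ +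
        (y 3 * (q * ℓ3 - p2 * ℓ2) - n 3 * (q * ℓα - p1 * ℓ2)) =
        q * (x 3 * ℓ2 + y 3 * ℓ3 + ℓθ - n 3 * ℓα) := by
      push_cast; rw [hρ]; ring
    rw [ee, abs_mul, abs_of_pos (by linarith : (0 : ℝ) < q)] at hd
    have hp3 : 0 < α ^ n 3 := pow_pos α_pos _
    have : q * (|x 3 * ℓ2 + y 3 * ℓ3 + ℓθ - n 3 * ℓα| * α ^ n 3) ≤ q * (10 * α ^ n 0) := by gcongr
    have : 0.1 * α ^ n 3 ≤ q * |x 3 * ℓ2 + y 3 * ℓ3 + ℓθ - n 3 * ℓα| * α ^ n 3 := by gcongr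
    linarith
  by_contra hcon
  push Not at hcon
  have k1 : α ^ (n 0 + K) ≤ α ^ n 3 := pow_le_pow_right₀ (by linarith) hcon
  rw [pow_add] at k1
  have hp0 : 0 < α ^ n 0 := pow_pos α_pos _
  have k2 : α ^ K ≤ 100 * q := by
    by_contra hc; push Not at hc
    have : α ^ n 0 * (100 * q) < α ^ n 0 * α ^ K := by gcongr
    linarith
  have k3 : (1.839 : ℝ) ^ K ≤ α ^ K := by gcongr; linarith
  have k4 : (100 * q * 1000 ^ K : ℝ) < 1839 ^ K := by exact_mod_cast b5
  have k5 : (1.839 : ℝ) ^ K = 1839 ^ K / 1000 ^ K := by rw [← div_pow]; norm_num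
  have k6 : (100 * q : ℝ) < 1839 ^ K / 1000 ^ K := by rw [lt_div_iff₀ (by positivity)]; exact k4
  linarith

theorem Sys.baker {c : ℤ} {n x y : Fin 4 → ℕ} (h : Sys c n x y) (N K q p1 p2 p3 : ℕ) (hN : n 3 < N)
    (hb : bdCheck N K q p1 p2 p3) : n 3 < n 0 + K :=
  h.baker_gen DD l2N l3N laN ltN DD_pos log2_err log3_err logα_err logθ_err N K q p1 p2 p3 hN hb


set_option exponentiation.threshold 3000 in
theorem gap_0 {c : ℤ} {n x y : Fin 4 → ℕ} (h : Sys c n x y) (hN : n 3 < 10 ^ 347) :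
    n 3 < n 0 + 2639 :=
  h.baker (10 ^ 347) 2639
    1601489643045202401594636700908886334599100874900488902075807133283562282348620157363436870959199222062674411811020170788099354179514322719004052679391541765316512665512936603021985867738188066352323247660486087334450165575850465129376698822670226051593540391268726338185790255336698910882262609604620832647963743404244736141066719338819534730874108208954669816983281890737320630232223336278637678732560399980268823672418073189920831371358643590635899522289352132833061936868304724186349303707835549663644029933797672303757233513692313500157523128226805445177451639508627719831449203818231494198570412277838482207551380512515778602789016751812490512675810705267146154053490803829498409797548403483
    1407943888923281978107908317386926638077375391793205501279417019391389291321444160476279453978344738322748632168265396863888143306041539804670187198507330671379734254572354970900312435005699551383891146296806634737320945283888220171211669081693376221900472451479436100104905540685672770503212007900924107969189871359989042571098181092263773039330379127406599175389773459144145577490424331137833591263067577266565398479538784829339812168373038866704113228802492246641385988345273049313808045223229075231128802566816633616304798678207024017050294645904750760518521039623818589868642111348901676087684102161976715205090834853623682485646682772427991037524243516284680783073242808636809458083664102354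
    2538301029519955767053628965749013031618636220585122691873014508987430952958156521071642383372690394743903465588713945738839575784860537442077474375643316546991234702938534277339516895133934184834793375287045426335383002541328641763155424598863552257485707893017107159779322304255414885252489535438420060773371024246421699867261027697267815754779985430061182325329456409030807910105513034175547087305849245743145592608914212514598359947675047677439494136390717611164579605254183069225021622649423375851667407145550266364298152908270247284580137834133091427817311511120740732443619100542611230653182036777873091548161928820461212284436002675005303211712841637350206565484865512153302941618353896424
    2518322797787773001533517108220613276505294336811757405192436483853065841541895503742221865262952002318341672143266050078750119969235254047603286339280232175993896472632283222023092203700628879500311056230149983007240195392267450895578961500778152376109908862552405746581236129992193241481397745797751902333294264774577911486538496818894577825259879422316262961484759326852291106473388234396628051561620608940370767835232240009984468498626284659598563504072932553895918673760165214283030213140675806222062017833360248393297036533006994320311979954224813162798344849712364495956995858671081706955437873705563675619505352814281589760027814335429171752055950801530779947789085140499569422373384099394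
    hN (by decide +kernel)


set_option exponentiation.threshold 3000 in
theorem gap_1 {c : ℤ} {n x y : Fin 4 → ℕ} (h : Sys c n x y) (hN : n 3 < 10 ^ 62) :
    n 3 < n 0 + 489 :=
  h.baker (10 ^ 62) 489
    20696018526716574419222759055321693908875928300037897584841712956722294819858534875368172083362361612453792086078363981770891951
    18194830629267564076963613374266413669547175748694379169138254277595037404367284097770014753087947844095303214236831562912500040
    32802413279076080274950113117026111953445638919549698693628831839979389748393401378184082276670849748195789257865198024437637412
    32544234991220227312201942782042565541087411087253910323055022926238609847413596915083694084912334415269232819929159008384582029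
    hN (by decide +kernel)


set_option exponentiation.threshold 3000 in
theorem gap_2 {c : ℤ} {n x y : Fin 4 → ℕ} (h : Sys c n x y) (hN : n 3 < 1100) :
    n 3 < n 0 + 38 :=
  h.baker (1100) 38
    110813864
    97421612
    175635819
    174253440
    hN (by decide +kernel)

end Trib

end

/-! ### The reduced bounds -/

section
namespace Trib
variable {c : ℤ} {n x y : Fin 4 → ℕ}

set_option exponentiation.threshold 3000 in
/-- The reductions: alternate the linear form bound on the gap with the resulting size bound. -/
theorem bounds (h : Sys c n x y) : n 3 < 10 ^ 62 ∧ n 3 < n 0 + 489 := by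
  have a0 := initial h
  have a1 := gap_0 h a0
  have b1 := reduce h _ 2639 13300 831 a0 a1.le (by norm_num) (by norm_num) (by norm_num) (by norm_num) (by norm_num)
  have b2 := reduce h (10 ^ 69) 2639 2840 177 (by omega) a1.le (by norm_num) (by norm_num) (by norm_num) (by norm_num) (by norm_num)
  have b3 := reduce h (10 ^ 63) 2639 2608 163 (by omega) a1.le (by norm_num) (by norm_num) (by norm_num) (by norm_num) (by norm_num)
  have b4 : n 3 < 10 ^ 62 := by omega
  exact ⟨b4, gap_1 h b4⟩
end Trib

end

/-! ### Zeros of recurrent sequences in the `p`-adic integers -/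

section
open Polynomial
namespace Trib

/-- Integer sequences satisfying the Tribonacci recurrence. -/
def Rec (f : ℕ → ℤ) : Prop := ∀ m, f (m + 3) = f (m + 2) + f (m + 1) + f m

/-- Every recurrent sequence changes by a multiple of `q` under a shift by `P`, and the quotient
is again a recurrent sequence. -/
def Lev (P : ℕ) (q : ℤ) : Prop :=
  ∀ f, Rec f → ∃ g, Rec g ∧ ∀ m, f (m + P) = f m + q * g m

lemma Rec.comb {f : ℕ → ℤ} (hf : Rec f) (a b c : ℤ) :
    Rec (fun m => a * f m + b * f (m + 1) + c * f (m + 2)) := by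
  intro m
  have h0 := hf m
  have h1 := hf (m + 1)
  have h2 := hf (m + 2)
  simp only [add_assoc] at h0 h1 h2 ⊢
  norm_num at h0 h1 h2 ⊢
  rw [h2, h1, h0]; ring

lemma Rec.shift {f : ℕ → ℤ} (hf : Rec f) (a : ℕ) : Rec (fun m => f (m + a)) := by
  intro m
  have h0 := hf (m + a)
  simp only [show m + 3 + a = m + a + 3 by ring, show m + 2 + a = m + a + 2 by ring,
    show m + 1 + a = m + a + 1 by ring]
  exact h0

lemma lev_2 : Lev 8 4 := by
  intro f hf
  refine ⟨_, hf.comb 3 5 6, fun m => ?_⟩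
  have h0 := hf m
  have h1 := hf (m + 1)
  have h2 := hf (m + 2)
  have h3 := hf (m + 3)
  have h4 := hf (m + 4)
  have h5 := hf (m + 5)
  simp only [add_assoc] at h0 h1 h2 h3 h4 h5
  norm_num at h0 h1 h2 h3 h4 h5
  rw [h5, h4, h3, h2, h1, h0]; ring

lemma lev_3 : Lev 13 3 := by
  intro f hf
  refine ⟨_, hf.comb 91 141 168, fun m => ?_⟩
  have h0 := hf m
  have h1 := hf (m + 1)
  have h2 := hf (m + 2)
  have h3 := hf (m + 3)
  have h4 := hf (m + 4)
  have h5 := hf (m + 5)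
  have h6 := hf (m + 6)
  have h7 := hf (m + 7)
  have h8 := hf (m + 8)
  have h9 := hf (m + 9)
  have h10 := hf (m + 10)
  simp only [add_assoc] at h0 h1 h2 h3 h4 h5 h6 h7 h8 h9 h10
  norm_num at h0 h1 h2 h3 h4 h5 h6 h7 h8 h9 h10
  rw [h10, h9, h8, h7, h6, h5, h4, h3, h2, h1, h0]; ring

lemma Rec.lin {f g : ℕ → ℤ} (hf : Rec f) (hg : Rec g) (a : ℤ) : Rec (fun m => f m + a * g m) := by
  intro m
  simp only
  rw [hf m, hg m]; ring

/-- From the shift by `P` to the shift by `p * P`: the modulus gains a factor `p`, and the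
quotient sequence is unchanged modulo `k`. -/
def Lift (p : ℕ) : Prop :=
  ∀ (P : ℕ) (k : ℤ), Lev P (p * k) → ∀ f g, Rec f → Rec g →
    (∀ m, f (m + P) = f m + p * k * g m) →
    ∃ G, Rec G ∧ (∀ m, f (m + P * p) = f m + p * (p * k) * G m) ∧ ∀ m, k ∣ G m - g m

lemma lift_2 : Lift 2 := by
  intro P k hL f g hf hg h
  obtain ⟨g', hg', h'⟩ := hL g hg
  refine ⟨_, hg.lin hg' k, fun m => ?_, fun m => ?_⟩
  · rw [show m + P * 2 = m + P + P by ring, h, h, h']; push_cast; ring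
  · exact ⟨g' m, by ring⟩

lemma lift_3 : Lift 3 := by
  intro P k hL f g hf hg h
  obtain ⟨g', hg', h'⟩ := hL g hg
  obtain ⟨g'', hg'', h''⟩ := hL g' hg'
  refine ⟨_, (hg.lin hg' (3 * k)).lin hg'' (3 * k ^ 2), fun m => ?_, fun m => ?_⟩
  · rw [show m + P * 3 = m + P + P + P by ring]; simp only [h, h', h'']; push_cast; ring
  · exact ⟨3 * g' m + 3 * k * g'' m, by ring⟩

/-- The data of a prime `p` with a base period `P₀` modulo `p ^ s₀`. -/
structure Base (p P₀ s₀ : ℕ) : Prop where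
  prime : p.Prime
  pos : 0 < P₀
  one_le : 1 ≤ s₀
  lev : Lev P₀ (p ^ s₀)
  lift : Lift p

lemma base_2 : Base 2 8 2 := ⟨by norm_num, by norm_num, by norm_num, by simpa using lev_2, lift_2⟩
lemma base_3 : Base 3 13 1 := ⟨by norm_num, by norm_num, by norm_num, by simpa using lev_3, lift_3⟩


lemma Base.lev_all {p P₀ s₀ : ℕ} (hb : Base p P₀ s₀) (k : ℕ) :
    Lev (P₀ * p ^ k) ((p : ℤ) ^ (s₀ + k)) := by
  induction k with
  | zero => simpa using hb.lev
  | succ k ih =>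
    intro f hf
    obtain ⟨t, ht⟩ : ∃ t, s₀ + k = t + 1 := ⟨s₀ + k - 1, by have := hb.one_le; omega⟩
    rw [ht, pow_succ'] at ih
    obtain ⟨g, hg, h⟩ := ih f hf
    obtain ⟨G, hG, h1, -⟩ := hb.lift _ _ ih f g hf hg h
    refine ⟨G, hG, fun m => ?_⟩
    rw [show P₀ * p ^ (k + 1) = P₀ * p ^ k * p by ring, h1, ← add_assoc, ht]
    ring

/-- Iterating the lift: along the shifts by `P * p ^ a`, the quotient sequence stays the same
modulo `q / p`. -/
lemma Base.lift_all {p P₀ s₀ : ℕ} (hb : Base p P₀ s₀) (k t : ℕ) (ht : s₀ + k = t + 1)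
    {f g : ℕ → ℤ} (hf : Rec f) (hg : Rec g)
    (h : ∀ m, f (m + P₀ * p ^ k) = f m + (p : ℤ) ^ (t + 1) * g m) (a : ℕ) :
    ∃ G, Rec G ∧ (∀ m, f (m + P₀ * p ^ k * p ^ a) = f m + (p : ℤ) ^ (t + 1 + a) * G m) ∧
      ∀ m, (p : ℤ) ^ t ∣ G m - g m := by
  induction a with
  | zero => exact ⟨g, hg, by simpa using h, by simp⟩
  | succ a ih =>
    obtain ⟨G, hG, h1, h2⟩ := ih
    have hl := hb.lev_all (k + a)
    rw [show P₀ * p ^ (k + a) = P₀ * p ^ k * p ^ a by ring,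
      show s₀ + (k + a) = t + a + 1 by omega, pow_succ'] at hl
    obtain ⟨G', hG', h3, h4⟩ := hb.lift _ _ hl f G hf hG (fun m => by rw [h1 m]; ring)
    refine ⟨G', hG', fun m => ?_, fun m => ?_⟩
    · rw [pow_succ, ← mul_assoc, h3]; ring
    · have := (Dvd.intro _ (pow_add (p : ℤ) t a).symm).trans (h4 m)
      have := dvd_add this (h2 m)
      simpa using this

/-- Summing the increments over `u` consecutive shifts. -/
lemma shift_sum {f g : ℕ → ℤ} {P : ℕ} {q ρ z : ℤ} {m : ℕ}
    (h : ∀ m, f (m + P) = f m + q * g m) (hz : ∀ i, ρ ∣ g (m + P * i) - z) (u : ℕ) :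
    ∃ w, f (m + P * u) = f m + q * (u * z + ρ * w) := by
  induction u with
  | zero => exact ⟨0, by simp⟩
  | succ u ih =>
    obtain ⟨w, hw⟩ := ih
    obtain ⟨v, hv⟩ := hz u
    refine ⟨w + v, ?_⟩
    rw [show m + P * (u + 1) = m + P * u + P by ring, h, hw, show g (m + P * u) = z + ρ * v by
      linarith]
    push_cast; ring

lemma Lev.dvd {P : ℕ} {q : ℤ} (hl : Lev P q) {f : ℕ → ℤ} (hf : Rec f) (m u : ℕ) :
    q ∣ f (m + P * u) - f m := by
  obtain ⟨g, -, h⟩ := hl f hf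
  obtain ⟨w, hw⟩ := shift_sum (ρ := 1) (z := 0) (m := m) h (by simp) u
  exact ⟨w, by rw [hw]; ring⟩

/-- Isolation of zeros: if the quotient sequence has exact valuation `e` at `r`, with room to
spare, then zeros of `f` modulo `p ^ E` in the class of `r` modulo `P` are unique modulo
`P * p ^ (E - s - e)`. -/
theorem Base.unique {p P₀ s₀ : ℕ} (hb : Base p P₀ s₀) (k t e E r : ℕ) (ht : s₀ + k = t + 1)
    {f g : ℕ → ℤ} (hf : Rec f) (hg : Rec g)
    (h : ∀ m, f (m + P₀ * p ^ k) = f m + (p : ℤ) ^ (t + 1) * g m)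
    (he : e + 1 ≤ t) (hgr : ¬ (p : ℤ) ^ (e + 1) ∣ g r) (hge : (p : ℤ) ^ e ∣ g r) (u v : ℕ)
    (hu : (p : ℤ) ^ E ∣ f (r + P₀ * p ^ k * u))
    (huv : (p : ℤ) ^ E ∣ f (r + P₀ * p ^ k * (u + v))) (a : ℕ) (ha : t + 1 + e + a ≤ E) :
    p ^ a ∣ v := by
  induction a with
  | zero => simp
  | succ a ih =>
    obtain ⟨v', rfl⟩ := ih (by omega)
    obtain ⟨G, hG, h1, h2⟩ := hb.lift_all k t ht hf hg h a
    have hp0 : (p : ℤ) ≠ 0 := by exact_mod_cast hb.prime.ne_zero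
    have hl := hb.lev_all k
    rw [ht] at hl
    have key : ∀ i, (p : ℤ) ^ (e + 1) ∣
        G (r + P₀ * p ^ k * u + P₀ * p ^ k * p ^ a * i) - g r := by
      intro i
      have e1 := (pow_dvd_pow (p : ℤ) he).trans (h2 (r + P₀ * p ^ k * (u + p ^ a * i)))
      have e2 := (pow_dvd_pow (p : ℤ) (show e + 1 ≤ t + 1 by omega)).trans
        (hl.dvd hg r (u + p ^ a * i))
      have := dvd_add e1 e2
      rw [show r + P₀ * p ^ k * u + P₀ * p ^ k * p ^ a * i
        = r + P₀ * p ^ k * (u + p ^ a * i) by ring]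
      simpa using this
    obtain ⟨w, hw⟩ := shift_sum h1 key v'
    rw [show r + P₀ * p ^ k * u + P₀ * p ^ k * p ^ a * v'
      = r + P₀ * p ^ k * (u + p ^ a * v') by ring] at hw
    have d1 := (pow_dvd_pow (p : ℤ) ha).trans (dvd_sub huv hu)
    rw [hw, add_sub_cancel_left, show t + 1 + e + (a + 1) = (t + 1 + a) + (e + 1) by ring,
      pow_add _ (t + 1 + a)] at d1
    have d2 := (mul_dvd_mul_iff_left (pow_ne_zero _ hp0)).1 d1
    have d3 := (dvd_add_left (Dvd.intro w rfl)).1 d2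
    obtain ⟨z, hz⟩ := hge
    rw [hz, show (v' : ℤ) * ((p : ℤ) ^ e * z) = p ^ e * (v' * z) by ring, pow_succ] at d3
    have d4 := (mul_dvd_mul_iff_left (pow_ne_zero _ hp0)).1 d3
    have hpi : Prime (p : ℤ) := Nat.prime_iff_prime_int.1 hb.prime
    rcases hpi.dvd_or_dvd d4 with d5 | d5
    · have : p ∣ v' := by exact_mod_cast d5
      rw [pow_succ]
      exact mul_dvd_mul_left _ this
    · exact absurd (by rw [hz, pow_succ]; exact mul_dvd_mul_left _ d5) hgr

/-- If the quotient sequence is divisible by `p ^ e` at `r`, then `f` is constant modulo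
`p ^ (s + e)` on the class of `r`. -/
theorem Base.const {p P₀ s₀ : ℕ} (hb : Base p P₀ s₀) (k s e r : ℕ) (ht : s₀ + k = s)
    {f g : ℕ → ℤ} (hg : Rec g)
    (h : ∀ m, f (m + P₀ * p ^ k) = f m + (p : ℤ) ^ s * g m)
    (he : e ≤ s) (hge : (p : ℤ) ^ e ∣ g r) (u : ℕ) :
    (p : ℤ) ^ (s + e) ∣ f (r + P₀ * p ^ k * u) - f r := by
  have hl := hb.lev_all k
  rw [ht] at hl
  obtain ⟨w, hw⟩ := shift_sum (ρ := (p : ℤ) ^ e) (z := 0) (m := r) h (fun i => by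
    have := dvd_add ((pow_dvd_pow (p : ℤ) he).trans (hl.dvd hg r i)) hge
    simpa using this) u
  rw [hw, pow_add]
  exact ⟨w, by ring⟩

end Trib

end

/-! ### A kernel-reducible search for `p`-adic zeros -/

section
open Polynomial
namespace Trib

/-- The shift coefficients of successive periods: an entry `a b c P q` records that the shift by
`P` is `f ↦ a f(m) + b f(m+1) + c f(m+2)` and that it is trivial modulo `q`. -/
inductive Lvs : Type
  | leaf (a b c P q : ℕ) : Lvs
  | cons (a b c P q : ℕ) (tl : Lvs) : Lvs

/-- If-then-else on booleans through the recursor. -/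
noncomputable def cnd (b t e : Bool) : Bool := Bool.rec e t b

/-- Shift a window of three consecutive values, modulo `M`, by coefficients `a b c`. The window
`(x, y, z)` is stored as `X = x + y`, `y`, `z`: near a 2-adic zero the low bits of `x` all vanish,
which would make the hash of the literal `x` useless to the kernel's caches. -/
noncomputable def stepK (M a b c X y z : ℕ) (k : ℕ → ℕ → ℕ → Bool) : Bool :=
  frc (Nat.add X z) fun t => frc (Nat.add (Nat.add y z) t) fun u =>
  frc (Nat.mod (Nat.add (Nat.add (Nat.mul a y) (Nat.mul b z)) (Nat.mul c t)) M) fun y₁ =>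
  frc (Nat.add (Nat.mod (Nat.add (Nat.add (Nat.mul a (Nat.sub X y)) (Nat.mul b y)) (Nat.mul c z)) M)
    y₁) fun X₁ =>
  frc (Nat.mod (Nat.add (Nat.add (Nat.mul a z) (Nat.mul b t)) (Nat.mul c u)) M) fun z₁ =>
  k X₁ y₁ z₁

/-- `j` successive shifts. -/
noncomputable def iterK (M a b c j : ℕ) : ℕ → ℕ → ℕ → (ℕ → ℕ → ℕ → Bool) → Bool :=
  Nat.rec (fun X y z k => k X y z)
    (fun _ ih X y z k => stepK M a b c X y z fun X₁ y₁ z₁ => ih X₁ y₁ z₁ k) j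

/-- Newton iteration for `-1 / g` modulo `q`. -/
noncomputable def invK (q g n : ℕ) : ℕ → (ℕ → Bool) → Bool :=
  Nat.rec (fun x k => k x)
    (fun _ ih x k => frc (Nat.mod (Nat.mul x (Nat.add 2 (Nat.mul g x))) q) fun x₁ => ih x₁ k) n

/-- Follow the `p`-adic digits of a zero of `f` down the levels, solve a linear congruence at the
last one, check the resulting zero `m` modulo `M` and hand it to `K`. -/
noncomputable def pathK (M p pe ng : ℕ) (K : ℕ → Bool) (l : Lvs) : ℕ → ℕ → ℕ → ℕ → Bool :=
  Lvs.rec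
    (fun a b c P q r X y z => stepK M a b c X y z fun V v _ =>
      frc (Nat.div (Nat.add (Nat.sub V v) (Nat.sub M (Nat.sub X y))) (Nat.mul q pe)) fun g =>
      invK q g 7 ng fun xi =>
      frc (Nat.mod (Nat.mul (Nat.div (Nat.sub X y) (Nat.mul q pe)) xi) q) fun t =>
      cnd (Nat.beq (Nat.mod (Nat.add (Nat.sub X y)
          (Nat.mul t (Nat.add (Nat.sub V v) (Nat.sub M (Nat.sub X y))))) M) 0)
        (frc (Nat.add r (Nat.mul P t)) K) false)
    (fun a b c P q _ ih r X y z =>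
      frc (Nat.mod (Nat.mul (Nat.mod (Nat.div (Nat.sub X y) (Nat.mul q pe)) p) ng) p) fun j =>
      iterK M a b c j X y z fun X₁ y₁ z₁ =>
      frc (Nat.add r (Nat.mul j P)) fun r₁ => ih r₁ X₁ y₁ z₁) l

/-- Visit the `n` subclasses `r, r + P, …`. -/
noncomputable def kidsK (M a b c P : ℕ) (F : ℕ → ℕ → ℕ → ℕ → Bool) (n : ℕ) :
    ℕ → ℕ → ℕ → ℕ → Bool :=
  Nat.rec (fun _ _ _ _ => true)
    (fun _ ih r X y z => cnd (F r X y z)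
      (stepK M a b c X y z fun X₁ y₁ z₁ => frc (Nat.add r P) fun r₁ => ih r₁ X₁ y₁ z₁) false) n

/-- Check that the class of `r` has no zero of `f` modulo `M` below `N`. -/
noncomputable def treeK (M N p : ℕ) (l : Lvs) : ℕ → ℕ → ℕ → ℕ → Bool :=
  Lvs.rec
    (fun _ _ _ _ _ _ _ _ _ => false)
    (fun a b c P q tl ih r X y z =>
      cnd (Nat.beq (Nat.mod (Nat.sub X y) q) 0)
        (stepK M a b c X y z fun V v _ =>
          frc (Nat.div (Nat.add (Nat.sub V v) (Nat.sub M (Nat.sub X y))) q) fun g =>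
          frc (Nat.gcd g q) fun pe =>
          cnd (Nat.ble q (Nat.mul p pe))
            (kidsK M a b c P ih p r X y z)
            (cnd (Nat.beq (Nat.mod (Nat.sub X y) (Nat.mul q pe)) 0)
              (frc (Nat.sub p (Nat.mod (Nat.div g pe) p)) fun ng =>
                pathK M p pe ng (fun m =>
                  cnd (Nat.beq (Nat.mod m P) (Nat.mod r P))
                    (Nat.ble N (Nat.mod m (Nat.mul P (Nat.div M (Nat.mul q pe))))) false)
                  (Lvs.cons a b c P q tl) r X y z)
              true))
        true) l

/-- Run `treeK` over the `n` classes `r, r + 1, …`. -/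
noncomputable def rowK (M N p : ℕ) (l : Lvs) (n : ℕ) : ℕ → ℕ → ℕ → ℕ → Bool :=
  kidsK M 0 1 0 1 (treeK M N p l) n

/-- Run the check over `n` consecutive gaps, starting from the values `x y z` of
`T (d + 2), T (d + 3), T (d + 4)`. -/
noncomputable def gapsK (M N p P₀ pG : ℕ) (l : Lvs) (n : ℕ) : ℕ → ℕ → ℕ → Bool :=
  Nat.rec (fun _ _ _ => true)
    (fun _ ih x y z =>
      frc (Nat.sub x 1) fun x₁ => frc (Nat.sub y 2) fun y₁ => frc (Nat.sub z 4) fun z₁ =>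
      frc (Nat.gcd (Nat.gcd x₁ (Nat.gcd y₁ z₁)) pG) fun g =>
      frc (Nat.mod (Nat.div y₁ g) M) fun y₂ =>
      frc (Nat.add (Nat.mod (Nat.div x₁ g) M) y₂) fun X₂ =>
      frc (Nat.mod (Nat.div z₁ g) M) fun z₂ =>
      cnd (rowK M N p l P₀ 0 X₂ y₂ z₂)
        (frc (Nat.add (Nat.add x y) z) fun w => ih y z w) false) n

/-- Composition of two shifts. -/
noncomputable def compK (M a b c a' b' c' : ℕ) (k : ℕ → ℕ → ℕ → Bool) : Bool :=
  frc (Nat.add b c) fun bc => frc (Nat.add bc c) fun b2c =>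
  frc (Nat.mod (Nat.add (Nat.add (Nat.mul a' a) (Nat.mul b' c)) (Nat.mul c' bc)) M) fun A =>
  frc (Nat.mod (Nat.add (Nat.add (Nat.mul a' b) (Nat.mul b' (Nat.add a c))) (Nat.mul c' b2c)) M)
    fun B =>
  frc (Nat.mod (Nat.add (Nat.add (Nat.mul a' c) (Nat.mul b' bc)) (Nat.mul c' (Nat.add a b2c))) M)
    fun C => k A B C

/-- `n` further compositions with the same shift `a b c`. -/
noncomputable def powK (M a b c n : ℕ) : ℕ → ℕ → ℕ → (ℕ → ℕ → ℕ → Bool) → Bool :=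
  Nat.rec (fun a' b' c' k => k a' b' c')
    (fun _ ih a' b' c' k => compK M a b c a' b' c' fun A B C => ih A B C k) n

/-- Build the table of `n + 1` levels. -/
noncomputable def mkK (M p n : ℕ) : ℕ → ℕ → ℕ → ℕ → ℕ → (Lvs → Bool) → Bool :=
  Nat.rec (fun a b c P q k => k (Lvs.leaf a b c P q))
    (fun _ ih a b c P q k =>
      powK M a b c (Nat.sub p 1) a b c fun A B C =>
      frc (Nat.mul P p) fun P' => frc (Nat.mul q p) fun q' =>
      ih A B C P' q' fun tl => k (Lvs.cons a b c P q tl)) n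

end Trib

end

/-! ### Correctness of the tables of shifts -/

section
open Polynomial
namespace Trib

/-- The shift by `P` has coefficients `a b c` modulo `M`. -/
def Sh (M a b c P : ℕ) : Prop :=
  ∀ f, Rec f → ∀ m, (f (m + P) : ZMod M) = a * f m + b * f (m + 1) + c * f (m + 2)

/-- `X y z` encodes the window of `f` at `r` modulo `M`. -/
structure Inv (M : ℕ) (f : ℕ → ℤ) (r X y z : ℕ) : Prop where
  le : y ≤ X
  lt : X - y < M
  h0 : (f r : ZMod M) = (X - y : ℕ)
  h1 : (f (r + 1) : ZMod M) = y
  h2 : (f (r + 2) : ZMod M) = z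

lemma nmod (a b : ℕ) : Nat.mod a b = a % b := rfl
lemma ndiv (a b : ℕ) : Nat.div a b = a / b := rfl

lemma cnd_true {b t e : Bool} (h : cnd b t e = true) : (b = true ∧ t = true) ∨ (b = false ∧ e = true) := by
  cases b
  · exact Or.inr ⟨rfl, h⟩
  · exact Or.inl ⟨rfl, h⟩

lemma cnd_and {b t : Bool} (h : cnd b t false = true) : b = true ∧ t = true := by
  rcases cnd_true h with h | h
  · exact h
  · simp at h

lemma Rec.cast {f : ℕ → ℤ} (hf : Rec f) (M m : ℕ) :
    (f (m + 3) : ZMod M) = f (m + 2) + f (m + 1) + f m := by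
  rw [hf m]; push_cast; rfl

lemma stepK_sound {M a b c X y z P r : ℕ} {k : ℕ → ℕ → ℕ → Bool} {f : ℕ → ℤ}
    (h : stepK M a b c X y z k = true) (hf : Rec f) (hi : Inv M f r X y z) (hs : Sh M a b c P) :
    ∃ X' y' z', Inv M f (r + P) X' y' z' ∧ k X' y' z' = true := by
  simp only [stepK, frc_eq] at h
  refine ⟨_, _, _, ⟨?_, ?_, ?_, ?_, ?_⟩, h⟩
  · exact Nat.le_add_left _ _
  · simp only [Nat.add_eq, nmod, Nat.add_sub_cancel]
    exact Nat.mod_lt _ (by have := hi.lt; omega)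
  all_goals
    have hx : (X : ZMod M) = f r + f (r + 1) := by
      rw [hi.h0, hi.h1, Nat.cast_sub hi.le]; ring
    have h3 := hf.cast M r
    have h4 := hf.cast M (r + 1)
    rw [show r + 1 + 3 = r + 4 by ring, show r + 1 + 2 = r + 3 by ring,
      show r + 1 + 1 = r + 2 by ring] at h4
    have e0 := hs f hf r
    have e1 := hs f hf (r + 1)
    have e2 := hs f hf (r + 2)
    rw [show r + 1 + 2 = r + 3 by ring, show r + 1 + 1 = r + 2 by ring,
      show r + 1 + P = r + P + 1 by ring] at e1
    rw [show r + 2 + 2 = r + 4 by ring, show r + 2 + 1 = r + 3 by ring,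
      show r + 2 + P = r + P + 2 by ring] at e2
    simp only [Nat.add_eq, Nat.mul_eq, nmod, Nat.sub_eq, Nat.add_sub_cancel,
      ZMod.natCast_mod, Nat.cast_add, Nat.cast_mul, ← hi.h0, ← hi.h1, ← hi.h2, hx, e0, e1, e2, h4, h3]
    try ring

lemma iterK_sound {M a b c P j : ℕ} {k : ℕ → ℕ → ℕ → Bool} {f : ℕ → ℤ} (hf : Rec f)
    (hs : Sh M a b c P) : ∀ {X y z r : ℕ}, iterK M a b c j X y z k = true → Inv M f r X y z →
    ∃ X' y' z', Inv M f (r + j * P) X' y' z' ∧ k X' y' z' = true := by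
  induction j with
  | zero => intro X y z r h hi; exact ⟨X, y, z, by simpa using hi, h⟩
  | succ j ih =>
    intro X y z r h hi
    obtain ⟨X', y', z', hi', h'⟩ := stepK_sound (k := fun x' y' z' => iterK M a b c j x' y' z' k)
      h hf hi hs
    obtain ⟨X'', y'', z'', hi'', h''⟩ := ih h' hi'
    exact ⟨X'', y'', z'', by rwa [show r + (j + 1) * P = r + P + j * P by ring], h''⟩

lemma invK_sound {q g : ℕ} {k : ℕ → Bool} (n : ℕ) : ∀ {x : ℕ}, invK q g n x k = true →
    ∃ x', k x' = true := by
  induction n with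
  | zero => intro x h; exact ⟨x, h⟩
  | succ n ih => intro x h; exact ih h

/-- The table lists consecutive levels from `P₀ * p ^ k`, `p ^ (s₀ + k)` on, up to one where the
shift is linear modulo `M`. -/
def Valid (M p P₀ s₀ : ℕ) : ℕ → Lvs → Prop
  | k, .leaf a b c P q => P = P₀ * p ^ k ∧ q = p ^ (s₀ + k) ∧ Sh M a b c P ∧ M ∣ q * q
  | k, .cons a b c P q tl => P = P₀ * p ^ k ∧ q = p ^ (s₀ + k) ∧ Sh M a b c P ∧
      q * q ∣ M ∧ Valid M p P₀ s₀ (k + 1) tl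

lemma Inv.diff {M r X y z P V v w : ℕ} {f : ℕ → ℤ} (hi : Inv M f r X y z)
    (hi' : Inv M f (r + P) V v w) :
    (((V - v) + (M - (X - y)) : ℕ) : ZMod M) = f (r + P) - f r := by
  rw [Nat.cast_add, Nat.cast_sub hi.lt.le, hi'.h0, hi.h0]
  simp
  ring

lemma pathK_cons (M p pe ng : ℕ) (K : ℕ → Bool) (a b c P q : ℕ) (tl : Lvs) (r X y z : ℕ) :
    pathK M p pe ng K (.cons a b c P q tl) r X y z =
      iterK M a b c ((X - y) / (q * pe) % p * ng % p) X y z fun X' y' z' =>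
        pathK M p pe ng K tl (r + (X - y) / (q * pe) % p * ng % p * P) X' y' z' := rfl

lemma pathK_sound {M p P₀ s₀ pe ng : ℕ} {K : ℕ → Bool} (hb : Base p P₀ s₀) {f : ℕ → ℤ}
    (hf : Rec f) (l : Lvs) : ∀ {k r X y z : ℕ}, Valid M p P₀ s₀ k l →
    pathK M p pe ng K l r X y z = true → Inv M f r X y z → ∃ m, (M : ℤ) ∣ f m ∧ K m = true := by
  induction l with
  | leaf a b c P q =>
    intro k r X y z hv h hi
    obtain ⟨hP, hq, hs, hM⟩ := hv
    obtain ⟨V, v, w, hi', h'⟩ := stepK_sound (P := P) h hf hi hs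
    simp only [frc_eq] at h'
    obtain ⟨xi, h'⟩ := invK_sound _ h'
    obtain ⟨e1, e2⟩ := cnd_and h'
    refine ⟨_, ?_, e2⟩
    generalize Nat.mod _ q = t at e1 ⊢
    have e3 := Nat.eq_of_beq_eq_true e1
    simp only [Nat.add_eq, Nat.mul_eq, nmod, Nat.sub_eq] at e3 ⊢
    have e4 := (ZMod.natCast_eq_zero_iff _ M).2 (Nat.dvd_of_mod_eq_zero e3)
    rw [Nat.cast_add, Nat.cast_mul, hi.diff hi', ← hi.h0] at e4
    have hl := hb.lev_all k
    rw [← hP] at hl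
    obtain ⟨g, hg, hfg⟩ := hl f hf
    obtain ⟨u, hu⟩ := shift_sum (m := r) hfg (fun i => hl.dvd hg r i) t
    have hM' : (M : ℤ) ∣ (p : ℤ) ^ (s₀ + k) * (p : ℤ) ^ (s₀ + k) := by
      have : ((q * q : ℕ) : ℤ) = (p : ℤ) ^ (s₀ + k) * (p : ℤ) ^ (s₀ + k) := by rw [hq]; push_cast; rfl
      rw [← this]; exact_mod_cast hM
    have e5 : (M : ℤ) ∣ f r + t * (f (r + P) - f r) := by
      rw [← ZMod.intCast_zmod_eq_zero_iff_dvd]; push_cast; exact e4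
    rw [hfg r] at e5
    have := dvd_add e5 (hM'.mul_right u)
    rw [hu]
    have e6 : f r + (p : ℤ) ^ (s₀ + k) * (t * g r + (p : ℤ) ^ (s₀ + k) * u)
        = f r + t * (f r + (p : ℤ) ^ (s₀ + k) * g r - f r)
          + (p : ℤ) ^ (s₀ + k) * (p : ℤ) ^ (s₀ + k) * u := by ring
    rw [e6]
    exact this
  | cons a b c P q tl ih =>
    intro k r X y z hv h hi
    obtain ⟨hP, hq, hs, -, hv'⟩ := hv
    rw [pathK_cons] at h
    obtain ⟨X', y', z', hi', h'⟩ := iterK_sound hf hs h hi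
    exact ih hv' h' hi'

end Trib

end

/-! ### Correctness of the search in one residue class -/

section
open Polynomial
namespace Trib

lemma Inv.dvd {M r X y z d : ℕ} {f : ℕ → ℤ} (hi : Inv M f r X y z) (hd : d ∣ M) :
    (d : ℤ) ∣ f r ↔ d ∣ X - y := by
  have h : (M : ℤ) ∣ f r - (X - y : ℕ) := by
    rw [← ZMod.intCast_zmod_eq_zero_iff_dvd]
    push_cast
    rw [hi.h0]; simp
  have h' : (d : ℤ) ∣ f r - (X - y : ℕ) := (Int.natCast_dvd_natCast.2 hd).trans h
  rw [← Int.natCast_dvd_natCast]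
  exact dvd_iff_dvd_of_dvd_sub h'

lemma kidsK_sound {M a b c P : ℕ} {F : ℕ → ℕ → ℕ → ℕ → Bool} {f : ℕ → ℤ} (hf : Rec f)
    (hs : Sh M a b c P) (n : ℕ) : ∀ {r X y z : ℕ}, kidsK M a b c P F n r X y z = true →
    Inv M f r X y z → ∀ j < n, ∃ X' y' z', Inv M f (r + P * j) X' y' z' ∧
      F (r + P * j) X' y' z' = true := by
  induction n with
  | zero => intro r X y z _ _ j hj; omega
  | succ n ih =>
    intro r X y z h hi j hj
    obtain ⟨h1, h2⟩ := cnd_and h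
    rcases j with _ | j
    · exact ⟨X, y, z, by simpa using hi, by simpa using h1⟩
    · obtain ⟨X', y', z', hi', h'⟩ := stepK_sound (k := fun X' y' z' =>
        frc (Nat.add r P) fun r' => kidsK M a b c P F n r' X' y' z') h2 hf hi hs
      rw [frc_eq] at h'
      obtain ⟨X'', y'', z'', hi'', h''⟩ := ih h' hi' j (by omega)
      exact ⟨X'', y'', z'', by rwa [show r + P * (j + 1) = r + P + P * j by ring],
        by rwa [show r + P * (j + 1) = r + P + P * j by ring]⟩

lemma treeK_cons (M N p a b c P q : ℕ) (tl : Lvs) (r X y z : ℕ) :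
    treeK M N p (.cons a b c P q tl) r X y z =
      cnd (Nat.beq ((X - y) % q) 0)
        (stepK M a b c X y z fun V v _ =>
          cnd (Nat.ble q (p * Nat.gcd (((V - v) + (M - (X - y))) / q) q))
            (kidsK M a b c P (treeK M N p tl) p r X y z)
            (cnd (Nat.beq ((X - y) % (q * Nat.gcd (((V - v) + (M - (X - y))) / q) q)) 0)
              (pathK M p (Nat.gcd (((V - v) + (M - (X - y))) / q) q)
                (p - ((V - v) + (M - (X - y))) / q / Nat.gcd (((V - v) + (M - (X - y))) / q) q % p)
                (fun m => cnd (Nat.beq (m % P) (r % P))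
                    (Nat.ble N (m % (P * (M / (q * Nat.gcd (((V - v) + (M - (X - y))) / q) q)))))
                    false)
                  (Lvs.cons a b c P q tl) r X y z)
              true))
        true := rfl

/-- The contradiction at an isolated zero: the only candidate is at least `N`. -/
lemma Base.isolated {p P₀ s₀ : ℕ} (hb : Base p P₀ s₀) {k e E r N u m : ℕ} {f g : ℕ → ℤ}
    (hf : Rec f) (hg : Rec g)
    (h : ∀ m, f (m + P₀ * p ^ k) = f m + (p : ℤ) ^ (s₀ + k) * g m)
    (he : e + 2 ≤ s₀ + k) (hE : s₀ + k + e ≤ E)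
    (hgr : ¬ (p : ℤ) ^ (e + 1) ∣ g r) (hge : (p : ℤ) ^ e ∣ g r)
    (hu : (p : ℤ) ^ E ∣ f (r + P₀ * p ^ k * u)) (hN : r + P₀ * p ^ k * u < N)
    (hm : (p : ℤ) ^ E ∣ f m) (hmr : m % (P₀ * p ^ k) = r % (P₀ * p ^ k))
    (hmN : N ≤ m % (P₀ * p ^ k * p ^ (E - (s₀ + k + e)))) : False := by
  have hm0 : N ≤ m := hmN.trans (Nat.mod_le _ _)
  obtain ⟨v, rfl⟩ : ∃ v, m = r + P₀ * p ^ k * u + P₀ * p ^ k * v := by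
    have h1 : (r + P₀ * p ^ k * u) ≡ m [MOD P₀ * p ^ k] := by
      rw [Nat.ModEq, hmr]; simp
    obtain ⟨v, hv⟩ := (Nat.modEq_iff_dvd' (by omega)).1 h1
    exact ⟨v, by omega⟩
  have h2 := hb.unique k (s₀ + k - 1) e E r (by omega) hf hg
    (by rwa [show s₀ + k - 1 + 1 = s₀ + k by omega]) (by omega) hgr hge u v hu
    (by rwa [mul_add, ← add_assoc]) (E - (s₀ + k + e)) (by omega)
  obtain ⟨w, rfl⟩ := h2
  rw [← mul_assoc, Nat.add_mul_mod_self_left] at hmN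
  have := Nat.mod_le (r + P₀ * p ^ k * u) (P₀ * p ^ k * p ^ (E - (s₀ + k + e)))
  omega

theorem treeK_sound {M N p P₀ s₀ E : ℕ} (hb : Base p P₀ s₀) (hM : M = p ^ E) {f : ℕ → ℤ}
    (hf : Rec f) (l : Lvs) : ∀ {k r X y z : ℕ}, Valid M p P₀ s₀ k l →
    treeK M N p l r X y z = true → Inv M f r X y z → ∀ u, r + P₀ * p ^ k * u < N →
    ¬ (M : ℤ) ∣ f (r + P₀ * p ^ k * u) := by
  induction l with
  | leaf => intro k r X y z _ h; exact absurd (show false = true from h) (by simp)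
  | cons a b c P q tl ih =>
    intro k r X y z hv h hi u hN hd
    have hvv := hv
    obtain ⟨hP, hq, hs, hqM, hv'⟩ := hv
    rw [treeK_cons] at h
    have hl := hb.lev_all k
    have hq0 : 0 < q := by rw [hq]; exact pow_pos hb.prime.pos _
    have hqd : q ∣ M := (Dvd.intro _ rfl).trans hqM
    have hqZ : (q : ℤ) = (p : ℤ) ^ (s₀ + k) := by rw [hq]; push_cast; rfl
    rcases cnd_true h with ⟨h0, h⟩ | ⟨h0, -⟩
    · obtain ⟨V, v, w, hi', h⟩ := stepK_sound (P := P) h hf hi hs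
      have hdiff := hi.diff hi'
      generalize (V - v) + (M - (X - y)) = D at hdiff h
      obtain ⟨G, hG, hfG⟩ := hl f hf
      rw [hP, hfG] at hdiff
      have hD : (M : ℤ) ∣ D - q * G r := by
        rw [← ZMod.intCast_zmod_eq_zero_iff_dvd]
        push_cast at hdiff ⊢
        rw [hdiff, hq]; push_cast; ring
      have hqD : q ∣ D := by
        have h1 := (Int.natCast_dvd_natCast.2 hqd).trans hD
        have := (dvd_sub_left (Dvd.intro (G r) rfl)).1 h1
        exact_mod_cast this
      obtain ⟨g, rfl⟩ := hqD
      rw [Nat.mul_div_cancel_left _ hq0] at h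
      have hgG : (q : ℤ) ∣ g - G r := by
        have h1 := (Int.natCast_dvd_natCast.2 hqM).trans hD
        push_cast at h1
        rw [← mul_sub] at h1
        exact (mul_dvd_mul_iff_left (by exact_mod_cast hq0.ne')).1 h1
      rcases cnd_true h with ⟨-, h⟩ | ⟨h1, h⟩
      · have hj : u % p < p := Nat.mod_lt _ hb.prime.pos
        obtain ⟨X', y', z', hi'', h''⟩ := kidsK_sound hf hs p h hi (u % p) hj
        have e : r + P * (u % p) + P₀ * p ^ (k + 1) * (u / p) = r + P₀ * p ^ k * u := by
          conv_rhs => rw [← Nat.mod_add_div u p]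
          rw [hP]; ring
        exact ih hv' h'' hi'' (u / p) (by rw [e]; exact hN) (by rw [e]; exact hd)
      · obtain ⟨e, he, hpe⟩ := (Nat.dvd_prime_pow hb.prime).1 ((Nat.gcd_dvd_right g q).trans hq.dvd)
        have h1' : p * g.gcd q < q := by
          have : ¬ q ≤ p * g.gcd q := by
            intro h2; rw [Nat.ble_eq_true_of_le h2] at h1; simp at h1
          omega
        have he2 : e + 2 ≤ s₀ + k := by
          rw [hpe, hq, ← pow_succ', Nat.pow_lt_pow_iff_right hb.prime.one_lt] at h1'
          omega
        have hge : (p : ℤ) ^ e ∣ G r := by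
          have h2 : (p : ℤ) ^ e ∣ g := by
            have := Nat.gcd_dvd_left g q
            rw [hpe] at this; exact_mod_cast this
          have h3 : (p : ℤ) ^ e ∣ q := by rw [hqZ]; exact pow_dvd_pow _ (by omega)
          exact (dvd_iff_dvd_of_dvd_sub (h3.trans hgG)).1 h2
        have hgr : ¬ (p : ℤ) ^ (e + 1) ∣ G r := by
          intro h2
          have h3 : (p : ℤ) ^ (e + 1) ∣ q := by rw [hqZ]; exact pow_dvd_pow _ (by omega)
          have h4 := (dvd_iff_dvd_of_dvd_sub (h3.trans hgG)).2 h2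
          have h5 : p ^ (e + 1) ∣ g.gcd q := Nat.dvd_gcd (by exact_mod_cast h4) (by exact_mod_cast h3)
          rw [hpe, Nat.pow_dvd_pow_iff_le_right hb.prime.one_lt] at h5
          omega
        have hE : s₀ + k + e ≤ E := by
          rw [hq, hM, ← pow_add, Nat.pow_dvd_pow_iff_le_right hb.prime.one_lt] at hqM
          omega
        rw [hpe, show q * p ^ e = p ^ (s₀ + k + e) by rw [hq]; ring] at h
        rcases cnd_true h with ⟨-, h⟩ | ⟨h2, -⟩
        · obtain ⟨m, hm, hK⟩ := pathK_sound hb hf _ hvv h hi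
          obtain ⟨k1, k2⟩ := cnd_and hK
          have k1 := Nat.eq_of_beq_eq_true k1
          have k2 := Nat.le_of_ble_eq_true k2
          have hdiv : M / p ^ (s₀ + k + e) = p ^ (E - (s₀ + k + e)) := by
            rw [hM]; exact Nat.pow_div hE hb.prime.pos
          rw [hdiv, hP] at k2
          rw [hP] at k1
          have hMZ : (M : ℤ) = (p : ℤ) ^ E := by rw [hM]; push_cast; rfl
          rw [hMZ] at hm hd
          exact hb.isolated hf hG hfG he2 hE hgr hge hd hN hm k1 k2
        · have hc := hb.const k (s₀ + k) e r rfl hG hfG (by omega) hge u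
          have hdM : p ^ (s₀ + k + e) ∣ M := by rw [hM]; exact pow_dvd_pow _ hE
          have h3 : (p : ℤ) ^ (s₀ + k + e) ∣ f (r + P₀ * p ^ k * u) :=
            (by exact_mod_cast Int.natCast_dvd_natCast.2 hdM : (p : ℤ) ^ (s₀ + k + e) ∣ (M : ℤ)).trans hd
          have h4 := (dvd_iff_dvd_of_dvd_sub hc).1 h3
          have h5 := (hi.dvd hdM).1 (by exact_mod_cast h4)
          rw [Nat.mod_eq_zero_of_dvd h5] at h2
          simp at h2
    · have h3 : (q : ℤ) ∣ f (r + P₀ * p ^ k * u) := (Int.natCast_dvd_natCast.2 hqd).trans hd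
      have h4 := (dvd_iff_dvd_of_dvd_sub (hqZ ▸ hl.dvd hf r u)).1 h3
      have h5 := (hi.dvd hqd).1 h4
      rw [Nat.mod_eq_zero_of_dvd h5] at h0
      simp at h0

end Trib

end

/-! ### Correctness of the whole search -/

section
open Polynomial
namespace Trib

lemma Sh_one (M : ℕ) : Sh M 0 1 0 1 := by
  intro f _ m; simp

/-- All classes modulo `P₀` together. -/
lemma rowK_sound {M N p P₀ s₀ E : ℕ} (hb : Base p P₀ s₀) (hM : M = p ^ E) {f : ℕ → ℤ}
    (hf : Rec f) {l : Lvs} (hv : Valid M p P₀ s₀ 0 l) {X y z : ℕ}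
    (h : rowK M N p l P₀ 0 X y z = true) (hi : Inv M f 0 X y z) (m : ℕ) (hm : m < N) :
    ¬ (M : ℤ) ∣ f m := by
  obtain ⟨X', y', z', hi', h'⟩ := kidsK_sound hf (Sh_one M) P₀ h hi (m % P₀) (Nat.mod_lt _ hb.pos)
  have e : 0 + 1 * (m % P₀) + P₀ * p ^ 0 * (m / P₀) = m := by
    rw [pow_zero]; have := Nat.mod_add_div m P₀; linarith
  have := treeK_sound hb hM hf l hv h' hi' (m / P₀) (by rw [e]; exact hm)
  rwa [e] at this

lemma T_Rec : Rec T := fun m => T_rec m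

lemma Rec.dvd {f : ℕ → ℤ} (hf : Rec f) {g : ℤ} (h0 : g ∣ f 0) (h1 : g ∣ f 1) (h2 : g ∣ f 2) :
    ∀ m, g ∣ f m ∧ g ∣ f (m + 1) ∧ g ∣ f (m + 2)
  | 0 => ⟨h0, h1, h2⟩
  | m + 1 => by
    obtain ⟨a, b, c⟩ := Rec.dvd hf h0 h1 h2 m
    exact ⟨b, c, by rw [show m + 1 + 2 = m + 3 by ring, hf m]; exact dvd_add (dvd_add c b) a⟩

/-- One gap: `x y z` are `T (d + 2), T (d + 3), T (d + 4)`; the content of the difference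
sequence is divided out before the search. -/
lemma gap_sound {M N p P₀ s₀ E G : ℕ} (hb : Base p P₀ s₀) (hM : M = p ^ E) {l : Lvs}
    (hv : Valid M p P₀ s₀ 0 l) {d x y z : ℕ} (hx : T (d + 2) = x) (hy : T (d + 3) = y)
    (hz : T (d + 4) = z)
    (h : rowK M N p l P₀ 0
      ((x - 1) / Nat.gcd (Nat.gcd (x - 1) (Nat.gcd (y - 2) (z - 4))) (p ^ G) % M +
       (y - 2) / Nat.gcd (Nat.gcd (x - 1) (Nat.gcd (y - 2) (z - 4))) (p ^ G) % M)
      ((y - 2) / Nat.gcd (Nat.gcd (x - 1) (Nat.gcd (y - 2) (z - 4))) (p ^ G) % M)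
      ((z - 4) / Nat.gcd (Nat.gcd (x - 1) (Nat.gcd (y - 2) (z - 4))) (p ^ G) % M) = true)
    (m : ℕ) (hm : m < N) :
    ¬ (p : ℤ) ^ (E + G) ∣ T (m + 2 + d) - T (m + 2) := by
  have hp0 : 0 < p := hb.prime.pos
  have hM0 : 0 < M := by rw [hM]; exact pow_pos hp0 _
  have m2 : ∀ k, T (k + 2) ≥ 1 ∧ T (k + 3) ≥ 2 ∧ T (k + 4) ≥ 4 := by
    intro k
    induction k with
    | zero => simp [T]
    | succ k ih =>
      have e1 := T_mono1 (k + 2)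
      have e2 := T_mono1 (k + 3)
      have e3 := T_mono1 (k + 4)
      simp only [add_assoc] at e1 e2 e3 ⊢
      norm_num at e1 e2 e3 ⊢
      omega
  obtain ⟨x1, y2, z4⟩ := m2 d
  set g := Nat.gcd (Nat.gcd (x - 1) (Nat.gcd (y - 2) (z - 4))) (p ^ G) with hg
  have hg0 : 0 < g := Nat.gcd_pos_of_pos_right _ (pow_pos hp0 _)
  have gx : g ∣ x - 1 := (Nat.gcd_dvd_left _ _).trans (Nat.gcd_dvd_left _ _)
  have gy : g ∣ y - 2 := ((Nat.gcd_dvd_left _ _).trans (Nat.gcd_dvd_right _ _)).trans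
    (Nat.gcd_dvd_left _ _)
  have gz : g ∣ z - 4 := ((Nat.gcd_dvd_left _ _).trans (Nat.gcd_dvd_right _ _)).trans
    (Nat.gcd_dvd_right _ _)
  have gp : g ∣ p ^ G := Nat.gcd_dvd_right _ _
  clear_value g
  set F : ℕ → ℤ := fun m => T (m + 2 + d) - T (m + 2) with hF
  have hFR : Rec F := by
    intro m
    have a1 := T_Rec (m + 2 + d)
    have a2 := T_Rec (m + 2)
    simp only [hF]
    rw [show m + 3 + 2 + d = m + 2 + d + 3 by ring, show m + 2 + 2 + d = m + 2 + d + 2 by ring,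
      show m + 1 + 2 + d = m + 2 + d + 1 by ring, show m + 3 + 2 = m + 2 + 3 by ring,
      show m + 1 + 2 = m + 2 + 1 by ring, a1, a2]
    ring
  have F0 : F 0 = (x - 1 : ℕ) := by
    simp only [hF]
    rw [show 0 + 2 + d = d + 2 by ring, hx, Nat.cast_sub (by omega)]
    simp [T]
  have F1 : F 1 = (y - 2 : ℕ) := by
    simp only [hF]
    rw [show 1 + 2 + d = d + 3 by ring, hy, Nat.cast_sub (by omega)]
    simp [T]
  have F2 : F 2 = (z - 4 : ℕ) := by
    simp only [hF]
    rw [show 2 + 2 + d = d + 4 by ring, hz, Nat.cast_sub (by omega)]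
    simp [T]
  have hdv : ∀ m, (g : ℤ) ∣ F m := fun m => (hFR.dvd (by rw [F0]; exact_mod_cast gx)
    (by rw [F1]; exact_mod_cast gy) (by rw [F2]; exact_mod_cast gz) m).1
  choose f hf using hdv
  have hgZ : (g : ℤ) ≠ 0 := by exact_mod_cast hg0.ne'
  have hfR : Rec f := by
    intro m
    apply mul_left_cancel₀ hgZ
    rw [mul_add, mul_add, ← hf, ← hf, ← hf, ← hf]
    exact hFR m
  have fval : ∀ i w, F i = (w : ℕ) → g ∣ w → (f i : ZMod M) = (w / g % M : ℕ) := by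
    intro i w h1 h2
    obtain ⟨v, rfl⟩ := h2
    rw [Nat.mul_div_cancel_left _ hg0]
    rw [hf i] at h1
    push_cast at h1
    have := mul_left_cancel₀ hgZ h1
    rw [this]; simp
  have hi : Inv M f 0 ((x - 1) / g % M + (y - 2) / g % M) ((y - 2) / g % M) ((z - 4) / g % M) := by
    refine ⟨Nat.le_add_left _ _, ?_, ?_, ?_, ?_⟩
    · rw [Nat.add_sub_cancel]; exact Nat.mod_lt _ hM0
    · rw [Nat.add_sub_cancel]; exact fval 0 _ F0 gx
    · exact fval 1 _ F1 gy
    · exact fval 2 _ F2 gz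
  have key := rowK_sound hb hM hfR hv h hi m hm
  intro hdvd
  apply key
  change (p : ℤ) ^ (E + G) ∣ F m at hdvd
  rw [hf m, pow_add] at hdvd
  have : (g : ℤ) * p ^ E ∣ g * f m := by
    refine Dvd.dvd.trans ?_ hdvd
    rw [mul_comm]
    exact mul_dvd_mul_left _ (by exact_mod_cast gp)
  have := (mul_dvd_mul_iff_left hgZ).1 this
  rw [hM]; exact_mod_cast this

lemma gapsK_sound {M N p P₀ s₀ E G : ℕ} (hb : Base p P₀ s₀) (hM : M = p ^ E) {l : Lvs}
    (hv : Valid M p P₀ s₀ 0 l) (n : ℕ) : ∀ {d x y z : ℕ}, T (d + 2) = x → T (d + 3) = y →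
    T (d + 4) = z → gapsK M N p P₀ (p ^ G) l n x y z = true →
    ∀ i < n, ∀ m < N, ¬ (p : ℤ) ^ (E + G) ∣ T (m + 2 + (d + i)) - T (m + 2) := by
  induction n with
  | zero => intro d x y z _ _ _ _ i hi; omega
  | succ n ih =>
    intro d x y z hx hy hz h i hi m hm
    obtain ⟨h1, h2⟩ := cnd_and (b := rowK M N p l P₀ 0 _ _ _) h
    rcases i with _ | i
    · exact gap_sound hb hM hv hx hy hz h1 m hm
    · rw [show d + (i + 1) = d + 1 + i by ring]
      refine ih (d := d + 1) hy hz ?_ h2 i (by omega) m hm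
      have := T_rec (d + 2)
      rw [show d + 1 + 4 = d + 2 + 3 by ring, this, show d + 2 + 2 = d + 4 by ring,
        show d + 2 + 1 = d + 3 by ring, hx, hy, hz]
      simp only [Nat.add_eq]; push_cast; ring

lemma compK_sound {M a b c a' b' c' P P' : ℕ} {k : ℕ → ℕ → ℕ → Bool}
    (h : compK M a b c a' b' c' k = true) (hs : Sh M a b c P) (hs' : Sh M a' b' c' P') :
    ∃ A B C, Sh M A B C (P + P') ∧ k A B C = true := by
  simp only [compK, frc_eq] at h
  refine ⟨_, _, _, ?_, h⟩
  intro f hf m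
  have h3 := hf.cast M m
  have h4 := hf.cast M (m + 1)
  rw [show m + 1 + 3 = m + 4 by ring, show m + 1 + 2 = m + 3 by ring,
    show m + 1 + 1 = m + 2 by ring] at h4
  have e := hs' f hf (m + P)
  have e0 := hs f hf m
  have e1 := hs f hf (m + 1)
  have e2 := hs f hf (m + 2)
  rw [show m + 1 + 2 = m + 3 by ring, show m + 1 + 1 = m + 2 by ring,
    show m + 1 + P = m + P + 1 by ring] at e1
  rw [show m + 2 + 2 = m + 4 by ring, show m + 2 + 1 = m + 3 by ring,
    show m + 2 + P = m + P + 2 by ring] at e2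
  simp only [Nat.add_eq, Nat.mul_eq, nmod, ZMod.natCast_mod, Nat.cast_add, Nat.cast_mul,
    ← add_assoc, e, e0, e1, e2, h4, h3]
  ring

lemma powK_sound {M a b c P : ℕ} {k : ℕ → ℕ → ℕ → Bool} (hs : Sh M a b c P) (n : ℕ) :
    ∀ {a' b' c' P' : ℕ}, powK M a b c n a' b' c' k = true → Sh M a' b' c' P' →
    ∃ A B C, Sh M A B C (P * n + P') ∧ k A B C = true := by
  induction n with
  | zero => intro a' b' c' P' h hs'; exact ⟨a', b', c', by simpa using hs', h⟩
  | succ n ih =>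
    intro a' b' c' P' h hs'
    obtain ⟨A, B, C, h1, h2⟩ := compK_sound (k := fun A B C => powK M a b c n A B C k) h hs hs'
    obtain ⟨A', B', C', h3, h4⟩ := ih h2 h1
    exact ⟨A', B', C', by rwa [show P * (n + 1) + P' = P * n + (P + P') by ring], h4⟩

lemma mkK_sound {M p P₀ s₀ E : ℕ} (hp : 0 < p) (hM : M = p ^ E) (n : ℕ) :
    ∀ {j a b c P q : ℕ} {k : Lvs → Bool},
    mkK M p n a b c P q k = true → P = P₀ * p ^ j → q = p ^ (s₀ + j) → Sh M a b c P →
    E = 2 * (s₀ + j + n) → ∃ l, Valid M p P₀ s₀ j l ∧ k l = true := by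
  induction n with
  | zero =>
    intro j a b c P q k h hP hq hs hE
    refine ⟨.leaf a b c P q, ⟨hP, hq, hs, ?_⟩, h⟩
    rw [hM, hq, ← pow_add]
    exact pow_dvd_pow _ (by omega)
  | succ n ih =>
    intro j a b c P q k h hP hq hs hE
    obtain ⟨A, B, C, h1, h2⟩ := powK_sound (k := fun A B C =>
      frc (Nat.mul P p) fun P' => frc (Nat.mul q p) fun q' =>
      mkK M p n A B C P' q' fun tl => k (Lvs.cons a b c P q tl)) hs (p - 1) h hs
    simp only [frc_eq] at h2
    obtain ⟨l, hl, hk⟩ := ih (j := j + 1) h2 (by rw [hP, Nat.mul_eq]; ring)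
      (by rw [hq, Nat.mul_eq]; ring)
      (by rw [Nat.mul_eq]; convert h1 using 1
          obtain ⟨p', rfl⟩ : ∃ p', p = p' + 1 := ⟨p - 1, by omega⟩
          simp; ring) (by omega)
    refine ⟨.cons a b c P q l, ⟨hP, hq, hs, ?_, hl⟩, hk⟩
    rw [hM, hq, ← pow_add]
    exact pow_dvd_pow _ (by omega)

/-- The complete computation: table of levels, then all gaps. -/
noncomputable def allK (p E G a b c P₀ q n N D : ℕ) : Bool :=
  frc (Nat.pow p E) fun M => frc (Nat.pow p G) fun pG => mkK M p n a b c P₀ q fun l =>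
    gapsK M N p P₀ pG l D 2 4 7

theorem allK_sound {p E G a b c P₀ s₀ q n N D : ℕ} (hb : Base p P₀ s₀) (hq : q = p ^ s₀)
    (hs : Sh (p ^ E) a b c P₀) (hE : E = 2 * (s₀ + n))
    (h : allK p E G a b c P₀ q n N D = true) (d m : ℕ) (hd : d < D) (hm : m < N) :
    ¬ (p : ℤ) ^ (E + G) ∣ T (m + 2 + (1 + d)) - T (m + 2) := by
  simp only [allK, frc_eq] at h
  obtain ⟨l, hl, hk⟩ := mkK_sound (P₀ := P₀) (s₀ := s₀) (E := E) (j := 0) hb.prime.pos rfl n h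
    (by simp) (by simpa using hq) hs (by simpa using hE)
  exact gapsK_sound (d := 1) (G := G) hb rfl hl D (by simp [T]) (by simp [T]) (by simp [T]) hk
    d hd m hm

lemma Sh_2 (M : ℕ) : Sh M 13 20 24 8 := by
  intro f hf m
  have h : f (m + 8) = 13 * f m + 20 * f (m + 1) + 24 * f (m + 2) := by
    have h0 := hf m
    have h1 := hf (m + 1)
    have h2 := hf (m + 2)
    have h3 := hf (m + 3)
    have h4 := hf (m + 4)
    have h5 := hf (m + 5)
    simp only [add_assoc] at h0 h1 h2 h3 h4 h5
    norm_num at h0 h1 h2 h3 h4 h5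
    rw [h5, h4, h3, h2, h1, h0]; ring
  rw [h]; push_cast; rfl

lemma Sh_3 (M : ℕ) : Sh M 274 423 504 13 := by
  intro f hf m
  have h : f (m + 13) = 274 * f m + 423 * f (m + 1) + 504 * f (m + 2) := by
    have h0 := hf m
    have h1 := hf (m + 1)
    have h2 := hf (m + 2)
    have h3 := hf (m + 3)
    have h4 := hf (m + 4)
    have h5 := hf (m + 5)
    have h6 := hf (m + 6)
    have h7 := hf (m + 7)
    have h8 := hf (m + 8)
    have h9 := hf (m + 9)
    have h10 := hf (m + 10)
    simp only [add_assoc] at h0 h1 h2 h3 h4 h5 h6 h7 h8 h9 h10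
    norm_num at h0 h1 h2 h3 h4 h5 h6 h7 h8 h9 h10
    rw [h10, h9, h8, h7, h6, h5, h4, h3, h2, h1, h0]; ring
  rw [h]; push_cast; rfl

end Trib

end

/-! ### Valuations of differences of Tribonacci numbers -/

section
namespace Trib
theorem allK_2 : allK 2 222 12 13 20 24 8 4 109 (Nat.pow 10 62) 488 = true := by decide +kernel
theorem allK_3 : allK 3 138 8 274 423 504 13 3 68 (Nat.pow 10 62) 488 = true := by decide +kernel

/-- The 2-adic valuations of differences of Tribonacci numbers in the remaining range. -/
theorem val_2 (m d : ℕ) (h0 : 1 ≤ d) (hd : d ≤ 488) (hm : 2 ≤ m) (hm' : m < 10 ^ 62) :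
    ¬ (2 : ℤ) ^ 234 ∣ T (m + d) - T m := by
  obtain ⟨m, rfl⟩ : ∃ k, m = k + 2 := ⟨m - 2, by omega⟩
  obtain ⟨d, rfl⟩ : ∃ k, d = 1 + k := ⟨d - 1, by omega⟩
  have := allK_sound base_2 (by norm_num) (Sh_2 _) (by norm_num) allK_2 d m (by omega)
    (by rw [Nat.pow_eq]; omega)
  simpa using this

/-- The 3-adic valuations of differences of Tribonacci numbers in the remaining range. -/
theorem val_3 (m d : ℕ) (h0 : 1 ≤ d) (hd : d ≤ 488) (hm : 2 ≤ m) (hm' : m < 10 ^ 62) :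
    ¬ (3 : ℤ) ^ 146 ∣ T (m + d) - T m := by
  obtain ⟨m, rfl⟩ : ∃ k, m = k + 2 := ⟨m - 2, by omega⟩
  obtain ⟨d, rfl⟩ : ∃ k, d = 1 + k := ⟨d - 1, by omega⟩
  have := allK_sound base_3 (by norm_num) (Sh_3 _) (by norm_num) allK_3 d m (by omega)
    (by rw [Nat.pow_eq]; omega)
  simpa using this
end Trib

end

/-! ### Reduction to small indices -/

section
namespace Trib
variable {c : ℤ} {n x y : Fin 4 → ℕ}

theorem allK_2' : allK 2 16 0 13 20 24 8 4 6 1100 37 = true := by decide +kernel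
theorem allK_3' : allK 3 10 2 274 423 504 13 3 4 1100 37 = true := by decide +kernel

theorem val_2' (m d : ℕ) (h0 : 1 ≤ d) (hd : d ≤ 37) (hm : 2 ≤ m) (hm' : m < 1100) :
    ¬ (2 : ℤ) ^ 16 ∣ T (m + d) - T m := by
  obtain ⟨m, rfl⟩ : ∃ k, m = k + 2 := ⟨m - 2, by omega⟩
  obtain ⟨d, rfl⟩ : ∃ k, d = 1 + k := ⟨d - 1, by omega⟩
  have := allK_sound base_2 (by norm_num) (Sh_2 _) (by norm_num) allK_2' d m (by omega)
    (by omega)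
  simpa using this

theorem val_3' (m d : ℕ) (h0 : 1 ≤ d) (hd : d ≤ 37) (hm : 2 ≤ m) (hm' : m < 1100) :
    ¬ (3 : ℤ) ^ 12 ∣ T (m + d) - T m := by
  obtain ⟨m, rfl⟩ : ∃ k, m = k + 2 := ⟨m - 2, by omega⟩
  obtain ⟨d, rfl⟩ : ∃ k, d = 1 + k := ⟨d - 1, by omega⟩
  have := allK_sound base_3 (by norm_num) (Sh_3 _) (by norm_num) allK_3' d m (by omega)
    (by omega)
  simpa using this

lemma T_monotone : Monotone T := monotone_nat_of_le_succ T_mono1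

lemma T_le_diff (m k : ℕ) (h : m < k + 4) : T (k + 4) ≤ 4 * (T (k + 4) - T m) := by
  have h1 : T m ≤ T (k + 3) := T_monotone (by omega)
  have h2 := T_rec (k + 1)
  have h3 := T_rec k
  have h4 := T_mono1 k
  have h5 := T_mono1 (k + 1)
  have h6 := T_nonneg k
  simp only [add_assoc] at h2 h3 h4 h5
  norm_num at h2 h3 h4 h5
  omega

lemma Sys.three_le (h : Sys c n x y) (i : Fin 4) : 3 ≤ n i := by
  have h1 := h.rep i
  have h2 : (0 : ℤ) < 2 ^ x i * 3 ^ y i := by positivity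
  have h3 := h.hc
  by_contra h4
  have h5 : T (n i) ≤ T 2 := T_monotone (by omega)
  simp [T] at h5
  omega

/-- At most one exponent of 2 and at most one exponent of 3 is large, so one of the last three
representations has both exponents small, and hence a small index. -/
theorem Sys.pick (h : Sys c n x y) (N D V W : ℕ)
    (h2 : ∀ m d, 1 ≤ d → d ≤ D → 2 ≤ m → m < N → ¬ (2 : ℤ) ^ V ∣ T (m + d) - T m)
    (h3 : ∀ m d, 1 ≤ d → d ≤ D → 2 ≤ m → m < N → ¬ (3 : ℤ) ^ W ∣ T (m + d) - T m)
    (hN : n 3 < N) (hD : n 3 ≤ n 0 + D) :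
    ∃ i, 0 < i ∧ T (n i) ≤ 4 * (2 ^ V * 3 ^ W) := by
  have bd : ∀ i j, i < j → ∃ d, 1 ≤ d ∧ d ≤ D ∧ 2 ≤ n i ∧ n i < N ∧ n j = n i + d := by
    intro i j hij
    have e1 := h.mono hij
    have e2 := h.mono.monotone (Fin.le_last j)
    have e3 := h.mono.monotone (Fin.zero_le i)
    have e4 := h.three_le i
    change n j ≤ n 3 at e2
    exact ⟨n j - n i, by omega, by omega, by omega, by omega, by omega⟩
  have A : ∀ i j, i < j → ¬ (V ≤ x i ∧ V ≤ x j) := by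
    rintro i j hij ⟨a, b⟩
    obtain ⟨d, d1, d2, d3, d4, d5⟩ := bd i j hij
    apply h2 (n i) d d1 d2 d3 d4
    rw [← d5, h.diff i j]
    exact dvd_sub ((pow_dvd_pow _ b).mul_right _) ((pow_dvd_pow _ a).mul_right _)
  have B : ∀ i j, i < j → ¬ (W ≤ y i ∧ W ≤ y j) := by
    rintro i j hij ⟨a, b⟩
    obtain ⟨d, d1, d2, d3, d4, d5⟩ := bd i j hij
    apply h3 (n i) d d1 d2 d3 d4
    rw [← d5, h.diff i j]
    exact dvd_sub ((pow_dvd_pow _ b).mul_left _) ((pow_dvd_pow _ a).mul_left _)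
  have key : ∃ i : Fin 4, 0 < i ∧ x i < V ∧ y i < W := by
    have a1 := A 1 2 (by decide)
    have a2 := A 1 3 (by decide)
    have a3 := A 2 3 (by decide)
    have b1 := B 1 2 (by decide)
    have b2 := B 1 3 (by decide)
    have b3 := B 2 3 (by decide)
    by_contra hc
    push Not at hc
    have c1 := hc 1 (by decide)
    have c2 := hc 2 (by decide)
    have c3 := hc 3 (by decide)
    omega
  obtain ⟨i, hi, hx, hy⟩ := key
  refine ⟨i, hi, ?_⟩
  have h0 := h.three_le 0
  have e1 := h.mono hi
  obtain ⟨k, hk⟩ : ∃ k, n i = k + 4 := ⟨n i - 4, by omega⟩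
  have e2 := T_le_diff (n 0) k (by omega)
  rw [← hk, h.diff 0 i] at e2
  have e3 : (2 : ℤ) ^ x i * 3 ^ y i ≤ 2 ^ V * 3 ^ W :=
    mul_le_mul (pow_le_pow_right₀ (by norm_num) hx.le) (pow_le_pow_right₀ (by norm_num) hy.le)
      (by positivity) (by positivity)
  have e4 : (0 : ℤ) < 2 ^ x 0 * 3 ^ y 0 := by positivity
  linarith

set_option exponentiation.threshold 3000 in
lemma T_535 : (4 * (2 ^ 234 * 3 ^ 146) : ℤ) < T 535 := by decide +kernel

lemma T_45 : (4 * (2 ^ 16 * 3 ^ 12) : ℤ) < T 45 := by decide +kernel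

theorem small (h : Sys c n x y) : n 0 < 44 ∧ n 3 ≤ n 0 + 37 := by
  obtain ⟨a, b⟩ := bounds h
  obtain ⟨i, hi, hT⟩ := h.pick (10 ^ 62) 488 234 146 (fun m d h1 h2 h3 h4 => val_2 m d h1 h2 h3 h4)
    (fun m d h1 h2 h3 h4 => val_3 m d h1 h2 h3 h4) a (by omega)
  have h1 : n i < 535 := by
    by_contra h2
    have := T_monotone (show 535 ≤ n i by omega)
    exact absurd (hT.trans_lt T_535) (not_lt.2 this)
  have h2 := h.mono hi
  have h3 := gap_2 h (by omega)
  obtain ⟨j, hj, hT'⟩ := h.pick 1100 37 16 12 val_2' val_3' (by omega) (by omega)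
  have h4 : n j < 45 := by
    by_contra h2
    have := T_monotone (show 45 ≤ n j by omega)
    exact absurd (hT'.trans_lt T_45) (not_lt.2 this)
  have h5 := h.mono hj
  omega

end Trib

end

/-! ### The remaining finite search -/

section
namespace Trib
variable {c : ℤ} {n x y : Fin 4 → ℕ}

/-- Among `fuel` successive terms of the Tribonacci sequence with initial window `x, y, z`, at most
`k` exceed `c` by a divisor of `W`. (If a term is at most `c`, the truncated difference is `0`, which
does not divide `W > 0`.) -/
noncomputable def hitK (W c fuel : ℕ) : ℕ → ℕ → ℕ → ℕ → Bool :=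
  Nat.rec (fun _ _ _ _ => true)
    (fun _ ih k x y z => frc (Nat.add (Nat.add x y) z) fun w =>
      cnd (Nat.beq (Nat.mod W (Nat.sub x c)) 0)
        (Nat.rec false (fun k' _ => ih k' y z w) k) (ih k y z w)) fuel

/-- `g` holds at all `q ^ a * S < t`; the loop must leave this range before `fuel` is exhausted. -/
noncomputable def geoK (q t : ℕ) (g : ℕ → Bool) (fuel : ℕ) : ℕ → Bool :=
  Nat.rec (fun _ => false)
    (fun _ ih S => cnd (Nat.ble t S) true (cnd (g S) (frc (Nat.mul q S) ih) false)) fuel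

/-- Every `c ≠ 1` of the form `x - 2 ^ a * 3 ^ b > 0` has at most two further representations among
the `K` terms following `x`, where `x, y, z, w` are successive terms of the Tribonacci sequence. -/
noncomputable def startK (F K W x y z w : ℕ) : Bool :=
  geoK 3 x (fun R => geoK 2 x (fun S => frc (Nat.sub x S) fun c =>
    cnd (Nat.beq c 1) true (hitK W c K 2 y z w)) F R) F 1

/-- `startK` holds at `fuel` successive windows. -/
noncomputable def startsK (F K W fuel : ℕ) : ℕ → ℕ → ℕ → Bool :=
  Nat.rec (fun _ _ _ => true)
    (fun _ ih x y z => frc (Nat.add (Nat.add x y) z) fun w =>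
      cnd (startK F K W x y z w) (ih y z w) false) fuel

/-- The search over `L` initial indices, starting from the index 3. -/
noncomputable def bruteK (E L F K : ℕ) : Bool :=
  frc (Nat.pow 6 E) fun W => startsK F K W L 2 4 7

theorem bruteK_true : bruteK 80 41 50 37 = true := by decide +kernel

lemma hitK_sound {W c : ℕ} {f : ℕ → ℕ} (hf : ∀ i, f (i + 3) = f i + f (i + 1) + f (i + 2)) :
    ∀ fuel k m, hitK W c fuel k (f m) (f (m + 1)) (f (m + 2)) = true →
      Nat.count (fun i => W % (f (m + i) - c) = 0) fuel ≤ k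
  | 0, k, m, _ => by simp
  | fuel + 1, k, m, h => by
    have e : hitK W c (fuel + 1) k (f m) (f (m + 1)) (f (m + 2)) =
        cnd (Nat.beq (W % (f m - c)) 0)
          (Nat.rec false (fun k' _ => hitK W c fuel k' (f (m + 1)) (f (m + 2))
            (f m + f (m + 1) + f (m + 2))) k)
          (hitK W c fuel k (f (m + 1)) (f (m + 2)) (f m + f (m + 1) + f (m + 2))) := rfl
    rw [e, ← hf] at h
    have ih := fun k' => hitK_sound (W := W) (c := c) hf fuel k' (m + 1)
    simp only [add_assoc, Nat.reduceAdd] at ih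
    rw [Nat.count_succ']
    have e' : ∀ i, m + (i + 1) = m + (1 + i) := fun i => by omega
    simp only [e']
    by_cases h0 : W % (f m - c) = 0
    · have hb : Nat.beq (W % (f m - c)) 0 = true := by rw [h0]; rfl
      rw [hb] at h
      cases k with
      | zero => exact absurd h (by simp [cnd])
      | succ k =>
        have := ih k h
        simp only [add_zero, h0, if_true]
        omega
    · have hb : Nat.beq (W % (f m - c)) 0 = false := by
        rw [Bool.eq_false_iff]
        exact fun h1 => h0 (Nat.eq_of_beq_eq_true h1)
      rw [hb] at h
      have := ih k h
      simp only [add_zero, h0, if_false]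
      exact this

lemma geoK_sound {q t : ℕ} (hq : 0 < q) {g : ℕ → Bool} :
    ∀ fuel S, geoK q t g fuel S = true → ∀ a, q ^ a * S < t → g (q ^ a * S) = true
  | 0, S, h, a, _ => absurd h (by simp [geoK])
  | fuel + 1, S, h, a, ha => by
    have e : geoK q t g (fuel + 1) S =
        cnd (Nat.ble t S) true (cnd (g S) (geoK q t g fuel (q * S)) false) := rfl
    rw [e] at h
    have hS : S < t := lt_of_le_of_lt (Nat.le_mul_of_pos_left _ (by positivity)) ha
    have hb : Nat.ble t S = false := by
      rw [Bool.eq_false_iff]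
      exact fun h1 => absurd (Nat.le_of_ble_eq_true h1) (by omega)
    rw [hb] at h
    change cnd (g S) (geoK q t g fuel (q * S)) false = true at h
    have hg : g S = true := by
      by_contra hg
      rw [Bool.not_eq_true] at hg
      rw [hg] at h
      exact absurd h (by simp [cnd])
    rw [hg] at h
    cases a with
    | zero => simpa using hg
    | succ a =>
      have e2 : q ^ (a + 1) * S = q ^ a * (q * S) := by ring
      rw [e2] at ha ⊢
      exact geoK_sound hq fuel _ h a ha

lemma startsK_sound {F K W : ℕ} {f : ℕ → ℕ} (hf : ∀ i, f (i + 3) = f i + f (i + 1) + f (i + 2)) :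
    ∀ fuel m, startsK F K W fuel (f m) (f (m + 1)) (f (m + 2)) = true →
      ∀ i < fuel, startK F K W (f (m + i)) (f (m + i + 1)) (f (m + i + 2)) (f (m + i + 3)) = true
  | 0, m, _, i, hi => absurd hi (by omega)
  | fuel + 1, m, h, i, hi => by
    have e : startsK F K W (fuel + 1) (f m) (f (m + 1)) (f (m + 2)) =
        cnd (startK F K W (f m) (f (m + 1)) (f (m + 2)) (f m + f (m + 1) + f (m + 2)))
          (startsK F K W fuel (f (m + 1)) (f (m + 2)) (f m + f (m + 1) + f (m + 2))) false := rfl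
    rw [e, ← hf] at h
    have hg : startK F K W (f m) (f (m + 1)) (f (m + 2)) (f (m + 3)) = true := by
      by_contra hg
      rw [Bool.not_eq_true] at hg
      rw [hg] at h
      exact absurd h (by simp [cnd])
    rw [hg] at h
    cases i with
    | zero => exact hg
    | succ i =>
      have := startsK_sound hf fuel (m + 1) h i (by omega)
      convert this using 2 <;> congr 1 <;> omega

lemma startK_sound {F K W x y z w : ℕ} (h : startK F K W x y z w = true) {a b C : ℕ} (hC : 0 < C)
    (hx : x = C + 2 ^ a * 3 ^ b) (h1 : C ≠ 1) : hitK W C K 2 y z w = true := by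
  unfold startK at h
  have k1 := geoK_sound (by norm_num) _ _ h b (by
    have h3 : 3 ^ b * 1 ≤ 2 ^ a * 3 ^ b := by
      rw [mul_one]; exact Nat.le_mul_of_pos_left _ (by positivity)
    omega)
  have k2 := geoK_sound (by norm_num) _ _ k1 a (by rw [mul_one]; omega)
  rw [frc_eq, mul_one] at k2
  have e1 : Nat.sub x (2 ^ a * 3 ^ b) = C := by
    rw [hx]; exact Nat.add_sub_cancel _ _
  have hb : Nat.beq C 1 = false := by
    rw [Bool.eq_false_iff]
    exact fun h2 => h1 (Nat.eq_of_beq_eq_true h2)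
  rw [e1, hb] at k2
  exact k2

/-- The parameters of the search are variables here, so that the kernel does not unfold it. -/
theorem eq_one_of {E L F K : ℕ} (hE : E = 80) (hL : L = 41) (hK : K = 37)
    (hB : bruteK E L F K = true) (h : Sys c n x y) : c = 1 := by
  obtain ⟨h0, h3⟩ := small h
  have h00 := h.three_le 0
  obtain ⟨m, hm⟩ : ∃ m, n 0 = 3 + m := ⟨n 0 - 3, by omega⟩
  obtain ⟨C, rfl⟩ : ∃ C : ℕ, c = C := ⟨c.toNat, by have := h.hc; omega⟩
  obtain ⟨f, fT⟩ : ∃ f : ℕ → ℕ, ∀ i, (f i : ℤ) = T i :=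
    ⟨fun i => (T i).toNat, fun i => Int.toNat_of_nonneg (T_nonneg i)⟩
  have hf : ∀ i, f (i + 3) = f i + f (i + 1) + f (i + 2) := by
    intro i
    zify
    rw [fT, fT, fT, fT, T]
    ring
  have rep : ∀ i, f (n i) = C + 2 ^ x i * 3 ^ y i := by
    intro i
    zify
    rw [fT, h.rep i]
  obtain ⟨W, hW⟩ : ∃ W, W = 6 ^ E := ⟨_, rfl⟩
  have st : startsK F K W L 2 4 7 = true := by rw [hW]; exact hB
  have g3 : f 3 = 2 := by zify; rw [fT]; simp [T]
  have g4 : f (3 + 1) = 4 := by zify; rw [fT]; simp [T]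
  have g5 : f (3 + 2) = 7 := by zify; rw [fT]; simp [T]
  rw [← g3, ← g4, ← g5] at st
  have key := startsK_sound hf L 3 st m (by omega)
  rw [← hm] at key
  by_contra hC
  have k2 := startK_sound key (by have := h.hc; omega) (rep 0) (by exact_mod_cast hC)
  have k3 := hitK_sound hf K 2 (n 0 + 1) k2
  rw [Nat.count_eq_card_filter_range] at k3
  have hit : ∀ j : Fin 4, 0 < j → n j - (n 0 + 1) ∈ Finset.filter
      (fun i => W % (f (n 0 + 1 + i) - C) = 0) (Finset.range K) := by
    intro j hj
    have a1 := h.mono hj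
    have a2 := h.mono.monotone (Fin.le_last j)
    change n j ≤ n 3 at a2
    rw [Finset.mem_filter, Finset.mem_range]
    refine ⟨by omega, ?_⟩
    have a3 : n 0 + 1 + (n j - (n 0 + 1)) = n j := by omega
    rw [a3, rep j, Nat.add_sub_cancel_left]
    have a4 : 2 ^ x j * 3 ^ y j < 2 ^ 80 := by
      have b1 : f (n j) < 2 ^ 80 := by
        have b2 : T (n j) ≤ T 80 := T_monotone (by omega)
        have b3 : T 80 < 2 ^ 80 := by decide +kernel
        zify
        rw [fT]
        omega
      have := rep j
      omega
    have a5 : x j < 80 := by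
      refine (Nat.pow_lt_pow_iff_right (by norm_num : 1 < 2)).1 (lt_of_le_of_lt ?_ a4)
      exact Nat.le_mul_of_pos_right _ (by positivity)
    have a6 : y j < 80 := by
      refine (Nat.pow_lt_pow_iff_right (by norm_num : 1 < 2)).1 (lt_of_le_of_lt ?_ a4)
      exact (Nat.pow_le_pow_left (by norm_num) _).trans
        (Nat.le_mul_of_pos_left _ (by positivity))
    apply Nat.mod_eq_zero_of_dvd
    rw [hW, hE, show 6 = 2 * 3 from rfl, mul_pow]
    exact mul_dvd_mul (pow_dvd_pow _ a5.le) (pow_dvd_pow _ a6.le)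
  have m1 := h.mono (show (0 : Fin 4) < 1 by decide)
  have m2 := h.mono (show (1 : Fin 4) < 2 by decide)
  have m3 := h.mono (show (2 : Fin 4) < 3 by decide)
  have : 2 < (Finset.filter (fun i => W % (f (n 0 + 1 + i) - C) = 0)
      (Finset.range K)).card := by
    rw [Finset.two_lt_card]
    exact ⟨_, hit 1 (by decide), _, hit 2 (by decide), _, hit 3 (by decide),
      by omega, by omega, by omega⟩
  omega

theorem eq_one (h : Sys c n x y) : c = 1 := eq_one_of rfl rfl rfl bruteK_true h

end Trib

end

/-! ### The theorem -/

lemma smooth_pair_inj {a b a' b' : ℕ} (h : (2 : ℤ) ^ a * 3 ^ b = 2 ^ a' * 3 ^ b') : a = a' ∧ b = b' := by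
  have h' : 2 ^ a * 3 ^ b = 2 ^ a' * 3 ^ b' := by exact_mod_cast h
  have key : ∀ a b : ℕ, (2 ^ a * 3 ^ b).factorization 2 = a ∧ (2 ^ a * 3 ^ b).factorization 3 = b := by
    intro a b
    rw [Nat.factorization_mul (by positivity) (by positivity),
      Nat.Prime.factorization_pow Nat.prime_two, Nat.Prime.factorization_pow Nat.prime_three]
    simp
  constructor
  · rw [← (key a b).1, h', (key a' b').1]
  · rw [← (key a b).2, h', (key a' b').2]

theorem pillai_tribonacci_pos (c : ℤ) (hc : 1 ≤ c) (s : Fin 4 → ℕ × ℕ × ℕ)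
    (hinj : Function.Injective s)
    (hn : ∀ i, (s i).1 ≠ 1)
    (hrep : ∀ i, T (s i).1 - 2 ^ (s i).2.1 * 3 ^ (s i).2.2 = c) :
    c = 1 ∧
      T 3 - 2 ^ 0 * 3 ^ 0 = (1 : ℤ) ∧ T 4 - 2 ^ 0 * 3 ^ 1 = (1 : ℤ) ∧
      T 5 - 2 ^ 1 * 3 ^ 1 = (1 : ℤ) ∧ T 6 - 2 ^ 2 * 3 ^ 1 = (1 : ℤ) := by
  refine ⟨?_, by simp [T]⟩
  have hinj1 : Function.Injective fun i => (s i).1 := by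
    intro i j hij
    have hij' : (s i).1 = (s j).1 := hij
    have h1 := hrep i
    have h2 := hrep j
    rw [hij'] at h1
    obtain ⟨h3, h4⟩ := smooth_pair_inj
      (show (2 : ℤ) ^ (s i).2.1 * 3 ^ (s i).2.2 = 2 ^ (s j).2.1 * 3 ^ (s j).2.2 by linarith)
    exact hinj (Prod.ext hij' (Prod.ext h3 h4))
  set σ := Tuple.sort fun i => (s i).1
  exact Trib.eq_one (c := c) (n := fun i => (s (σ i)).1) (x := fun i => (s (σ i)).2.1)
    (y := fun i => (s (σ i)).2.2)
    { hc := hc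
      mono := (Tuple.monotone_sort fun i => (s i).1).strictMono_of_injective
        (hinj1.comp σ.injective)
      rep := fun i => by have := hrep (σ i); linarith }
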